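/- There is an absolute constant C > 0 such that for every multiplicative function f : ℕ → [−1,1], with g := 1 ∗ f, and every real x ≥ 3, one has |L_f(x) − M̃_g(w₀x)| ≤ C·( |M̃_g(w₀x)|/log x + 1/(log x)^{1−2/π} ). -/

import Mathlib

/-!
Write `D(x) = L_f(x) - M̃_g(w₀ x)`. The bound `|D(x)| ≪ (log x)^{2/π - 1}` is proved
(`Dop_bound`), which is stronger than the theorem. The argument follows the method of Halász.

*From averages to points.* One has `D(x) = ∑ f(n)/n · K(x/n)` for the kernel
`K(u) = 1_{u ≥ 1} - ⌊w₀ u⌋/(w₀ u)`, which is `O(1/u)`. Weighting by `log n` and using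
multiplicativity gives `D(x) log x = D_a(x) + O(1)` (`Dop_recursion`), where `a` is the convolution
of `f(p) log p` on the primes with `f`, and `D_a(x) = ∑_p f(p) log p / p · D(x/p)`. As `D` varies
slowly in `log x` (`Dop_lipschitz`) and Selberg's formula bounds the primes in short windows
(`mangoldt_window`), the sum over `p` can be compared with an integral:
`|D(x)| log x ≪ ∫_0^{log x + 1} |D(e^w)| dw + (log x)^{3/5}` (`Dop_le_average`). The exponent `3/5`
is harmless since `3/5 < 2/π`.

*Bounding the average.* The Mellin transform of `D_a` is `F(1+s) P(1+s) H(s)`, where `F` and `P` are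
the Dirichlet series of `f` and of `f(p) log p`, and `H(s) = 1/s - w₀^s ζ(1+s)/(1+s)` is the
transform of `K` (`mellin_Dop`). The choice `w₀ = e^{1-γ}` makes `H` vanish at `s = 0`
(`deriv_Nn_zero`). Since `f` is real, the Euler product gives
`log |F(1+σ+it)| ≤ ∑_p |cos(t log p)| p^{-1-σ} + O(1)`. The Fourier expansion of `|cos|`, whose mean
value is `2/π`, together with bounds for `log |ζ|` (`zeta_log_bound`), shows that this is at most
`(2/π) log(1/σ)` plus terms depending on `t` only (`dser_bound`). Near `t = 0` these terms cost a
factor `1/|t|`, which the zero of `H` absorbs. So `F H ≪ σ^{-2/π} (1 + |t|)^{-4/5}` (`dser_Hf`).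
The series `P` has mean square `O(1/σ)` over unit intervals (`cpr_meansq`), and Plancherel's theorem
bounds the mean square of `D_a(e^w) e^{-σw}` (`Dop_afun_meansq`). Taking `σ = 1/V` and applying the
recursion yields `∫_V^{2V} |D(e^w)| dw ≪ V^{2/π}` (`dyadic_bound`). Summation over dyadic `V` bounds
the average, and hence `D` itself.
-/

open Finset

noncomputable def Lsum (h : ℕ → ℝ) (x : ℝ) : ℝ := ∑ n ∈ Finset.Icc 1 ⌊x⌋₊, h n / n

noncomputable def Mt (h : ℕ → ℝ) (x : ℝ) : ℝ := (∑ n ∈ Finset.Icc 1 ⌊x⌋₊, h n) / x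

noncomputable def w0 : ℝ := Real.exp (1 - Real.eulerMascheroniConstant)

def IsMult (f : ℕ → ℝ) : Prop := f 1 = 1 ∧ ∀ m n : ℕ, Nat.Coprime m n → f (m * n) = f m * f n

noncomputable def dconv (f : ℕ → ℝ) : ℕ → ℝ := fun n => ∑ d ∈ n.divisors, f d

/-! ### Summation over hyperbolic regions, and elementary sums -/

/-- Sums over `n m ≤ y`, grouped by the product `N = n m`. -/
theorem sum_hyperbola (h : ℕ → ℕ → ℝ) (y : ℝ) :
    ∑ n ∈ Icc 1 ⌊y⌋₊, ∑ m ∈ Icc 1 ⌊y / n⌋₊, h n m =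
      ∑ N ∈ Icc 1 ⌊y⌋₊, ∑ d ∈ N.divisors, h d (N / d) := by
  rw [Finset.sum_sigma', Finset.sum_sigma']
  refine Finset.sum_bij' (fun a _ => ⟨a.1 * a.2, a.1⟩) (fun b _ => ⟨b.2, b.1 / b.2⟩) ?_ ?_ ?_ ?_ ?_
  · rintro ⟨n, m⟩ ha
    simp only [mem_sigma, mem_Icc, Nat.floor_div_natCast] at ha
    simp only [mem_sigma, mem_Icc, Nat.mem_divisors]
    obtain ⟨⟨h1, h2⟩, h3, h4⟩ := ha
    have := (Nat.le_div_iff_mul_le (by omega)).1 h4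
    refine ⟨⟨Nat.mul_pos h1 h3, by rw [mul_comm]; exact this⟩, dvd_mul_right _ _, ?_⟩
    exact (Nat.mul_pos h1 h3).ne'
  · rintro ⟨N, d⟩ hb
    simp only [mem_sigma, mem_Icc, Nat.mem_divisors] at hb
    simp only [mem_sigma, mem_Icc, Nat.floor_div_natCast]
    obtain ⟨⟨h1, h2⟩, h3, h4⟩ := hb
    have hd : 0 < d := Nat.pos_of_dvd_of_pos h3 (by omega)
    refine ⟨⟨hd, (Nat.le_of_dvd (by omega) h3).trans h2⟩, ?_, Nat.div_le_div_right h2⟩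
    exact Nat.div_pos (Nat.le_of_dvd (by omega) h3) hd
  · rintro ⟨n, m⟩ ha
    simp only [mem_sigma, mem_Icc] at ha
    simp [Nat.mul_div_cancel_left _ (by omega : 0 < n)]
  · rintro ⟨N, d⟩ hb
    simp only [mem_sigma, mem_Icc, Nat.mem_divisors] at hb
    simp [Nat.mul_div_cancel' hb.2.1]
  · rintro ⟨n, m⟩ ha
    simp only [mem_sigma, mem_Icc] at ha
    simp [Nat.mul_div_cancel_left _ (by omega : 0 < n)]

theorem sum_log_nat_bounds (N : ℕ) (hN : 1 ≤ N) :
    (N : ℝ) * Real.log N - N + 1 ≤ ∑ n ∈ Icc 1 N, Real.log n ∧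
    ∑ n ∈ Icc 1 N, Real.log n ≤ (N : ℝ) * Real.log N - N + 1 + Real.log N := by
  induction N, hN using Nat.le_induction with
  | base => simp
  | succ N hN ih =>
    rw [Finset.sum_Icc_succ_top (by omega)]
    have hN' : (0 : ℝ) < N := by exact_mod_cast hN
    have h1 : Real.log (N + 1) - Real.log N ≤ 1 / N := by
      rw [← Real.log_div (by positivity) (by positivity)]
      have := Real.log_le_sub_one_of_pos (show (0 : ℝ) < (N + 1) / N by positivity)
      calc _ ≤ _ := this
        _ = 1 / N := by field_simp; ring
    have h2 : 1 / ((N : ℝ) + 1) ≤ Real.log (N + 1) - Real.log N := by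
      have := Real.log_le_sub_one_of_pos (show (0 : ℝ) < N / (N + 1) by positivity)
      rw [Real.log_div (by positivity) (by positivity)] at this
      have e : (N : ℝ) / (N + 1) - 1 = - (1 / ((N : ℝ) + 1)) := by field_simp; ring
      linarith
    have h1' : N * (Real.log (N + 1) - Real.log N) ≤ 1 := by
      calc _ ≤ N * (1 / (N : ℝ)) := by gcongr
        _ = 1 := by field_simp
    have h2' : 1 ≤ (N + 1) * (Real.log (N + 1) - Real.log N) := by
      calc (1 : ℝ) = (N + 1) * (1 / ((N : ℝ) + 1)) := by field_simp
        _ ≤ _ := by gcongr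
    push_cast
    constructor <;> nlinarith [ih.1, ih.2]

theorem sum_log_real (y : ℝ) (hy : 1 ≤ y) :
    |∑ n ∈ Icc 1 ⌊y⌋₊, Real.log n - (y * Real.log y - y)| ≤ 1 + Real.log y := by
  have hN : 1 ≤ ⌊y⌋₊ := Nat.le_floor (by simpa using hy)
  obtain ⟨h1, h2⟩ := sum_log_nat_bounds _ hN
  set N := ⌊y⌋₊
  have hN1 : (1 : ℝ) ≤ N := by exact_mod_cast hN
  have hNy : (N : ℝ) ≤ y := Nat.floor_le (by linarith)
  have hyN : y ≤ N + 1 := (Nat.lt_floor_add_one y).le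
  have hlog : Real.log N ≤ Real.log y := Real.log_le_log (by linarith) hNy
  have hl0 : 0 ≤ Real.log N := Real.log_nonneg hN1
  -- `y (log y - log N) ≤ y (y/N - 1)`, and `N (log y - log N) ≤ y - N`
  have h3 : N * (Real.log y - Real.log N) ≤ y - N := by
    rw [← Real.log_div (by positivity) (by positivity)]
    have := Real.log_le_sub_one_of_pos (show (0 : ℝ) < y / N by positivity)
    calc _ ≤ N * (y / N - 1) := by gcongr
      _ = y - N := by field_simp
  have h4 : y - N ≤ y * (Real.log y - Real.log N) := by
    have := Real.log_le_sub_one_of_pos (show (0 : ℝ) < N / y by positivity)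
    rw [Real.log_div (by positivity) (by positivity)] at this
    have e : y * (N / y - 1) = N - y := by field_simp
    nlinarith
  have h5 : (y - N) * Real.log y ≤ 1 * Real.log y := by
    apply mul_le_mul_of_nonneg_right (by linarith) (hl0.trans hlog)
  have h6 : (y - N) * Real.log N ≤ 1 * Real.log N := by
    apply mul_le_mul_of_nonneg_right (by linarith) hl0
  have h7 : 0 ≤ (y - N) * Real.log N := mul_nonneg (by linarith) hl0
  rw [abs_le]
  constructor <;> nlinarith

theorem harmonic_real (y : ℝ) (hy : 1 ≤ y) :
    |∑ n ∈ Icc 1 ⌊y⌋₊, 1 / (n : ℝ) - Real.log y - Real.eulerMascheroniConstant| ≤ 2 / y := by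
  have hN : 1 ≤ ⌊y⌋₊ := Nat.le_floor (by simpa using hy)
  have h1 := Real.eulerMascheroniSeq_lt_eulerMascheroniConstant ⌊y⌋₊
  have h2 := Real.eulerMascheroniConstant_lt_eulerMascheroniSeq' ⌊y⌋₊
  rw [Real.eulerMascheroniSeq] at h1
  rw [Real.eulerMascheroniSeq', if_neg (by omega)] at h2
  have hh : ((harmonic ⌊y⌋₊ : ℚ) : ℝ) = ∑ n ∈ Icc 1 ⌊y⌋₊, 1 / (n : ℝ) := by
    rw [harmonic_eq_sum_Icc]; push_cast; simp
  rw [hh] at h1 h2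
  set N := ⌊y⌋₊
  have hN1 : (1 : ℝ) ≤ N := by exact_mod_cast hN
  have hNy : (N : ℝ) ≤ y := Nat.floor_le (by linarith)
  have hyN : y ≤ N + 1 := (Nat.lt_floor_add_one y).le
  have h3 : Real.log (N + 1) - Real.log y ≤ 1 / y := by
    rw [← Real.log_div (by positivity) (by positivity)]
    have := Real.log_le_sub_one_of_pos (show (0 : ℝ) < (N + 1) / y by positivity)
    calc _ ≤ _ := this
      _ ≤ (y + 1) / y - 1 := by gcongr
      _ = 1 / y := by field_simp; ring
  have h4 : Real.log y - Real.log N ≤ 2 / y := by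
    rw [← Real.log_div (by positivity) (by positivity)]
    have := Real.log_le_sub_one_of_pos (show (0 : ℝ) < y / N by positivity)
    calc _ ≤ _ := this
      _ = (y - N) / N := by field_simp
      _ ≤ 1 / N := by gcongr; linarith
      _ ≤ 2 / y := by rw [div_le_div_iff₀ (by positivity) (by positivity)]; linarith
  have h5 : 1 / y ≤ 2 / y := by gcongr; norm_num
  rw [abs_le]
  constructor <;> linarith

/-! ### Chebyshev and Mertens estimates, and Selberg's formula -/

open ArithmeticFunction in
theorem psi_eq_Icc (y : ℝ) : Chebyshev.psi y = ∑ n ∈ Icc 1 ⌊y⌋₊, vonMangoldt n := by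
  rw [Chebyshev.psi]; rfl

open ArithmeticFunction in
theorem sum_psi_div (y : ℝ) :
    ∑ n ∈ Icc 1 ⌊y⌋₊, Chebyshev.psi (y / n) = ∑ n ∈ Icc 1 ⌊y⌋₊, Real.log n := by
  simp_rw [psi_eq_Icc]
  rw [sum_hyperbola (fun _ m => vonMangoldt m)]
  refine Finset.sum_congr rfl fun N _ => ?_
  rw [← vonMangoldt_sum]
  exact Nat.sum_div_divisors N _

theorem psi_le_six (y : ℝ) (hy : 0 ≤ y) : Chebyshev.psi y ≤ 6 * y := by
  have := Chebyshev.psi_le_const_mul_self hy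
  have h4 : Real.log 4 ≤ 2 := by
    rw [show (4 : ℝ) = 2 ^ 2 by norm_num, Real.log_pow]
    have := Real.log_two_lt_d9; push_cast; linarith
  nlinarith

open ArithmeticFunction in
/-- Mertens' first estimate. -/
theorem mertens (y : ℝ) (hy : 1 ≤ y) :
    |∑ n ∈ Icc 1 ⌊y⌋₊, vonMangoldt n / n - Real.log y| ≤ 9 := by
  have e : ∑ n ∈ Icc 1 ⌊y⌋₊, Real.log n =
      ∑ n ∈ Icc 1 ⌊y⌋₊, vonMangoldt n * (⌊y / n⌋₊ : ℝ) := by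
    rw [← sum_psi_div]
    simp_rw [psi_eq_Icc]
    rw [sum_hyperbola (fun _ m => vonMangoldt m)]
    have := sum_hyperbola (fun n _ => vonMangoldt n) y
    simp only [sum_const, Nat.card_Icc, add_tsub_cancel_right, nsmul_eq_mul] at this
    simp_rw [mul_comm (vonMangoldt _)]
    rw [this]
    refine Finset.sum_congr rfl fun N _ => ?_
    exact Nat.sum_div_divisors N _
  have h1 := sum_log_real y hy
  have hψ := psi_le_six y (by linarith)
  have hlog : Real.log y ≤ y - 1 := Real.log_le_sub_one_of_pos (by linarith)
  have hlog0 : 0 ≤ Real.log y := Real.log_nonneg hy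
  have hup : ∑ n ∈ Icc 1 ⌊y⌋₊, vonMangoldt n * (⌊y / n⌋₊ : ℝ) ≤
      y * ∑ n ∈ Icc 1 ⌊y⌋₊, vonMangoldt n / n := by
    rw [Finset.mul_sum]
    refine Finset.sum_le_sum fun n _ => ?_
    calc _ ≤ vonMangoldt n * (y / n) := by
          gcongr
          exact Nat.floor_le (by positivity)
      _ = _ := by ring
  have hlo : y * ∑ n ∈ Icc 1 ⌊y⌋₊, vonMangoldt n / n ≤
      ∑ n ∈ Icc 1 ⌊y⌋₊, vonMangoldt n * (⌊y / n⌋₊ : ℝ) + Chebyshev.psi y := by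
    rw [psi_eq_Icc, Finset.mul_sum, ← Finset.sum_add_distrib]
    refine Finset.sum_le_sum fun n _ => ?_
    calc _ = vonMangoldt n * (y / n) := by ring
      _ ≤ vonMangoldt n * (⌊y / n⌋₊ + 1 : ℝ) := by
          gcongr
          exact (Nat.lt_floor_add_one _).le
      _ = _ := by ring
  rw [abs_le] at h1 ⊢
  set S := ∑ n ∈ Icc 1 ⌊y⌋₊, vonMangoldt n / n
  constructor
  · have : y * (-9) ≤ y * (S - Real.log y) := by nlinarith
    exact le_of_mul_le_mul_left this (by linarith)
  · have : y * (S - Real.log y) ≤ y * 9 := by nlinarith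
    exact le_of_mul_le_mul_left this (by linarith)

/-- The remainder `ψ(y) - y + γ + 1`, normalised so that its sum over `y / n` is `O(log y)`. -/
noncomputable def psiRem (y : ℝ) : ℝ :=
  Chebyshev.psi y - y + Real.eulerMascheroniConstant + 1

theorem sum_psiRem (y : ℝ) (hy : 1 ≤ y) :
    |∑ n ∈ Icc 1 ⌊y⌋₊, psiRem (y / n)| ≤ 6 + Real.log y := by
  have e : ∑ n ∈ Icc 1 ⌊y⌋₊, psiRem (y / n) =
      ∑ n ∈ Icc 1 ⌊y⌋₊, Real.log n - y * ∑ n ∈ Icc 1 ⌊y⌋₊, 1 / (n : ℝ)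
        + (Real.eulerMascheroniConstant + 1) * ⌊y⌋₊ := by
    rw [← sum_psi_div, Finset.mul_sum, ← Finset.sum_sub_distrib]
    have : (Real.eulerMascheroniConstant + 1) * (⌊y⌋₊ : ℝ) =
        ∑ n ∈ Icc 1 ⌊y⌋₊, (Real.eulerMascheroniConstant + 1) := by
      simp; ring
    rw [this, ← Finset.sum_add_distrib]
    refine Finset.sum_congr rfl fun n _ => ?_
    rw [psiRem]; ring
  rw [e]
  have h1 := sum_log_real y hy
  have h2 := harmonic_real y hy
  have g1 := Real.one_half_lt_eulerMascheroniConstant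
  have g2 := Real.eulerMascheroniConstant_lt_two_thirds
  have hNy : (⌊y⌋₊ : ℝ) ≤ y := Nat.floor_le (by linarith)
  have hyN : y ≤ ⌊y⌋₊ + 1 := (Nat.lt_floor_add_one y).le
  have h3 : |y * (∑ n ∈ Icc 1 ⌊y⌋₊, 1 / (n : ℝ) - Real.log y - Real.eulerMascheroniConstant)| ≤ 2 := by
    rw [abs_mul, abs_of_pos (by linarith)]
    calc _ ≤ y * (2 / y) := by gcongr
      _ = 2 := by field_simp
  rw [abs_le] at *
  constructor <;> nlinarith

open ArithmeticFunction in
/-- The Tatuzawa–Iseki identity for `psiRem`. -/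
theorem tatuzawa_iseki (x : ℝ) (hx : 1 ≤ x) :
    ∑ d ∈ Icc 1 ⌊x⌋₊, (moebius d : ℝ) * Real.log (x / d) *
        ∑ m ∈ Icc 1 ⌊x / d⌋₊, psiRem (x / d / m) =
      psiRem x * Real.log x + ∑ N ∈ Icc 1 ⌊x⌋₊, vonMangoldt N * psiRem (x / N) := by
  simp_rw [Finset.mul_sum]
  rw [sum_hyperbola (fun d m => (moebius d : ℝ) * Real.log (x / d) * psiRem (x / d / m))]
  have key : ∀ N ∈ Icc 1 ⌊x⌋₊, ∑ d ∈ N.divisors,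
      (moebius d : ℝ) * Real.log (x / d) * psiRem (x / d / ((N / d : ℕ) : ℝ)) =
      (if N = 1 then psiRem x * Real.log x else 0) + vonMangoldt N * psiRem (x / N) := by
    intro N hN
    rw [mem_Icc] at hN
    have hx0 : (0 : ℝ) < x := by linarith
    have : ∀ d ∈ N.divisors,
        (moebius d : ℝ) * Real.log (x / d) * psiRem (x / d / ((N / d : ℕ) : ℝ)) =
        psiRem (x / N) * ((moebius d : ℝ) * Real.log x - (moebius d : ℝ) * log d) := by
      intro d hd
      rw [Nat.mem_divisors] at hd
      have hd0 : 0 < d := Nat.pos_of_dvd_of_pos hd.1 (by omega)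
      have hdr : (0 : ℝ) < d := by exact_mod_cast hd0
      have hNr : (0 : ℝ) < N := by exact_mod_cast (show 0 < N by omega)
      rw [Nat.cast_div hd.1 (by positivity), Real.log_div (by positivity) (by positivity)]
      have : x / d / (N / d) = x / N := by field_simp
      rw [this, log_apply]; ring
    rw [Finset.sum_congr rfl this, ← Finset.mul_sum, Finset.sum_sub_distrib,
      sum_moebius_mul_log_eq, ← Finset.sum_mul]
    have hm : ∑ d ∈ N.divisors, (moebius d : ℝ) = if N = 1 then 1 else 0 := by
      have := congrArg (fun f : ArithmeticFunction ℤ => f N) moebius_mul_coe_zeta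
      simp only [coe_mul_zeta_apply, one_apply] at this
      have h2 : ((∑ d ∈ N.divisors, moebius d : ℤ) : ℝ) = ((if N = 1 then 1 else 0 : ℤ) : ℝ) := by
        rw [← this]
      push_cast at h2
      simpa using h2
    rw [hm]
    split_ifs with h
    · subst h; simp
    · ring
  rw [Finset.sum_congr rfl key, Finset.sum_add_distrib, Finset.sum_ite_eq' (Icc 1 ⌊x⌋₊) 1,
    if_pos (by simp [hx])]

theorem sum_rpow_half (x : ℝ) (hx : 1 ≤ x) :
    ∑ d ∈ Icc 1 ⌊x⌋₊, Real.sqrt (x / d) ≤ 2 * x := by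
  have h : ∀ N : ℕ, ∑ d ∈ Icc 1 N, 1 / Real.sqrt d ≤ 2 * Real.sqrt N := by
    intro N
    induction N with
    | zero => simp
    | succ N ih =>
      rw [Finset.sum_Icc_succ_top (by omega)]
      have a0 : 0 ≤ Real.sqrt N := Real.sqrt_nonneg _
      have a1 : 0 < Real.sqrt (N + 1 : ℝ) := Real.sqrt_pos.2 (by positivity)
      have a2 : Real.sqrt N ^ 2 = N := Real.sq_sqrt (by positivity)
      have a3 : Real.sqrt (N + 1 : ℝ) ^ 2 = N + 1 := Real.sq_sqrt (by positivity)
      have : 1 / Real.sqrt (N + 1 : ℝ) ≤ 2 * Real.sqrt (N + 1 : ℝ) - 2 * Real.sqrt N := by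
        rw [div_le_iff₀ a1]
        nlinarith [sq_nonneg (Real.sqrt (N + 1 : ℝ) - Real.sqrt N)]
      push_cast
      linarith
  have hx0 : 0 ≤ Real.sqrt x := Real.sqrt_nonneg _
  calc _ = Real.sqrt x * ∑ d ∈ Icc 1 ⌊x⌋₊, 1 / Real.sqrt d := by
        rw [Finset.mul_sum]
        refine Finset.sum_congr rfl fun d _ => ?_
        rw [Real.sqrt_div (by linarith)]; ring
    _ ≤ Real.sqrt x * (2 * Real.sqrt ⌊x⌋₊) := by gcongr; exact h _
    _ ≤ Real.sqrt x * (2 * Real.sqrt x) := by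
        gcongr; exact Nat.floor_le (by linarith)
    _ = 2 * x := by
        have := Real.mul_self_sqrt (show 0 ≤ x by linarith); linarith

theorem log_mul_log_le (u : ℝ) (hu : 1 ≤ u) :
    Real.log u * (6 + Real.log u) ≤ 30 * Real.sqrt u := by
  -- with `v = u ^ (1/4)` one has `log u ≤ 4 (v - 1)`
  set v := Real.sqrt (Real.sqrt u) with hv
  have hs : 1 ≤ Real.sqrt u := Real.one_le_sqrt.2 hu
  have hv1 : 1 ≤ v := Real.one_le_sqrt.2 hs
  have hv2 : v ^ 2 = Real.sqrt u := Real.sq_sqrt (by linarith)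
  have hv4 : v ^ 4 = u := by
    rw [show v ^ 4 = (v ^ 2) ^ 2 by ring, hv2, Real.sq_sqrt (by linarith)]
  have hlog : Real.log u ≤ 4 * (v - 1) := by
    rw [← hv4, Real.log_pow]
    have := Real.log_le_sub_one_of_pos (show 0 < v by linarith)
    push_cast; linarith
  have h0 : 0 ≤ Real.log u := Real.log_nonneg hu
  rw [← hv2]
  nlinarith [mul_le_mul hlog hlog h0 (by linarith), sq_nonneg (v - 1)]

open ArithmeticFunction in
/-- The inner sums in the Tatuzawa–Iseki identity are `O(1 + log(x/d))`, so each term is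
`O(√(x/d))` and the total is `O(x)`. -/
theorem selberg_rem (x : ℝ) (hx : 1 ≤ x) :
    |psiRem x * Real.log x + ∑ N ∈ Icc 1 ⌊x⌋₊, vonMangoldt N * psiRem (x / N)| ≤ 60 * x := by
  rw [← tatuzawa_iseki x hx]
  calc _ ≤ ∑ d ∈ Icc 1 ⌊x⌋₊, |(moebius d : ℝ) * Real.log (x / d) *
        ∑ m ∈ Icc 1 ⌊x / d⌋₊, psiRem (x / d / m)| := Finset.abs_sum_le_sum_abs _ _
    _ ≤ ∑ d ∈ Icc 1 ⌊x⌋₊, 30 * Real.sqrt (x / d) := by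
        refine Finset.sum_le_sum fun d hd => ?_
        rw [mem_Icc] at hd
        have hdr : (0 : ℝ) < d := by exact_mod_cast hd.1
        have hdx : (d : ℝ) ≤ x := (Nat.le_floor_iff (by linarith)).1 hd.2
        have hu : 1 ≤ x / d := by rwa [le_div_iff₀ hdr, one_mul]
        have hm : |(moebius d : ℝ)| ≤ 1 := by exact_mod_cast abs_moebius_le_one
        have hl : 0 ≤ Real.log (x / d) := Real.log_nonneg hu
        rw [abs_mul, abs_mul, abs_of_nonneg hl]
        calc _ ≤ 1 * Real.log (x / d) * (6 + Real.log (x / d)) := by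
              gcongr
              exact sum_psiRem _ hu
          _ ≤ _ := by rw [one_mul]; exact log_mul_log_le _ hu
    _ ≤ 60 * x := by
        rw [← Finset.mul_sum]
        have := sum_rpow_half x hx
        linarith

/-- The left side of Selberg's formula, `ψ(x) log x + ∑_{n ≤ x} Λ(n) ψ(x/n)`. -/
noncomputable def selbergSum (x : ℝ) : ℝ :=
  Chebyshev.psi x * Real.log x +
    ∑ N ∈ Icc 1 ⌊x⌋₊, ArithmeticFunction.vonMangoldt N * Chebyshev.psi (x / N)

open ArithmeticFunction in
theorem selberg_formula (x : ℝ) (hx : 1 ≤ x) :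
    |selbergSum x - 2 * x * Real.log x| ≤ 90 * x := by
  have h1 := selberg_rem x hx
  have h2 := mertens x hx
  have e : ∑ N ∈ Icc 1 ⌊x⌋₊, vonMangoldt N * psiRem (x / N) =
      ∑ N ∈ Icc 1 ⌊x⌋₊, vonMangoldt N * Chebyshev.psi (x / N)
      - x * ∑ N ∈ Icc 1 ⌊x⌋₊, vonMangoldt N / N
      + (Real.eulerMascheroniConstant + 1) * Chebyshev.psi x := by
    rw [psi_eq_Icc x, Finset.mul_sum, Finset.mul_sum, ← Finset.sum_sub_distrib,
      ← Finset.sum_add_distrib]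
    refine Finset.sum_congr rfl fun n _ => ?_
    rw [psiRem]; ring
  rw [e] at h1
  rw [selbergSum]
  rw [psiRem] at h1
  have g1 := Real.one_half_lt_eulerMascheroniConstant
  have g2 := Real.eulerMascheroniConstant_lt_two_thirds
  have hψ := psi_le_six x (by linarith)
  have hψ0 := Chebyshev.psi_nonneg x
  have hlog : Real.log x ≤ x - 1 := Real.log_le_sub_one_of_pos (by linarith)
  have hlog0 : 0 ≤ Real.log x := Real.log_nonneg hx
  set T := ∑ N ∈ Icc 1 ⌊x⌋₊, vonMangoldt N * Chebyshev.psi (x / N)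
  set S := ∑ N ∈ Icc 1 ⌊x⌋₊, vonMangoldt N / N
  have h3 : |x * (S - Real.log x)| ≤ 9 * x := by
    rw [abs_mul, abs_of_pos (by linarith), mul_comm]; gcongr
  have h4 : 0 ≤ Real.eulerMascheroniConstant * Real.log x := by positivity
  have h5 : Real.eulerMascheroniConstant * Real.log x ≤ x := by nlinarith
  have h6 : 0 ≤ Real.eulerMascheroniConstant * Chebyshev.psi x := by positivity
  have h7 : Real.eulerMascheroniConstant * Chebyshev.psi x ≤ 6 * x := by nlinarith
  rw [abs_le] at *
  constructor <;> nlinarith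

open ArithmeticFunction in
theorem psi_window (x x' : ℝ) (hx : 1 ≤ x) (hxx : x ≤ x') :
    (Chebyshev.psi x' - Chebyshev.psi x) * Real.log x ≤
      2 * x' * Real.log x' - 2 * x * Real.log x + 90 * x + 90 * x' := by
  have h1 := selberg_formula x hx
  have h2 := selberg_formula x' (hx.trans hxx)
  have h3 : ∑ N ∈ Icc 1 ⌊x⌋₊, vonMangoldt N * Chebyshev.psi (x / N) ≤
      ∑ N ∈ Icc 1 ⌊x'⌋₊, vonMangoldt N * Chebyshev.psi (x' / N) := by
    calc _ ≤ ∑ N ∈ Icc 1 ⌊x⌋₊, vonMangoldt N * Chebyshev.psi (x' / N) := by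
          refine Finset.sum_le_sum fun n _ => ?_
          gcongr
      _ ≤ _ := by
          apply Finset.sum_le_sum_of_subset_of_nonneg
          · apply Finset.Icc_subset_Icc le_rfl (Nat.floor_le_floor hxx)
          · intro i _ _
            exact mul_nonneg vonMangoldt_nonneg (Chebyshev.psi_nonneg _)
  have h4 : Chebyshev.psi x' * Real.log x ≤ Chebyshev.psi x' * Real.log x' := by
    gcongr
  rw [selbergSum] at h1 h2
  rw [abs_le] at h1 h2
  nlinarith

open ArithmeticFunction in
/-- A Brun–Titchmarsh type bound in logarithmic windows, deduced from Selberg's formula. -/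
theorem mangoldt_window (z δ : ℝ) (hz : 2 ≤ z) (h0 : 0 ≤ δ) (h1 : δ ≤ 1) :
    ∑ n ∈ Ioc ⌊z⌋₊ ⌊z * Real.exp δ⌋₊, vonMangoldt n / n ≤ 366 * (δ + 1 / Real.log z) := by
  have hzp : 0 < z := by linarith
  have hlz : 0 < Real.log z := Real.log_pos (by linarith)
  have he1 : 1 ≤ Real.exp δ := Real.one_le_exp h0
  have he2 : Real.exp δ ≤ 1 + 2 * δ := by
    have := Real.exp_bound_div_one_sub_of_interval h0
    have h3 : Real.exp δ ≤ (1 - δ) * 1 + δ * Real.exp 1 := by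
      have := convexOn_exp.2 (Set.mem_univ 0) (Set.mem_univ 1) (sub_nonneg.2 h1) h0 (by ring)
      simpa using this
    have := Real.exp_one_lt_d9
    nlinarith
  have hw := psi_window z (z * Real.exp δ) (by linarith) (by nlinarith)
  have hsum : Chebyshev.psi (z * Real.exp δ) - Chebyshev.psi z =
      ∑ n ∈ Ioc ⌊z⌋₊ ⌊z * Real.exp δ⌋₊, vonMangoldt n := by
    have hle : ⌊z⌋₊ ≤ ⌊z * Real.exp δ⌋₊ := Nat.floor_le_floor (by nlinarith)
    rw [Chebyshev.psi, Chebyshev.psi, ← Finset.sum_Ioc_consecutive _ (Nat.zero_le _) hle]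
    ring
  rw [Real.log_mul (by positivity) (by positivity), Real.log_exp] at hw
  calc _ ≤ ∑ n ∈ Ioc ⌊z⌋₊ ⌊z * Real.exp δ⌋₊, vonMangoldt n / z := by
        refine Finset.sum_le_sum fun n hn => ?_
        rw [mem_Ioc] at hn
        have : z ≤ n := (Nat.floor_lt hzp.le).1 hn.1 |>.le
        gcongr
    _ = (Chebyshev.psi (z * Real.exp δ) - Chebyshev.psi z) / z := by
        rw [hsum, Finset.sum_div]
    _ ≤ 366 * (δ + 1 / Real.log z) := by
        rw [div_le_iff₀ hzp]
        refine le_of_mul_le_mul_right ?_ hlz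
        calc _ ≤ _ := hw
          _ = 2 * z * ((Real.exp δ - 1) * Real.log z) + 2 * z * Real.exp δ * δ +
              90 * z + 90 * (z * Real.exp δ) := by ring
          _ ≤ 2 * z * ((2 * δ) * Real.log z) + 2 * z * 3 * 1 + 90 * z + 90 * (z * 3) := by
              have : Real.exp δ ≤ 3 := by linarith
              gcongr
              linarith
          _ ≤ 366 * z * (δ * Real.log z) + 366 * z := by
              have : 0 ≤ z * (δ * Real.log z) := by positivity
              nlinarith
          _ = _ := by field_simp

open ArithmeticFunction in
theorem mangoldt_sum_le (y : ℝ) (hy : 1 ≤ y) :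
    ∑ n ∈ Icc 1 ⌊y⌋₊, vonMangoldt n / n ≤ Real.log y + 9 := by
  have := mertens y hy
  rw [abs_le] at this
  linarith [this.2]

open ArithmeticFunction in
theorem mangoldt_sum_Ioc (a b : ℝ) (ha : 1 ≤ a) (hab : a ≤ b) :
    ∑ n ∈ Ioc ⌊a⌋₊ ⌊b⌋₊, vonMangoldt n / n ≤ Real.log (b / a) + 18 := by
  have h1 := mertens a ha
  have h2 := mertens b (ha.trans hab)
  have hle : ⌊a⌋₊ ≤ ⌊b⌋₊ := Nat.floor_le_floor hab
  have e : ∑ n ∈ Icc 1 ⌊b⌋₊, vonMangoldt n / (n : ℝ) =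
      ∑ n ∈ Icc 1 ⌊a⌋₊, vonMangoldt n / (n : ℝ) + ∑ n ∈ Ioc ⌊a⌋₊ ⌊b⌋₊, vonMangoldt n / (n : ℝ) := by
    exact (Finset.sum_Ioc_consecutive (fun n => vonMangoldt n / (n : ℝ)) (Nat.zero_le _) hle).symm
  rw [e] at h2
  rw [Real.log_div (by linarith) (by linarith)]
  rw [abs_le] at h1 h2
  linarith [h1.1, h2.2]

/-! ### The discrepancy and its recursion -/

theorem w0_gt : (4 / 3 : ℝ) < w0 := by
  have g2 := Real.eulerMascheroniConstant_lt_two_thirds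
  have := Real.add_one_le_exp (1 - Real.eulerMascheroniConstant)
  rw [w0]; linarith

theorem w0_lt : w0 < 2 := by
  have g1 := Real.one_half_lt_eulerMascheroniConstant
  have h1 : w0 < Real.exp (1 / 2) := Real.exp_lt_exp.2 (by linarith)
  have h2 : Real.exp (1 / 2) ^ 2 = Real.exp 1 := by
    rw [← Real.exp_nat_mul]; norm_num
  have := Real.exp_one_lt_d9
  have h3 : 0 < Real.exp (1 / 2) := Real.exp_pos _
  nlinarith

theorem w0_pos : 0 < w0 := Real.exp_pos _

/-- The discrepancy `L_h(x) - M̃_{1 * h}(w₀ x)`. -/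
noncomputable def Dop (h : ℕ → ℝ) (x : ℝ) : ℝ := Lsum h x - Mt (dconv h) (w0 * x)

/-- The kernel for which `Dop h x = ∑ h(n)/n * Kf (x/n)`. -/
noncomputable def Kf (u : ℝ) : ℝ := (if 1 ≤ u then 1 else 0) - ⌊w0 * u⌋₊ / (w0 * u)

theorem abs_Kf_le (u : ℝ) (hu : 1 ≤ w0 * u) : |Kf u| ≤ 1 / (w0 * u) := by
  have hw := w0_lt
  have hw' := w0_pos
  rw [Kf]
  set v := w0 * u with hv
  have hv0 : 0 < v := by linarith
  split_ifs with h
  · have h1 : (⌊v⌋₊ : ℝ) ≤ v := Nat.floor_le hv0.le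
    have h2 : v < ⌊v⌋₊ + 1 := Nat.lt_floor_add_one v
    have : 1 - ⌊v⌋₊ / v = (v - ⌊v⌋₊) / v := by field_simp
    rw [this, abs_of_nonneg (div_nonneg (by linarith) hv0.le)]
    gcongr
    linarith
  · have : ⌊v⌋₊ = 1 := by
      rw [Nat.floor_eq_iff hv0.le]
      push_cast
      exact ⟨hu, by nlinarith⟩
    rw [this]; simp [abs_of_pos hv0]

theorem Dop_eq (h : ℕ → ℝ) (x : ℝ) (hx : 0 < x) :
    Dop h x = ∑ n ∈ Icc 1 ⌊w0 * x⌋₊, h n / n * Kf (x / n) := by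
  have hw := w0_gt
  have hL : Lsum h x = ∑ n ∈ Icc 1 ⌊w0 * x⌋₊, h n / n * (if 1 ≤ x / n then 1 else 0) := by
    rw [Lsum]
    have hsub : Icc 1 ⌊x⌋₊ ⊆ Icc 1 ⌊w0 * x⌋₊ :=
      Finset.Icc_subset_Icc le_rfl (Nat.floor_le_floor (by nlinarith))
    rw [← Finset.sum_subset hsub]
    · refine Finset.sum_congr rfl fun n hn => ?_
      rw [mem_Icc, Nat.le_floor_iff hx.le] at hn
      have : (0 : ℝ) < n := by exact_mod_cast hn.1
      rw [if_pos (by rw [le_div_iff₀ this]; linarith), mul_one]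
    · intro n hn hn2
      rw [mem_Icc] at hn hn2
      have : (0 : ℝ) < n := by exact_mod_cast hn.1
      rw [if_neg, mul_zero]
      rw [le_div_iff₀ this, one_mul]
      intro hc
      exact hn2 ⟨hn.1, Nat.le_floor hc⟩
  have hM : Mt (dconv h) (w0 * x) =
      ∑ n ∈ Icc 1 ⌊w0 * x⌋₊, h n / n * (⌊w0 * (x / n)⌋₊ / (w0 * (x / n))) := by
    have := sum_hyperbola (fun n _ => h n) (w0 * x)
    rw [Mt]
    simp only [dconv]
    rw [← this, Finset.sum_div]
    refine Finset.sum_congr rfl fun n hn => ?_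
    rw [mem_Icc] at hn
    have : (0 : ℝ) < n := by exact_mod_cast hn.1
    simp only [sum_const, Nat.card_Icc, add_tsub_cancel_right, nsmul_eq_mul]
    rw [mul_div_assoc w0 x n]
    have := w0_pos
    field_simp
  rw [Dop, hL, hM, ← Finset.sum_sub_distrib]
  refine Finset.sum_congr rfl fun n _ => ?_
  rw [Kf]; ring

theorem Kf_term (x : ℝ) (hx : 0 < x) (n : ℕ) (hn : n ∈ Icc 1 ⌊w0 * x⌋₊) :
    |Kf (x / n)| ≤ n / (w0 * x) := by
  have hw := w0_pos
  rw [mem_Icc, Nat.le_floor_iff (by positivity)] at hn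
  have h0 : (0 : ℝ) < n := by exact_mod_cast hn.1
  calc _ ≤ _ := abs_Kf_le (x / n) (by rw [← mul_div_assoc, le_div_iff₀ h0]; linarith)
    _ = _ := by field_simp

theorem abs_Dop_le (h : ℕ → ℝ) (x : ℝ) (hx : 0 < x) :
    |Dop h x| ≤ (∑ n ∈ Icc 1 ⌊w0 * x⌋₊, |h n|) / (w0 * x) := by
  rw [Dop_eq h x hx, Finset.sum_div]
  refine (Finset.abs_sum_le_sum_abs _ _).trans (Finset.sum_le_sum fun n hn => ?_)
  have h1 := Kf_term x hx n hn
  rw [mem_Icc] at hn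
  have h0 : (0 : ℝ) < n := by exact_mod_cast hn.1
  have hw := w0_pos
  rw [abs_mul, abs_div, abs_of_pos h0]
  calc _ ≤ |h n| / n * (n / (w0 * x)) := by gcongr
    _ = _ := by field_simp

theorem abs_Dop_le_one (f : ℕ → ℝ) (hf : ∀ n, f n ∈ Set.Icc (-1 : ℝ) 1) (x : ℝ) (hx : 0 < x) :
    |Dop f x| ≤ 1 := by
  have hw := w0_pos
  refine (abs_Dop_le f x hx).trans ?_
  rw [div_le_one (by positivity)]
  calc _ ≤ ∑ n ∈ Icc 1 ⌊w0 * x⌋₊, (1 : ℝ) := by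
        refine Finset.sum_le_sum fun n _ => ?_
        exact abs_le.2 (hf n)
    _ = ⌊w0 * x⌋₊ := by simp
    _ ≤ _ := Nat.floor_le (by positivity)

/-- `f(p) log p` at primes, zero elsewhere. -/
noncomputable def cpr (f : ℕ → ℝ) (n : ℕ) : ℝ := if n.Prime then f n * Real.log n else 0

/-- The Dirichlet convolution of `cpr f` and `f`, the main part of `f log`. -/
noncomputable def afun (f : ℕ → ℝ) (N : ℕ) : ℝ := ∑ d ∈ N.divisors, cpr f d * f (N / d)

open ArithmeticFunction in
theorem abs_cpr_le (f : ℕ → ℝ) (hf : ∀ n, f n ∈ Set.Icc (-1 : ℝ) 1) (n : ℕ) :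
    |cpr f n| ≤ vonMangoldt n := by
  rw [cpr]
  split_ifs with h
  · rw [vonMangoldt_apply_prime h, abs_mul]
    have h1 : 0 ≤ Real.log n := Real.log_natCast_nonneg n
    rw [abs_of_nonneg h1]
    have := abs_le.2 (hf n)
    nlinarith
  · simp [vonMangoldt_nonneg]

open ArithmeticFunction in
theorem abs_afun_le (f : ℕ → ℝ) (hf : ∀ n, f n ∈ Set.Icc (-1 : ℝ) 1) (n : ℕ) :
    |afun f n| ≤ Real.log n := by
  rw [← vonMangoldt_sum, afun]
  refine (Finset.abs_sum_le_sum_abs _ _).trans (Finset.sum_le_sum fun d _ => ?_)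
  rw [abs_mul]
  calc _ ≤ vonMangoldt d * 1 := by
        gcongr
        · exact abs_cpr_le f hf d
        · exact abs_le.2 (hf _)
    _ = _ := mul_one _

/-- Expanding the convolution: the discrepancy of `afun f` is a weighted sum over primes of values
of the discrepancy of `f`. -/
theorem Dop_afun (f : ℕ → ℝ) (x : ℝ) (hx : 0 < x) :
    Dop (afun f) x = ∑ p ∈ Icc 1 ⌊w0 * x⌋₊, cpr f p / p * Dop f (x / p) := by
  rw [Dop_eq _ x hx]
  have h1 : ∀ p ∈ Icc 1 ⌊w0 * x⌋₊, cpr f p / p * Dop f (x / p) =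
      ∑ m ∈ Icc 1 ⌊w0 * x / p⌋₊, cpr f p * f m / (p * m : ℝ) * Kf (x / (p * m : ℝ)) := by
    intro p hp
    rw [mem_Icc] at hp
    have h0 : (0 : ℝ) < p := by exact_mod_cast hp.1
    rw [Dop_eq _ _ (by positivity), Finset.mul_sum, mul_div_assoc]
    refine Finset.sum_congr rfl fun m hm => ?_
    rw [div_div]
    ring
  rw [Finset.sum_congr rfl h1,
    sum_hyperbola (fun p m => cpr f p * f m / (p * m : ℝ) * Kf (x / (p * m : ℝ)))]
  refine Finset.sum_congr rfl fun N hN => ?_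
  rw [afun, Finset.sum_div, Finset.sum_mul]
  refine Finset.sum_congr rfl fun d hd => ?_
  rw [mem_Icc] at hN
  rw [Nat.mem_divisors] at hd
  have hd0 : 0 < d := Nat.pos_of_dvd_of_pos hd.1 (by omega)
  have : (d : ℝ) * ((N / d : ℕ) : ℝ) = N := by
    rw [← Nat.cast_mul, Nat.mul_div_cancel' hd.1]
  simp only [this]

/-- The von Mangoldt function restricted to proper prime powers. -/
noncomputable def mang2 (n : ℕ) : ℝ := if n.Prime then 0 else ArithmeticFunction.vonMangoldt n

theorem mang2_nonneg (n : ℕ) : 0 ≤ mang2 n := by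
  rw [mang2]; split_ifs
  · exact le_rfl
  · exact ArithmeticFunction.vonMangoldt_nonneg

open ArithmeticFunction in
theorem summable_mang2 : Summable fun n : ℕ => mang2 n / n := by
  have := vonMangoldt.summable_residueClass_non_primes_div (q := 1) (a := 0)
  refine this.congr fun n => ?_
  rw [mang2, vonMangoldt.residueClass, Set.indicator_of_mem]
  exact Subsingleton.elim _ _

open ArithmeticFunction in
/-- By multiplicativity `f log` and `afun f` differ only through proper prime powers. -/
theorem flog_sub_afun (f : ℕ → ℝ) (hf : ∀ n, f n ∈ Set.Icc (-1 : ℝ) 1) (hm : IsMult f) (n : ℕ)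
    (hn : 1 ≤ n) :
    |f n * Real.log n - afun f n| ≤ 3 * ∑ d ∈ n.divisors, mang2 d := by
  have e : f n * Real.log n - afun f n = ∑ d ∈ n.divisors, (f n * mang2 d) +
      ∑ d ∈ n.divisors, (if d.Prime then Real.log d * (f n - f d * f (n / d)) else 0) := by
    rw [← vonMangoldt_sum, afun, Finset.mul_sum, ← Finset.sum_sub_distrib,
      ← Finset.sum_add_distrib]
    refine Finset.sum_congr rfl fun d _ => ?_
    rw [mang2, cpr]
    split_ifs with h
    · rw [vonMangoldt_apply_prime h]; ring
    · ring
  have h1 : |∑ d ∈ n.divisors, (f n * mang2 d)| ≤ ∑ d ∈ n.divisors, mang2 d := by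
    rw [← Finset.mul_sum, abs_mul, abs_of_nonneg (Finset.sum_nonneg fun d _ => mang2_nonneg d)]
    have := abs_le.2 (hf n)
    have := Finset.sum_nonneg (s := n.divisors) fun d _ => mang2_nonneg d
    nlinarith
  have h2 : |∑ d ∈ n.divisors, (if d.Prime then Real.log d * (f n - f d * f (n / d)) else 0)| ≤
      ∑ d ∈ n.divisors with d.Prime ∧ d ^ 2 ∣ n, 2 * Real.log d := by
    rw [Finset.sum_filter]
    refine (Finset.abs_sum_le_sum_abs _ _).trans (Finset.sum_le_sum fun d hd => ?_)
    rw [Nat.mem_divisors] at hd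
    by_cases hp : d.Prime
    · rw [if_pos hp]
      have hl : 0 ≤ Real.log d := Real.log_natCast_nonneg d
      by_cases h2 : d ^ 2 ∣ n
      · rw [if_pos ⟨hp, h2⟩, abs_mul, abs_of_nonneg hl, mul_comm]
        gcongr
        have a1 := hf n
        have a2 := abs_le.2 (hf d)
        have a3 := abs_le.2 (hf (n / d))
        have a4 : |f d * f (n / d)| ≤ 1 := by rw [abs_mul]; nlinarith [abs_nonneg (f d)]
        rw [abs_le] at a4 ⊢
        constructor <;> linarith [a1.1, a1.2]
      · have hc : Nat.Coprime d (n / d) := by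
          rw [hp.coprime_iff_not_dvd]
          intro hdd
          apply h2
          obtain ⟨k, hk⟩ := hdd
          refine ⟨k, ?_⟩
          calc n = d * (n / d) := (Nat.mul_div_cancel' hd.1).symm
            _ = _ := by rw [hk]; ring
        have := hm.2 d (n / d) hc
        rw [Nat.mul_div_cancel' hd.1] at this
        rw [if_neg (by tauto), this]
        simp
    · rw [if_neg hp, if_neg (by tauto)]; simp
  have h3 : ∑ d ∈ n.divisors with d.Prime ∧ d ^ 2 ∣ n, 2 * Real.log d ≤
      2 * ∑ d ∈ n.divisors, mang2 d := by
    rw [← Finset.mul_sum]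
    gcongr
    have : ∀ d ∈ {d ∈ n.divisors | d.Prime ∧ d ^ 2 ∣ n}, Real.log d = mang2 (d ^ 2) := by
      intro d hd
      rw [mem_filter] at hd
      rw [mang2, if_neg, vonMangoldt_apply_pow (by norm_num), vonMangoldt_apply_prime hd.2.1]
      exact Nat.Prime.not_prime_pow le_rfl
    rw [Finset.sum_congr rfl this,
      ← Finset.sum_image (f := mang2) (g := fun d : ℕ => d ^ 2)]
    · apply Finset.sum_le_sum_of_subset_of_nonneg
      · intro q hq
        rw [mem_image] at hq
        obtain ⟨d, hd, rfl⟩ := hq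
        rw [mem_filter] at hd
        exact Nat.mem_divisors.2 ⟨hd.2.2, by omega⟩
      · intro i _ _; exact mang2_nonneg i
    · intro a _ b _ hab
      exact Nat.pow_left_injective (n := 2) (by norm_num) hab
  rw [e]
  refine (abs_add_le _ _).trans ?_
  linarith

/-- Write `log x = log n + log (x/n)`: the first part turns `f` into `f log`, hence `afun f`, and
the second costs `O(1)` because the kernel decays like `1/u`. -/
theorem Dop_recursion : ∃ C : ℝ, 0 < C ∧ ∀ f : ℕ → ℝ, (∀ n, f n ∈ Set.Icc (-1 : ℝ) 1) → IsMult f →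
    ∀ x : ℝ, 1 ≤ x → |Real.log x * Dop f x - Dop (afun f) x| ≤ C := by
  refine ⟨3 * (∑' n : ℕ, mang2 n / n) + 3, by
    have : 0 ≤ ∑' n : ℕ, mang2 n / n := tsum_nonneg fun n => div_nonneg (mang2_nonneg n) (Nat.cast_nonneg n)
    linarith, ?_⟩
  intro f hf hm x hx
  have hw := w0_gt
  have hw2 := w0_lt
  have hx0 : 0 < x := by linarith
  set y := w0 * x with hy
  have hy1 : 1 ≤ y := by nlinarith
  have hy0 : 0 < y := by linarith
  -- the contribution of proper prime powers
  have hb : |Dop (fun n => f n * Real.log n - afun f n) x| ≤ 3 * ∑' n : ℕ, mang2 n / n := by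
    refine (abs_Dop_le _ x hx0).trans ?_
    rw [div_le_iff₀ hy0]
    calc _ ≤ ∑ n ∈ Icc 1 ⌊y⌋₊, 3 * ∑ d ∈ n.divisors, mang2 d := by
          refine Finset.sum_le_sum fun n hn => ?_
          rw [mem_Icc] at hn
          exact flog_sub_afun f hf hm n hn.1
      _ = 3 * ∑ n ∈ Icc 1 ⌊y⌋₊, mang2 n * ⌊y / n⌋₊ := by
          rw [← Finset.mul_sum]
          have := sum_hyperbola (fun n _ => mang2 n) y
          rw [← this]
          simp [mul_comm]
      _ ≤ 3 * ∑ n ∈ Icc 1 ⌊y⌋₊, y * (mang2 n / n) := by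
          refine mul_le_mul_of_nonneg_left (Finset.sum_le_sum fun n hn => ?_) (by norm_num)
          calc _ ≤ mang2 n * (y / n) := by
                gcongr
                · exact mang2_nonneg n
                · exact Nat.floor_le (by positivity)
            _ = _ := by ring
      _ ≤ _ := by
          rw [← Finset.mul_sum]
          have := summable_mang2.sum_le_tsum (Icc 1 ⌊y⌋₊)
            fun n _ => div_nonneg (mang2_nonneg n) (Nat.cast_nonneg n)
          nlinarith
  have hE : |∑ n ∈ Icc 1 ⌊y⌋₊, f n / n * Kf (x / n) * Real.log (x / n)| ≤ 3 := by
    have hs : ∑ n ∈ Icc 1 ⌊y⌋₊, Real.log (y / n) ≤ 2 * y := by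
      have h1 := sum_log_real y hy1
      have : ∑ n ∈ Icc 1 ⌊y⌋₊, Real.log (y / n) =
          ⌊y⌋₊ * Real.log y - ∑ n ∈ Icc 1 ⌊y⌋₊, Real.log n := by
        have : (⌊y⌋₊ : ℝ) * Real.log y = ∑ n ∈ Icc 1 ⌊y⌋₊, Real.log y := by simp
        rw [this, ← Finset.sum_sub_distrib]
        refine Finset.sum_congr rfl fun n hn => ?_
        rw [mem_Icc] at hn
        have h0 : (0 : ℝ) < n := by exact_mod_cast hn.1
        rw [Real.log_div (by positivity) (by positivity)]
      rw [this]
      have hfl : (⌊y⌋₊ : ℝ) ≤ y := Nat.floor_le hy0.le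
      have hl0 : 0 ≤ Real.log y := Real.log_nonneg hy1
      have hl1 := Real.log_le_sub_one_of_pos hy0
      rw [abs_le] at h1
      nlinarith
    have hlw0 : 0 ≤ Real.log w0 := Real.log_nonneg (by linarith)
    have hlw : Real.log w0 ≤ 1 := by
      have := Real.log_le_sub_one_of_pos w0_pos
      linarith
    calc _ ≤ ∑ n ∈ Icc 1 ⌊y⌋₊, 1 / y * (Real.log (y / n) + 1) := by
          refine (Finset.abs_sum_le_sum_abs _ _).trans (Finset.sum_le_sum fun n hn => ?_)
          have hK := Kf_term x hx0 n hn
          rw [mem_Icc, Nat.le_floor_iff hy0.le] at hn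
          have h0 : (0 : ℝ) < n := by exact_mod_cast hn.1
          have hl0 : 0 ≤ Real.log (y / n) := Real.log_nonneg (by rw [le_div_iff₀ h0]; linarith)
          have hl : Real.log (x / n) = Real.log (y / n) - Real.log w0 := by
            rw [← Real.log_div (by positivity) w0_pos.ne']
            congr 1
            have := w0_pos
            rw [hy]; field_simp
          rw [abs_mul, abs_mul, abs_div, abs_of_pos h0]
          calc _ ≤ 1 / n * (n / y) * (Real.log (y / n) + 1) := by
                gcongr
                · exact abs_le.2 (hf n)
                · rw [hl, abs_le]; constructor <;> linarith
            _ = _ := by field_simp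
      _ = 1 / y * (∑ n ∈ Icc 1 ⌊y⌋₊, Real.log (y / n) + ⌊y⌋₊) := by
          rw [← Finset.mul_sum, Finset.sum_add_distrib]; simp
      _ ≤ 1 / y * (2 * y + y) := by
          gcongr
          exact Nat.floor_le hy0.le
      _ = 3 := by field_simp; norm_num
  have key : Real.log x * Dop f x - Dop (afun f) x =
      Dop (fun n => f n * Real.log n - afun f n) x +
        ∑ n ∈ Icc 1 ⌊y⌋₊, f n / n * Kf (x / n) * Real.log (x / n) := by
    rw [Dop_eq _ x hx0, Dop_eq _ x hx0, Dop_eq _ x hx0, Finset.mul_sum,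
      ← Finset.sum_sub_distrib, ← Finset.sum_add_distrib]
    refine Finset.sum_congr rfl fun n hn => ?_
    rw [mem_Icc] at hn
    have h0 : (0 : ℝ) < n := by exact_mod_cast hn.1
    rw [Real.log_div (by positivity) (by positivity)]
    ring
  rw [key]
  refine (abs_add_le _ _).trans ?_
  linarith

/-! ### Continuity of the discrepancy on a logarithmic scale -/

theorem sum_inv_le (m : ℝ) (hm : 1 ≤ m) : ∑ k ∈ Icc 1 ⌊m⌋₊, 1 / (k : ℝ) ≤ 1 + Real.log m := by
  have h1 := harmonic_le_one_add_log ⌊m⌋₊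
  have hh : ((harmonic ⌊m⌋₊ : ℚ) : ℝ) = ∑ n ∈ Icc 1 ⌊m⌋₊, 1 / (n : ℝ) := by
    rw [harmonic_eq_sum_Icc]; push_cast; simp
  rw [← hh]
  have h2 : (1 : ℝ) ≤ ⌊m⌋₊ := by exact_mod_cast Nat.le_floor (by simpa using hm)
  have := Real.log_le_log (by linarith) (Nat.floor_le (show 0 ≤ m by linarith))
  linarith

theorem floor_div_sub (y y' : ℝ) (hy : 0 ≤ y) (hyy : y ≤ y') (n : ℕ) (hn : 1 ≤ n) (m : ℕ)
    (hm : ⌊y' / n⌋₊ ≤ m) :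
    ((⌊y' / n⌋₊ : ℝ) - ⌊y / n⌋₊) =
      ∑ k ∈ Icc 1 m, if y < n * k ∧ n * k ≤ y' then (1 : ℝ) else 0 := by
  have h0 : (0 : ℝ) < n := by exact_mod_cast hn
  have hle : ⌊y / n⌋₊ ≤ ⌊y' / n⌋₊ := Nat.floor_le_floor (by gcongr)
  rw [← Finset.sum_filter, Finset.sum_const, nsmul_eq_mul, mul_one, ← Nat.cast_sub hle,
    ← Nat.card_Ioc]
  congr 2
  ext k
  rw [mem_Ioc, mem_filter, mem_Icc, Nat.floor_lt (by positivity), div_lt_iff₀ h0,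
    Nat.le_floor_iff (div_nonneg (hy.trans hyy) h0.le), le_div_iff₀ h0, mul_comm (k : ℝ)]
  constructor
  · rintro ⟨h1, h2⟩
    refine ⟨⟨?_, ?_⟩, h1, h2⟩
    · by_contra hk
      have : k = 0 := by omega
      subst this
      simp at h1
      linarith
    · refine le_trans (Nat.le_floor ?_) hm
      rw [le_div_iff₀ h0, mul_comm]; exact h2
  · rintro ⟨_, h⟩; exact h

/-- The number of jumps of `⌊y / n⌋` between `y` and `y'`, summed over `n > δ y`. -/
theorem sum_floor_jumps (y y' δ : ℝ) (hδ : 0 < δ) (hδ1 : δ ≤ 1) (hy : 0 < y) (hyy : y ≤ y')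
    (hy3 : y' ≤ 3 * y) :
    ∑ n ∈ (Icc 1 ⌊y'⌋₊).filter (fun n : ℕ => δ * y < (n : ℝ)), ((⌊y' / n⌋₊ : ℝ) - ⌊y / n⌋₊) ≤
      (y' - y) * (1 + Real.log (3 / δ)) + 3 / δ := by
  have hm : 1 ≤ 3 / δ := by rw [le_div_iff₀ hδ]; linarith
  calc _ = ∑ n ∈ (Icc 1 ⌊y'⌋₊).filter (fun n : ℕ => δ * y < (n : ℝ)), ∑ k ∈ Icc 1 ⌊3 / δ⌋₊,
            if y < n * k ∧ n * k ≤ y' then (1 : ℝ) else 0 := by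
        refine Finset.sum_congr rfl fun n hn => ?_
        rw [mem_filter, mem_Icc] at hn
        have h0 : (0 : ℝ) < n := by exact_mod_cast hn.1.1
        apply floor_div_sub y y' hy.le hyy n hn.1.1
        apply Nat.floor_le_floor
        rw [div_le_div_iff₀ h0 hδ]
        nlinarith [hn.2]
    _ = ∑ k ∈ Icc 1 ⌊3 / δ⌋₊, ∑ n ∈ (Icc 1 ⌊y'⌋₊).filter (fun n : ℕ => δ * y < (n : ℝ)),
            if y < n * k ∧ n * k ≤ y' then (1 : ℝ) else 0 := Finset.sum_comm
    _ ≤ ∑ k ∈ Icc 1 ⌊3 / δ⌋₊, ((y' - y) * (1 / (k : ℝ)) + 1) := by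
        refine Finset.sum_le_sum fun k hk => ?_
        rw [mem_Icc] at hk
        have h0 : (0 : ℝ) < k := by exact_mod_cast hk.1
        have h1k : (1 : ℝ) ≤ k := by exact_mod_cast hk.1
        calc _ ≤ ∑ n ∈ Icc 1 ⌊y'⌋₊, if y < (k : ℝ) * n ∧ (k : ℝ) * n ≤ y' then (1 : ℝ) else 0 := by
              simp_rw [mul_comm (k : ℝ)]
              apply Finset.sum_le_sum_of_subset_of_nonneg (Finset.filter_subset _ _)
              intro i _ _
              positivity
          _ = (⌊y' / k⌋₊ : ℝ) - ⌊y / k⌋₊ := by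
              rw [floor_div_sub y y' hy.le hyy k hk.1]
              apply Nat.floor_le_floor
              exact div_le_self (by linarith) h1k
          _ ≤ y' / k - (y / k - 1) := by
              have h1 := Nat.floor_le (show 0 ≤ y' / k from div_nonneg (by linarith) h0.le)
              have h2 := Nat.lt_floor_add_one (y / k)
              linarith
          _ = _ := by ring
    _ = (y' - y) * ∑ k ∈ Icc 1 ⌊3 / δ⌋₊, 1 / (k : ℝ) + ⌊3 / δ⌋₊ := by
        rw [Finset.sum_add_distrib, Finset.mul_sum]; simp
    _ ≤ _ := by
        have h1 := sum_inv_le (3 / δ) hm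
        have h2 := Nat.floor_le (show 0 ≤ 3 / δ by positivity)
        have : 0 ≤ y' - y := by linarith
        gcongr

theorem Kf_eq_zero (u : ℝ) (hu0 : 0 ≤ u) (hu : w0 * u < 1) : Kf u = 0 := by
  have hw := w0_gt
  rw [Kf, if_neg (by nlinarith), Nat.floor_eq_zero.2 hu]
  simp

theorem Dop_eq_of_le (h : ℕ → ℝ) (x : ℝ) (hx : 0 < x) (N : ℕ) (hN : ⌊w0 * x⌋₊ ≤ N) :
    Dop h x = ∑ n ∈ Icc 1 N, h n / n * Kf (x / n) := by
  rw [Dop_eq h x hx]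
  apply Finset.sum_subset (Finset.Icc_subset_Icc le_rfl hN)
  intro n hn hn2
  rw [mem_Icc] at hn hn2
  have h0 : (0 : ℝ) < n := by exact_mod_cast hn.1
  have : ⌊w0 * x⌋₊ < n := by by_contra hc; exact hn2 ⟨hn.1, by omega⟩
  have hw := w0_pos
  rw [Nat.floor_lt (by positivity)] at this
  rw [Kf_eq_zero, mul_zero]
  · positivity
  · rw [← mul_div_assoc, div_lt_iff₀ h0]; linarith

/-- The kernel changes by its jump at `1`, by the jumps of the floor, and by the smooth factor. -/
theorem Kf_diff (u u' η : ℝ) (hu : 0 < u) (hη : 0 ≤ η) (hu' : u' = u * Real.exp η) :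
    |Kf u' - Kf u| ≤ (if u < 1 ∧ 1 ≤ u' then 1 else 0) +
      (⌊w0 * u'⌋₊ - ⌊w0 * u⌋₊) / (w0 * u') + η := by
  have hw := w0_pos
  have he : 1 ≤ Real.exp η := Real.one_le_exp hη
  have huu : u ≤ u' := by rw [hu']; nlinarith
  have hu'0 : 0 < u' := by linarith
  have h1 : ((if 1 ≤ u' then 1 else 0) - (if 1 ≤ u then 1 else 0) : ℝ) =
      if u < 1 ∧ 1 ≤ u' then 1 else 0 := by
    by_cases a : 1 ≤ u
    · have b : 1 ≤ u' := by linarith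
      simp [a, b]
    · by_cases b : 1 ≤ u' <;> simp [a, b, not_le.1 a]
  rw [Kf, Kf]
  have hfl : (⌊w0 * u⌋₊ : ℝ) ≤ w0 * u := Nat.floor_le (by positivity)
  have hfl2 : (⌊w0 * u⌋₊ : ℝ) ≤ ⌊w0 * u'⌋₊ := by
    exact_mod_cast Nat.floor_le_floor (by gcongr)
  have e : ((if 1 ≤ u' then 1 else 0) - ⌊w0 * u'⌋₊ / (w0 * u') -
      ((if 1 ≤ u then 1 else 0) - ⌊w0 * u⌋₊ / (w0 * u)) : ℝ) =
      (if u < 1 ∧ 1 ≤ u' then 1 else 0) - (⌊w0 * u'⌋₊ - ⌊w0 * u⌋₊) / (w0 * u') +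
      ⌊w0 * u⌋₊ * (1 / (w0 * u) - 1 / (w0 * u')) := by
    rw [← h1]; ring
  rw [e]
  have h2 : 0 ≤ (⌊w0 * u⌋₊ : ℝ) * (1 / (w0 * u) - 1 / (w0 * u')) := by
    apply mul_nonneg (by positivity)
    rw [sub_nonneg]
    gcongr
  have h3 : (⌊w0 * u⌋₊ : ℝ) * (1 / (w0 * u) - 1 / (w0 * u')) ≤ η := by
    calc _ ≤ w0 * u * (1 / (w0 * u) - 1 / (w0 * u')) := by
          gcongr
          rw [sub_nonneg]
          gcongr
      _ = 1 - Real.exp (-η) := by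
          rw [hu', Real.exp_neg]; field_simp
      _ ≤ η := by have := Real.add_one_le_exp (-η); linarith
  have h4 : (0 : ℝ) ≤ (⌊w0 * u'⌋₊ - ⌊w0 * u⌋₊) / (w0 * u') :=
    div_nonneg (by linarith) (by positivity)
  have h5 : (0 : ℝ) ≤ if u < 1 ∧ 1 ≤ u' then 1 else 0 := by positivity
  rw [abs_le]
  constructor <;> linarith

set_option maxHeartbeats 1600000 in
/-- Slow variation of the discrepancy: a relative change of size at most `δ` in `x` moves it by
`O(δ log(1/δ))`. -/
theorem Dop_lipschitz (f : ℕ → ℝ) (hf : ∀ n, f n ∈ Set.Icc (-1 : ℝ) 1) (x δ η : ℝ)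
    (hδ : 0 < δ) (hδ1 : δ ≤ 1) (hx : 1 / δ ^ 2 ≤ x) (hη : 0 ≤ η) (hηδ : η ≤ δ) :
    |Dop f (x * Real.exp η) - Dop f x| ≤ 100 * (δ * (1 + Real.log (1 / δ))) := by
  have hw := w0_gt
  have hw2 := w0_lt
  have hδ2 : 1 ≤ x * δ ^ 2 := by rwa [div_le_iff₀ (by positivity)] at hx
  have hδx : 1 ≤ x * δ := by nlinarith
  have hx0 : 0 < x := lt_of_lt_of_le (by positivity) hx
  have hx1 : 1 ≤ x := by nlinarith
  have he : 1 ≤ Real.exp η := Real.one_le_exp hη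
  have he2 : Real.exp η ≤ 1 + 2 * η := by
    have h3 : Real.exp η ≤ (1 - η) * 1 + η * Real.exp 1 := by
      have := convexOn_exp.2 (Set.mem_univ 0) (Set.mem_univ 1)
        (sub_nonneg.2 (hηδ.trans hδ1)) hη (by ring)
      simpa using this
    have := Real.exp_one_lt_d9
    nlinarith
  set x' := x * Real.exp η with hx'
  have hxx : x ≤ x' := by rw [hx']; nlinarith
  have hx'0 : 0 < x' := by linarith
  set y := w0 * x with hy
  set y' := w0 * x' with hy'
  have hy0 : 0 < y := by positivity
  have hyy : y ≤ y' := by rw [hy, hy']; gcongr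
  have hy'0 : 0 < y' := by linarith
  have hye : y' = y * Real.exp η := by rw [hy', hx', hy]; ring
  have hdiff : y' - y ≤ 2 * δ * y := by rw [hye]; nlinarith
  have hy3 : y' ≤ 3 * y := by nlinarith
  have hlδ : 0 ≤ Real.log (1 / δ) := Real.log_nonneg (by rw [le_div_iff₀ hδ]; linarith)
  have hl3 : Real.log (3 / δ) ≤ 2 + Real.log (1 / δ) := by
    rw [show 3 / δ = 3 * (1 / δ) by ring, Real.log_mul (by norm_num) (by positivity)]
    have := Real.log_le_sub_one_of_pos (show (0 : ℝ) < 3 by norm_num)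
    linarith
  rw [Dop_eq_of_le f x hx0 ⌊y'⌋₊ (Nat.floor_le_floor hyy), Dop_eq_of_le f x' hx'0 ⌊y'⌋₊ le_rfl,
    ← Finset.sum_sub_distrib]
  rw [← Finset.sum_filter_add_sum_filter_not (Icc 1 ⌊y'⌋₊) (fun n : ℕ => δ * y < (n : ℝ))]
  have hterm : ∀ n : ℕ, 1 ≤ n → |f n / n * Kf (x' / n) - f n / n * Kf (x / n)| ≤
      1 / n * |Kf (x' / n) - Kf (x / n)| := by
    intro n hn
    have h0 : (0 : ℝ) < n := by exact_mod_cast hn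
    rw [← mul_sub, abs_mul, abs_div, abs_of_pos h0]
    gcongr
    exact abs_le.2 (hf n)
  -- small `n`: trivial estimate
  have hsmall : |∑ n ∈ (Icc 1 ⌊y'⌋₊).filter (fun n : ℕ => ¬ (δ * y < (n : ℝ))),
      (f n / n * Kf (x' / n) - f n / n * Kf (x / n))| ≤ 2 * δ := by
    calc _ ≤ ∑ n ∈ (Icc 1 ⌊y'⌋₊).filter (fun n : ℕ => ¬ (δ * y < (n : ℝ))), (2 / y) := by
          refine (Finset.abs_sum_le_sum_abs _ _).trans (Finset.sum_le_sum fun n hn => ?_)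
          rw [mem_filter, mem_Icc, not_lt] at hn
          have h0 : (0 : ℝ) < n := by exact_mod_cast hn.1.1
          have hny : (n : ℝ) ≤ y := hn.2.trans (by nlinarith)
          have k1 := Kf_term x hx0 n (by rw [mem_Icc]; exact ⟨hn.1.1, Nat.le_floor hny⟩)
          have k2 := Kf_term x' hx'0 n (by rw [mem_Icc]; exact hn.1)
          refine (hterm n hn.1.1).trans ?_
          calc _ ≤ 1 / n * (n / y' + n / y) := by
                gcongr
                refine (abs_sub _ _).trans ?_
                exact add_le_add k2 k1
            _ = 1 / y' + 1 / y := by field_simp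
            _ ≤ 1 / y + 1 / y := by gcongr
            _ = 2 / y := by ring
      _ ≤ ∑ n ∈ Icc 1 ⌊δ * y⌋₊, 2 / y := by
          apply Finset.sum_le_sum_of_subset_of_nonneg
          · intro n hn
            rw [mem_filter, mem_Icc, not_lt] at hn
            rw [mem_Icc]
            exact ⟨hn.1.1, Nat.le_floor hn.2⟩
          · intro i _ _; positivity
      _ = ⌊δ * y⌋₊ * (2 / y) := by simp
      _ ≤ δ * y * (2 / y) := by gcongr; exact Nat.floor_le (by positivity)
      _ = 2 * δ := by field_simp
  have hind : ∑ n ∈ (Icc 1 ⌊y'⌋₊).filter (fun n : ℕ => δ * y < (n : ℝ)),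
      1 / (n : ℝ) * (if x / n < 1 ∧ 1 ≤ x' / n then (1 : ℝ) else 0) ≤ 3 * δ := by
    calc _ ≤ ∑ n ∈ Ioc ⌊x⌋₊ ⌊x'⌋₊, 1 / x := by
          rw [Finset.sum_filter]
          have : ∀ n ∈ Icc 1 ⌊y'⌋₊, (if δ * y < (n : ℝ) then
              1 / (n : ℝ) * (if x / n < 1 ∧ 1 ≤ x' / n then (1 : ℝ) else 0) else 0) ≤
              if n ∈ Ioc ⌊x⌋₊ ⌊x'⌋₊ then 1 / x else 0 := by
            intro n hn
            rw [mem_Icc] at hn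
            have h0 : (0 : ℝ) < n := by exact_mod_cast hn.1
            simp only [div_lt_one h0, one_le_div h0]
            by_cases c : x < n ∧ n ≤ x'
            · have : n ∈ Ioc ⌊x⌋₊ ⌊x'⌋₊ := by
                rw [mem_Ioc, Nat.floor_lt hx0.le, Nat.le_floor_iff hx'0.le]; exact c
              rw [if_pos c, if_pos this, mul_one]
              have c1 : 1 / (n : ℝ) ≤ 1 / x := by gcongr; exact c.1.le
              have c2 : (0 : ℝ) ≤ 1 / x := by positivity
              split_ifs
              · exact c1
              · exact c2
            · rw [if_neg c, mul_zero, ite_self]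
              split_ifs
              · positivity
              · exact le_rfl
          refine (Finset.sum_le_sum this).trans ?_
          rw [← Finset.sum_filter]
          apply Finset.sum_le_sum_of_subset_of_nonneg
          · intro n hn
            rw [mem_filter] at hn
            exact hn.2
          · intro i _ _; positivity
      _ = ((⌊x'⌋₊ : ℝ) - ⌊x⌋₊) * (1 / x) := by
          rw [Finset.sum_const, Nat.card_Ioc, nsmul_eq_mul, Nat.cast_sub (Nat.floor_le_floor hxx)]
      _ ≤ (x' - (x - 1)) * (1 / x) := by
          have h1 := Nat.floor_le hx'0.le
          have h2 := Nat.lt_floor_add_one x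
          gcongr
          linarith
      _ ≤ (3 * δ * x) * (1 / x) := by
          gcongr
          rw [hx']; nlinarith
      _ = 3 * δ := by field_simp
  have hjump : ∑ n ∈ (Icc 1 ⌊y'⌋₊).filter (fun n : ℕ => δ * y < (n : ℝ)),
      1 / (n : ℝ) * ((⌊w0 * (x' / n)⌋₊ - ⌊w0 * (x / n)⌋₊) / (w0 * (x' / n))) ≤
      2 * δ * (3 + Real.log (1 / δ)) + 3 * δ := by
    calc _ = (∑ n ∈ (Icc 1 ⌊y'⌋₊).filter (fun n : ℕ => δ * y < (n : ℝ)), ((⌊y' / n⌋₊ : ℝ) - ⌊y / n⌋₊)) / y' := by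
          rw [Finset.sum_div]
          refine Finset.sum_congr rfl fun n hn => ?_
          rw [mem_filter, mem_Icc] at hn
          have h0 : (0 : ℝ) < n := by exact_mod_cast hn.1.1
          rw [← mul_div_assoc w0 x n, ← mul_div_assoc w0 x' n, ← hy, ← hy']
          field_simp
      _ ≤ ((y' - y) * (1 + Real.log (3 / δ)) + 3 / δ) / y' := by
          gcongr
          exact sum_floor_jumps y y' δ hδ hδ1 hy0 hyy hy3
      _ ≤ (2 * δ * y' * (3 + Real.log (1 / δ)) + 3 * δ * y') / y' := by
          have a1 : y' - y ≤ 2 * δ * y' := by nlinarith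
          have a2 : 3 / δ ≤ 3 * δ * y' := by
            rw [div_le_iff₀ hδ]
            have : x ≤ y' := by nlinarith
            nlinarith [sq_nonneg δ]
          have a3 : 1 + Real.log (3 / δ) ≤ 3 + Real.log (1 / δ) := by linarith
          have a4 : 0 ≤ y' - y := by linarith
          have : (y' - y) * (1 + Real.log (3 / δ)) ≤ 2 * δ * y' * (3 + Real.log (1 / δ)) := by
            calc _ ≤ (y' - y) * (3 + Real.log (1 / δ)) := by gcongr
              _ ≤ _ := by gcongr
          gcongr
      _ = _ := by field_simp
  have hη' : ∑ n ∈ (Icc 1 ⌊y'⌋₊).filter (fun n : ℕ => δ * y < (n : ℝ)), 1 / (n : ℝ) * η ≤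
      δ * (10 + Real.log (1 / δ)) := by
    have hdy : 1 ≤ δ * y := by nlinarith
    have a1 := harmonic_real y' (by nlinarith)
    have a2 := harmonic_real (δ * y) hdy
    have hsub : ∑ n ∈ (Icc 1 ⌊y'⌋₊).filter (fun n : ℕ => δ * y < (n : ℝ)), 1 / (n : ℝ) =
        ∑ n ∈ Icc 1 ⌊y'⌋₊, 1 / (n : ℝ) - ∑ n ∈ Icc 1 ⌊δ * y⌋₊, 1 / (n : ℝ) := by
      have hle : δ * y ≤ y' := by nlinarith
      rw [eq_sub_iff_add_eq, ← Finset.sum_filter_add_sum_filter_not (Icc 1 ⌊y'⌋₊)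
        (fun n : ℕ => δ * y < (n : ℝ))]
      congr 1
      refine Finset.sum_congr ?_ fun _ _ => rfl
      ext n
      rw [mem_filter, mem_Icc, mem_Icc, not_lt, Nat.le_floor_iff (by positivity),
        Nat.le_floor_iff hy'0.le]
      constructor
      · rintro ⟨h1, h2⟩; exact ⟨⟨h1, h2.trans hle⟩, h2⟩
      · rintro ⟨h1, h2⟩; exact ⟨h1.1, h2⟩
    rw [← Finset.sum_mul, hsub]
    have b1 : 2 / y' ≤ 2 := by rw [div_le_iff₀ hy'0]; nlinarith
    have b2 : 2 / (δ * y) ≤ 2 := by rw [div_le_iff₀ (by positivity)]; nlinarith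
    have b3 : Real.log y' - Real.log (δ * y) ≤ 1 + Real.log (1 / δ) := by
      rw [hye, Real.log_mul hy0.ne' (by positivity), Real.log_exp,
        Real.log_mul hδ.ne' hy0.ne', one_div, Real.log_inv]
      linarith
    rw [abs_le] at a1 a2
    have b4 : ∑ n ∈ Icc 1 ⌊y'⌋₊, 1 / (n : ℝ) - ∑ n ∈ Icc 1 ⌊δ * y⌋₊, 1 / (n : ℝ) ≤
        10 + Real.log (1 / δ) := by linarith
    calc _ ≤ (10 + Real.log (1 / δ)) * η := by gcongr
      _ ≤ (10 + Real.log (1 / δ)) * δ := by gcongr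
      _ = _ := mul_comm _ _
  have hlarge : |∑ n ∈ (Icc 1 ⌊y'⌋₊).filter (fun n : ℕ => δ * y < (n : ℝ)),
      (f n / n * Kf (x' / n) - f n / n * Kf (x / n))| ≤
      3 * δ + (2 * δ * (3 + Real.log (1 / δ)) + 3 * δ) + δ * (10 + Real.log (1 / δ)) := by
    calc _ ≤ ∑ n ∈ (Icc 1 ⌊y'⌋₊).filter (fun n : ℕ => δ * y < (n : ℝ)),
          (1 / (n : ℝ) * (if x / n < 1 ∧ 1 ≤ x' / n then (1 : ℝ) else 0) +
          1 / (n : ℝ) * ((⌊w0 * (x' / n)⌋₊ - ⌊w0 * (x / n)⌋₊) / (w0 * (x' / n))) +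
          1 / (n : ℝ) * η) := by
          refine (Finset.abs_sum_le_sum_abs _ _).trans (Finset.sum_le_sum fun n hn => ?_)
          rw [mem_filter, mem_Icc] at hn
          have h0 : (0 : ℝ) < n := by exact_mod_cast hn.1.1
          refine (hterm n hn.1.1).trans ?_
          rw [← mul_add, ← mul_add]
          gcongr
          exact Kf_diff (x / n) (x' / n) η (by positivity) hη (by rw [hx']; ring)
      _ ≤ _ := by
          rw [Finset.sum_add_distrib, Finset.sum_add_distrib]
          gcongr
  refine (abs_add_le _ _).trans ?_
  have := mul_nonneg hδ.le hlδ
  nlinarith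

/-! ### The pointwise bound in terms of the average of the discrepancy -/

theorem measurable_Lsum (h : ℕ → ℝ) : Measurable (Lsum h) :=
  (measurable_from_nat (f := fun N : ℕ => ∑ n ∈ Icc 1 N, h n / n)).comp Nat.measurable_floor

theorem measurable_Mt (h : ℕ → ℝ) : Measurable (Mt h) :=
  ((measurable_from_nat (f := fun N : ℕ => ∑ n ∈ Icc 1 N, h n)).comp Nat.measurable_floor).div
    measurable_id

theorem measurable_Dop (h : ℕ → ℝ) : Measurable (Dop h) :=
  (measurable_Lsum h).sub ((measurable_Mt _).comp (measurable_const.mul measurable_id))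

theorem integrableOn_Dop (f : ℕ → ℝ) (hf : ∀ n, f n ∈ Set.Icc (-1 : ℝ) 1) (a b : ℝ) :
    MeasureTheory.IntegrableOn (fun w => |Dop f (Real.exp w)|) (Set.Ioc a b) := by
  refine MeasureTheory.Measure.integrableOn_of_bounded (M := 1) (by simp) ?_ ?_
  · exact (((measurable_Dop f).comp Real.measurable_exp).abs).aestronglyMeasurable
  · filter_upwards with w
    rw [Real.norm_eq_abs, abs_abs]
    exact abs_Dop_le_one f hf _ (Real.exp_pos _)

open ArithmeticFunction MeasureTheory in
set_option maxHeartbeats 1000000 in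
/-- The recursion over primes, with each `Dop f (x / p)` replaced by a short average. -/
theorem sum_mangoldt_Dop_mid (f : ℕ → ℝ) (hf : ∀ n, f n ∈ Set.Icc (-1 : ℝ) 1) (x δ : ℝ)
    (hδ : 0 < δ) (hδ1 : δ ≤ 1 / 2) (hx : 1 ≤ x) :
    ∑ n ∈ (Icc 1 ⌊w0 * x⌋₊).filter (fun n : ℕ => Real.exp (1 / δ) < (n : ℝ) ∧ (n : ℝ) ≤ δ ^ 2 * x),
      vonMangoldt n / n * |Dop f (x / n)| ≤
    1098 * (∫ w in Set.Ioc 0 (Real.log x + 1), |Dop f (Real.exp w)|) +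
      100 * (δ * (1 + Real.log (1 / δ))) * (Real.log x + 10) := by
  have hw := w0_gt
  have hw2 := w0_lt
  have hx0 : 0 < x := by linarith
  set U := Real.log x with hU
  set E := 100 * (δ * (1 + Real.log (1 / δ))) with hE
  have hlδ : 0 ≤ Real.log (1 / δ) := Real.log_nonneg (by rw [le_div_iff₀ hδ]; linarith)
  have hE0 : 0 ≤ E := by positivity
  set S := (Icc 1 ⌊w0 * x⌋₊).filter
    (fun n : ℕ => Real.exp (1 / δ) < (n : ℝ) ∧ (n : ℝ) ≤ δ ^ 2 * x) with hS
  set g := fun w => |Dop f (Real.exp w)| with hg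
  have hg0 : ∀ w, 0 ≤ g w := fun w => abs_nonneg _
  have hδ0 : 2 ≤ 1 / δ := by rw [le_div_iff₀ hδ]; linarith
  have hmem : ∀ n ∈ S, (1 : ℝ) ≤ n ∧ Real.exp (1 / δ) < (n : ℝ) ∧ (n : ℝ) ≤ δ ^ 2 * x := by
    intro n hn
    rw [hS, mem_filter, mem_Icc] at hn
    exact ⟨by exact_mod_cast hn.1.1, hn.2⟩
  -- the short average for a single `n`
  have havg : ∀ n ∈ S, |Dop f (x / n)| ≤ E + 1 / δ *
      ∫ w in Set.Ioc 0 (U + 1), (Set.Ioc (Real.log (x / n)) (Real.log (x / n) + δ)).indicator g w := by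
    intro n hn
    obtain ⟨h1, h2, h3⟩ := hmem n hn
    have h0 : (0 : ℝ) < n := by linarith
    have hxn : 1 / δ ^ 2 ≤ x / n := by
      rw [div_le_div_iff₀ (by positivity) h0]; linarith
    have hxn1 : 1 ≤ x / n := by
      refine le_trans ?_ hxn
      rw [le_div_iff₀ (by positivity)]; nlinarith
    have hxn0 : 0 < x / n := by linarith
    set a := Real.log (x / n) with ha
    have ha0 : 0 ≤ a := Real.log_nonneg hxn1
    have haU : a ≤ U := Real.log_le_log hxn0 (div_le_self hx0.le h1)
    have hsub : Set.Ioc a (a + δ) ⊆ Set.Ioc 0 (U + 1) := by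
      apply Set.Ioc_subset_Ioc <;> linarith
    rw [MeasureTheory.setIntegral_indicator measurableSet_Ioc,
      Set.inter_eq_self_of_subset_right hsub]
    have hle : ∫ _w in Set.Ioc a (a + δ), (|Dop f (x / n)| - E) ≤ ∫ w in Set.Ioc a (a + δ), g w := by
      apply MeasureTheory.setIntegral_mono_on
      · exact MeasureTheory.integrableOn_const (by simp)
      · exact integrableOn_Dop f hf _ _
      · exact measurableSet_Ioc
      · intro w hw'
        have hL := Dop_lipschitz f hf (x / n) δ (w - a) hδ (by linarith) hxn
          (by linarith [hw'.1]) (by linarith [hw'.2])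
        have hexp : x / n * Real.exp (w - a) = Real.exp w := by
          rw [Real.exp_sub, ha, Real.exp_log hxn0]; field_simp
        rw [hexp] at hL
        have := abs_sub_abs_le_abs_sub (Dop f (x / n)) (Dop f (Real.exp w))
        rw [abs_sub_comm] at this
        simp only [hg]
        linarith
    simp only [MeasureTheory.integral_const, MeasurableSet.univ, MeasureTheory.measureReal_restrict_apply,
      Set.univ_inter, Real.volume_real_Ioc, smul_eq_mul] at hle
    rw [max_eq_left (by linarith), show a + δ - a = δ by ring] at hle
    have : |Dop f (x / n)| - E ≤ 1 / δ * ∫ w in Set.Ioc a (a + δ), g w := by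
      rw [one_div, inv_mul_eq_div, le_div_iff₀ hδ]; linarith
    linarith
  -- the weight attached to a given `w`
  have hweight : ∀ w, ∑ n ∈ S, vonMangoldt n / n *
      (Set.Ioc (Real.log (x / n)) (Real.log (x / n) + δ)).indicator g w ≤ 1098 * δ * g w := by
    intro w
    set z := x * Real.exp (-w) with hz
    have hz0 : 0 < z := by positivity
    have hcond : ∀ n ∈ S, w ∈ Set.Ioc (Real.log (x / n)) (Real.log (x / n) + δ) →
        n ∈ Ioc ⌊z⌋₊ ⌊z * Real.exp δ⌋₊ := by
      intro n hn hwn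
      obtain ⟨h1, h2, h3⟩ := hmem n hn
      have h0 : (0 : ℝ) < n := by linarith
      rw [Real.log_div hx0.ne' h0.ne'] at hwn
      rw [mem_Ioc, Nat.floor_lt hz0.le, Nat.le_floor_iff (by positivity)]
      constructor
      · rw [hz, ← Real.log_lt_log_iff (by positivity) h0, Real.log_mul (by positivity) (by positivity),
          Real.log_exp]
        linarith [hwn.1]
      · rw [hz, ← Real.log_le_log_iff h0 (by positivity), Real.log_mul (by positivity) (by positivity),
          Real.log_mul (by positivity) (by positivity), Real.log_exp, Real.log_exp]
        linarith [hwn.2]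
    by_cases hex : ∃ n ∈ S, w ∈ Set.Ioc (Real.log (x / n)) (Real.log (x / n) + δ)
    · obtain ⟨n, hn, hwn⟩ := hex
      have hc := hcond n hn hwn
      obtain ⟨h1, h2, h3⟩ := hmem n hn
      rw [mem_Ioc, Nat.le_floor_iff (by positivity)] at hc
      have hlz : 1 / δ - δ ≤ Real.log z := by
        have : Real.exp (1 / δ) ≤ z * Real.exp δ := h2.le.trans hc.2
        have := Real.log_le_log (Real.exp_pos _) this
        rw [Real.log_exp, Real.log_mul hz0.ne' (by positivity), Real.log_exp] at this
        linarith
      have hlz2 : 1 / (2 * δ) ≤ Real.log z := by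
        have : 1 / (2 * δ) = 1 / δ / 2 := by field_simp
        rw [this]; linarith
      have hlz1 : 1 ≤ Real.log z := by linarith
      have hz2 : 2 ≤ z := by
        have := Real.exp_le_exp.2 hlz1
        rw [Real.exp_log hz0] at this
        have := Real.add_one_le_exp (1 : ℝ)
        linarith
      have hwin := mangoldt_window z δ hz2 hδ.le (by linarith)
      have hinv : 1 / Real.log z ≤ 2 * δ := by
        rw [div_le_iff₀ (by linarith)]
        rw [div_le_iff₀ (by positivity)] at hlz2
        linarith
      calc _ ≤ ∑ n ∈ S, (if n ∈ Ioc ⌊z⌋₊ ⌊z * Real.exp δ⌋₊ then vonMangoldt n / n * g w else 0) := by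
            refine Finset.sum_le_sum fun n hn => ?_
            by_cases hwn : w ∈ Set.Ioc (Real.log (x / n)) (Real.log (x / n) + δ)
            · rw [Set.indicator_of_mem hwn, if_pos (hcond n hn hwn)]
            · rw [Set.indicator_of_notMem hwn, mul_zero]
              have := mul_nonneg (div_nonneg (vonMangoldt_nonneg (n := n)) (Nat.cast_nonneg (α := ℝ) n)) (hg0 w)
              split_ifs
              · exact this
              · exact le_rfl
        _ ≤ ∑ n ∈ Ioc ⌊z⌋₊ ⌊z * Real.exp δ⌋₊, vonMangoldt n / n * g w := by
            rw [← Finset.sum_filter]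
            apply Finset.sum_le_sum_of_subset_of_nonneg
            · intro n hn
              rw [mem_filter] at hn
              exact hn.2
            · intro n _ _
              exact mul_nonneg (div_nonneg vonMangoldt_nonneg (Nat.cast_nonneg _)) (hg0 w)
        _ ≤ (1098 * δ) * g w := by
            rw [← Finset.sum_mul]
            apply mul_le_mul_of_nonneg_right _ (hg0 w)
            linarith
    · push Not at hex
      rw [Finset.sum_eq_zero]
      · have := hg0 w
        positivity
      · intro n hn
        rw [Set.indicator_of_notMem (hex n hn), mul_zero]
  have hintg : ∀ n : ℕ, Integrable (fun w => vonMangoldt n / n *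
      (Set.Ioc (Real.log (x / n)) (Real.log (x / n) + δ)).indicator g w)
      (volume.restrict (Set.Ioc 0 (U + 1))) := by
    intro n
    apply Integrable.const_mul
    exact (integrableOn_Dop f hf 0 (U + 1)).indicator measurableSet_Ioc
  have hsumS : ∑ n ∈ S, vonMangoldt n / n ≤ U + 10 := by
    calc _ ≤ ∑ n ∈ Icc 1 ⌊w0 * x⌋₊, vonMangoldt n / n := by
          apply Finset.sum_le_sum_of_subset_of_nonneg (Finset.filter_subset _ _)
          intro n _ _
          exact div_nonneg vonMangoldt_nonneg (Nat.cast_nonneg _)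
      _ ≤ Real.log (w0 * x) + 9 := mangoldt_sum_le _ (by nlinarith)
      _ ≤ _ := by
          rw [Real.log_mul (by positivity) hx0.ne']
          have := Real.log_le_sub_one_of_pos w0_pos
          linarith
  calc _ ≤ ∑ n ∈ S, vonMangoldt n / n * (E + 1 / δ *
      ∫ w in Set.Ioc 0 (U + 1), (Set.Ioc (Real.log (x / n)) (Real.log (x / n) + δ)).indicator g w) := by
        refine Finset.sum_le_sum fun n hn => ?_
        exact mul_le_mul_of_nonneg_left (havg n hn)
          (div_nonneg vonMangoldt_nonneg (Nat.cast_nonneg _))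
    _ = E * ∑ n ∈ S, vonMangoldt n / n + 1 / δ * ∑ n ∈ S, ∫ w in Set.Ioc 0 (U + 1),
        vonMangoldt n / n * (Set.Ioc (Real.log (x / n)) (Real.log (x / n) + δ)).indicator g w := by
        rw [Finset.mul_sum, Finset.mul_sum, ← Finset.sum_add_distrib]
        refine Finset.sum_congr rfl fun n hn => ?_
        rw [MeasureTheory.integral_const_mul]; ring
    _ = E * ∑ n ∈ S, vonMangoldt n / n + 1 / δ * ∫ w in Set.Ioc 0 (U + 1), ∑ n ∈ S,
        vonMangoldt n / n * (Set.Ioc (Real.log (x / n)) (Real.log (x / n) + δ)).indicator g w := by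
        rw [MeasureTheory.integral_finsetSum]
        intro n _
        exact hintg n
    _ ≤ E * (U + 10) + 1 / δ * ∫ w in Set.Ioc 0 (U + 1), 1098 * δ * g w := by
        refine add_le_add (mul_le_mul_of_nonneg_left hsumS hE0)
          (mul_le_mul_of_nonneg_left ?_ (by positivity))
        apply MeasureTheory.integral_mono
        · apply MeasureTheory.integrable_finsetSum
          intro n _
          exact hintg n
        · exact (integrableOn_Dop f hf 0 (U + 1)).const_mul _
        · exact hweight
    _ = _ := by
        rw [MeasureTheory.integral_const_mul]; field_simp; ring

open ArithmeticFunction MeasureTheory in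
/-- A pointwise bound in terms of an average. The windows have length `δ = (log x)^{-1/2}`, which
makes all error terms `O((log x)^{3/5})`. -/
theorem Dop_le_average : ∃ C : ℝ, 0 < C ∧ ∀ f : ℕ → ℝ, (∀ n, f n ∈ Set.Icc (-1 : ℝ) 1) → IsMult f →
    ∀ x : ℝ, 4 ≤ Real.log x → 1 ≤ x → |Dop f x| * Real.log x ≤
      C * (∫ w in Set.Ioc 0 (Real.log x + 1), |Dop f (Real.exp w)|) +
        C * Real.log x ^ (3 / 5 : ℝ) := by
  obtain ⟨C0, hC0, hrec⟩ := Dop_recursion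
  refine ⟨C0 + 4000, by linarith, fun f hf hm x hU hx => ?_⟩
  have hw := w0_gt
  have hw2 := w0_lt
  have hx0 : 0 < x := by linarith
  have hr := hrec f hf hm x hx
  set U := Real.log x with hUdef
  have hU0 : 0 < U := by linarith
  set δ := (Real.sqrt U)⁻¹ with hδdef
  have hs2 : 2 ≤ Real.sqrt U := by
    rw [show (2 : ℝ) = Real.sqrt 4 by
      rw [show (4 : ℝ) = 2 ^ 2 by norm_num, Real.sqrt_sq (by norm_num)]]
    exact Real.sqrt_le_sqrt hU
  have hδ : 0 < δ := by positivity
  have hδ1 : δ ≤ 1 / 2 := by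
    rw [hδdef, one_div]; gcongr
  have h1δ : 1 / δ = Real.sqrt U := by rw [hδdef]; simp
  have hδ2 : δ ^ 2 = 1 / U := by rw [hδdef, inv_pow, Real.sq_sqrt hU0.le, one_div]
  have hxU : U ≤ x := by
    have := Real.log_le_sub_one_of_pos hx0
    linarith
  have hmid := sum_mangoldt_Dop_mid f hf x δ hδ hδ1 hx
  set I := ∫ w in Set.Ioc 0 (U + 1), |Dop f (Real.exp w)| with hI
  have hI0 : 0 ≤ I := MeasureTheory.integral_nonneg fun w => abs_nonneg _
  have hΛ : ∀ n : ℕ, 0 ≤ vonMangoldt n / (n : ℝ) := fun n =>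
    div_nonneg vonMangoldt_nonneg (Nat.cast_nonneg _)
  have hDa : |Dop (afun f) x| ≤ ∑ n ∈ Icc 1 ⌊w0 * x⌋₊, vonMangoldt n / n * |Dop f (x / n)| := by
    rw [Dop_afun f x hx0]
    refine (Finset.abs_sum_le_sum_abs _ _).trans (Finset.sum_le_sum fun n hn => ?_)
    rw [abs_mul, abs_div, Nat.abs_cast]
    gcongr
    exact abs_cpr_le f hf n
  have hsmall : ∑ n ∈ (Icc 1 ⌊w0 * x⌋₊).filter (fun n : ℕ => ¬ Real.exp (1 / δ) < (n : ℝ)),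
      vonMangoldt n / n ≤ Real.sqrt U + 9 := by
    calc _ ≤ ∑ n ∈ Icc 1 ⌊Real.exp (1 / δ)⌋₊, vonMangoldt n / n := by
          apply Finset.sum_le_sum_of_subset_of_nonneg
          · intro n hn
            rw [mem_filter, mem_Icc, not_lt] at hn
            rw [mem_Icc]
            exact ⟨hn.1.1, Nat.le_floor hn.2⟩
          · intro n _ _; exact hΛ n
      _ ≤ Real.log (Real.exp (1 / δ)) + 9 :=
          mangoldt_sum_le _ (Real.one_le_exp (by positivity))
      _ = _ := by rw [Real.log_exp, h1δ]
  have hbig : ∑ n ∈ (Icc 1 ⌊w0 * x⌋₊).filter (fun n : ℕ => ¬ (n : ℝ) ≤ δ ^ 2 * x),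
      vonMangoldt n / n ≤ Real.log U + 19 := by
    have hz1 : 1 ≤ δ ^ 2 * x := by
      rw [hδ2, one_div, inv_mul_eq_div, le_div_iff₀ hU0]; linarith
    have hz2 : δ ^ 2 * x ≤ w0 * x := by
      apply mul_le_mul_of_nonneg_right _ hx0.le
      nlinarith
    calc _ ≤ ∑ n ∈ Ioc ⌊δ ^ 2 * x⌋₊ ⌊w0 * x⌋₊, vonMangoldt n / n := by
          apply Finset.sum_le_sum_of_subset_of_nonneg
          · intro n hn
            rw [mem_filter, mem_Icc, not_le] at hn
            rw [mem_Ioc, Nat.floor_lt (by linarith)]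
            exact ⟨hn.2, hn.1.2⟩
          · intro n _ _; exact hΛ n
      _ ≤ Real.log (w0 * x / (δ ^ 2 * x)) + 18 := mangoldt_sum_Ioc _ _ hz1 hz2
      _ ≤ _ := by
          have : w0 * x / (δ ^ 2 * x) = w0 * U := by rw [hδ2]; field_simp
          rw [this, Real.log_mul w0_pos.ne' hU0.ne']
          have := Real.log_le_sub_one_of_pos w0_pos
          linarith
  have hsplit : ∑ n ∈ Icc 1 ⌊w0 * x⌋₊, vonMangoldt n / n * |Dop f (x / n)| ≤
      (Real.sqrt U + 9) + (Real.log U + 19) + (1098 * I +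
      100 * (δ * (1 + Real.log (1 / δ))) * (U + 10)) := by
    refine le_trans ?_ (add_le_add (add_le_add hsmall hbig) hmid)
    rw [Finset.sum_filter, Finset.sum_filter, Finset.sum_filter, ← Finset.sum_add_distrib,
      ← Finset.sum_add_distrib]
    refine Finset.sum_le_sum fun n hn => ?_
    rw [mem_Icc] at hn
    have h0 : (0 : ℝ) < n := by exact_mod_cast hn.1
    have hD := abs_Dop_le_one f hf (x / n) (by positivity)
    have h1 : vonMangoldt n / n * |Dop f (x / n)| ≤ vonMangoldt n / n :=
      mul_le_of_le_one_right (hΛ n) hD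
    have h2 := hΛ n
    have h3 : 0 ≤ vonMangoldt n / n * |Dop f (x / n)| := mul_nonneg h2 (abs_nonneg _)
    by_cases c1 : Real.exp (1 / δ) < (n : ℝ)
    · by_cases c2 : (n : ℝ) ≤ δ ^ 2 * x
      · simp only [c1, c2, not_true, if_true, if_false, and_self]
        linarith
      · simp only [c1, c2, not_true, not_false_iff, if_true, if_false, and_false]
        linarith
    · simp only [c1, not_false_iff, if_true, false_and, if_false]
      split_ifs <;> linarith
  set V := U ^ (3 / 5 : ℝ) with hV
  have hV1 : 1 ≤ V := Real.one_le_rpow (by linarith) (by norm_num)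
  have hsV : Real.sqrt U ≤ V := by
    rw [Real.sqrt_eq_rpow]
    exact Real.rpow_le_rpow_of_exponent_le (by linarith) (by norm_num)
  have hlU : Real.log U ≤ 10 * U ^ (1 / 10 : ℝ) := by
    have := Real.log_le_rpow_div hU0.le (show (0 : ℝ) < 1 / 10 by norm_num)
    calc _ ≤ _ := this
      _ = _ := by ring
  have hsl : Real.sqrt U * U ^ (1 / 10 : ℝ) = V := by
    rw [Real.sqrt_eq_rpow, ← Real.rpow_add hU0]; norm_num [hV]
  have hlU0 : 0 ≤ Real.log U := Real.log_nonneg (by linarith)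
  have hlV : Real.log U ≤ 10 * V := by
    have : U ^ (1 / 10 : ℝ) ≤ V := Real.rpow_le_rpow_of_exponent_le (by linarith) (by norm_num)
    linarith
  have hEl : 100 * (δ * (1 + Real.log (1 / δ))) * (U + 10) ≤ 2400 * V := by
    have e1 : δ * U = Real.sqrt U := by
      rw [hδdef, inv_mul_eq_div, div_eq_iff (by positivity)]
      exact (Real.mul_self_sqrt hU0.le).symm
    have e2 : Real.log (1 / δ) = Real.log U / 2 := by
      rw [h1δ, Real.log_sqrt hU0.le]
    rw [e2]
    calc _ ≤ 100 * (δ * (1 + Real.log U / 2)) * (4 * U) := by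
          gcongr
          linarith
      _ = 400 * (Real.sqrt U + Real.sqrt U * (Real.log U / 2)) := by rw [← e1]; ring
      _ ≤ 400 * (V + Real.sqrt U * (10 * U ^ (1 / 10 : ℝ) / 2)) := by gcongr
      _ = 400 * (V + 5 * (Real.sqrt U * U ^ (1 / 10 : ℝ))) := by ring
      _ = 2400 * V := by rw [hsl]; ring
  have h5 : |Dop f x| * U ≤ |Dop (afun f) x| + C0 := by
    have : |U * Dop f x| ≤ |Dop (afun f) x| + |U * Dop f x - Dop (afun f) x| := by
      have := abs_add_le (Dop (afun f) x) (U * Dop f x - Dop (afun f) x)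
      rwa [add_sub_cancel] at this
    rw [abs_mul, abs_of_pos hU0] at this
    linarith
  nlinarith [mul_nonneg hC0.le hI0, mul_nonneg hC0.le (sub_nonneg.2 hV1)]

/-! ### Plancherel's theorem for integrable, square integrable functions -/

open MeasureTheory FourierTransform in
/-- For `h ∈ L¹ ∩ L²` the abstract `L²` Fourier transform is the Fourier integral, so that
Plancherel's identity holds for the latter. -/
theorem plancherel_eLpNorm (h : ℝ → ℂ) (h1 : Integrable h) (h2 : MemLp h 2) :
    eLpNorm (𝓕 h) 2 volume = eLpNorm h 2 volume := by
  have hcont : Continuous (𝓕 h) :=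
    VectorFourier.fourierIntegral_continuous Real.continuous_fourierChar
      (L := innerₗ ℝ) continuous_inner h1
  set F : Lp ℂ 2 (volume : Measure ℝ) := 𝓕 (h2.toLp h) with hF
  have hae : (𝓕 h) =ᵐ[volume] F := by
    apply ae_eq_of_integral_contDiff_smul_eq
    · exact hcont.locallyIntegrable
    · exact (Lp.memLp F).locallyIntegrable (by norm_num)
    · intro g hg hgc
      have hgc' : HasCompactSupport (fun x => (g x : ℂ)) :=
        hgc.comp_left (g := fun x : ℝ => (x : ℂ)) (by simp)
      have hg' : ContDiff ℝ (⊤ : ℕ∞) (fun x => (g x : ℂ)) := Complex.ofRealCLM.contDiff.comp hg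
      set G : SchwartzMap ℝ ℂ := hgc'.toSchwartzMap hg' with hG
      have hGa : ∀ x, G x = (g x : ℂ) := fun x => rfl
      have e1 := congrArg (fun T => T G) (Lp.fourier_toTemperedDistribution_eq (h2.toLp h))
      simp only [TemperedDistribution.fourier_apply, Lp.toTemperedDistribution_apply] at e1
      have e2 : ∫ x, (𝓕 (G : ℝ → ℂ)) x • h x = ∫ x, G x • 𝓕 h x := by
        simpa using! (VectorFourier.integral_fourierIntegral_smul_eq_flip (L := innerₗ ℝ)
          Real.continuous_fourierChar continuous_inner G.integrable h1)
      have e3 : ∫ x, (𝓕 G) x • (h2.toLp h) x = ∫ x, (𝓕 (G : ℝ → ℂ)) x • h x := by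
        apply integral_congr_ae
        filter_upwards [h2.coeFn_toLp] with x hx
        rw [hx, SchwartzMap.fourier_coe]
      have e4 : ∀ v : ℝ → ℂ, ∫ x, g x • v x = ∫ x, G x • v x := by
        intro v
        apply integral_congr_ae
        filter_upwards with x
        rw [hGa]; simp
      rw [e4, e4, ← e2, ← e3, e1]
  rw [eLpNorm_congr_ae hae, ← Lp.enorm_def, ← eLpNorm_congr_ae h2.coeFn_toLp, ← Lp.enorm_def]
  rw [← ofReal_norm, ← ofReal_norm, hF, Lp.norm_fourier_eq]

open MeasureTheory FourierTransform in
theorem plancherel_integral (h : ℝ → ℂ) (h1 : Integrable h) (h2 : MemLp h 2) :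
    Integrable (fun x => ‖𝓕 h x‖ ^ 2) ∧ ∫ x, ‖𝓕 h x‖ ^ 2 = ∫ x, ‖h x‖ ^ 2 := by
  have hcont : Continuous (𝓕 h) :=
    VectorFourier.fourierIntegral_continuous Real.continuous_fourierChar
      (L := innerₗ ℝ) continuous_inner h1
  have e := plancherel_eLpNorm h h1 h2
  have hm : MemLp (𝓕 h) 2 := ⟨hcont.aestronglyMeasurable, by rw [e]; exact h2.2⟩
  refine ⟨hm.integrable_norm_pow (by norm_num), ?_⟩
  have a := hm.eLpNorm_eq_integral_rpow_norm (by norm_num) (by norm_num)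
  have b := h2.eLpNorm_eq_integral_rpow_norm (by norm_num) (by norm_num)
  rw [e, b] at a
  have p1 : 0 ≤ ∫ x, ‖𝓕 h x‖ ^ 2 := integral_nonneg fun x => by positivity
  have p2 : 0 ≤ ∫ x, ‖h x‖ ^ 2 := integral_nonneg fun x => by positivity
  simp only [ENNReal.toReal_ofNat, Real.rpow_ofNat] at a
  rw [ENNReal.ofReal_eq_ofReal_iff (by positivity) (by positivity)] at a
  exact ((Real.rpow_left_inj p2 p1 (by norm_num)).1 a).symm

/-! ### Bounds for the zeta function to the right of the line `Re s = 1` -/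

theorem cpow_neg_diff (s : ℂ) (hs : 1 < s.re) (k x y : ℝ) (hk : 1 ≤ k)
    (hx : k ≤ x) (hxy : x ≤ y) :
    ‖(y : ℂ) ^ (-s) - (x : ℂ) ^ (-s)‖ ≤ ‖s‖ / k ^ 2 * (y - x) := by
  have hs0 : -s ≠ 0 := by
    intro h
    have := congrArg Complex.re h
    simp at this; linarith
  have hd : ∀ u ∈ Set.Icc x y, HasDerivWithinAt (fun u : ℝ => (u : ℂ) ^ (-s))
      (-s * (u : ℂ) ^ (-s - 1)) (Set.Icc x y) u := by
    intro u hu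
    exact (hasDerivAt_ofReal_cpow_const (by linarith [hu.1]) hs0).hasDerivWithinAt
  have hb : ∀ u ∈ Set.Icc x y, ‖-s * (u : ℂ) ^ (-s - 1)‖ ≤ ‖s‖ / k ^ 2 := by
    intro u hu
    have hu0 : 0 < u := by linarith [hu.1]
    rw [norm_mul, norm_neg, Complex.norm_cpow_eq_rpow_re_of_pos hu0, div_eq_mul_inv]
    gcongr
    calc u ^ (-s - 1).re ≤ u ^ (-2 : ℝ) := by
          apply Real.rpow_le_rpow_of_exponent_le (by linarith [hu.1])
          simp; linarith
      _ ≤ k ^ (-2 : ℝ) := Real.rpow_le_rpow_of_nonpos (by linarith) (by linarith [hu.1])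
          (by norm_num)
      _ = (k ^ 2)⁻¹ := by rw [Real.rpow_neg (by linarith)]; simp
  have := (convex_Icc x y).norm_image_sub_le_of_norm_hasDerivWithin_le hd hb
    (Set.left_mem_Icc.2 hxy) (Set.right_mem_Icc.2 hxy)
  rwa [Real.norm_of_nonneg (by linarith)] at this

theorem zeta_term (s : ℂ) (hs : 1 < s.re) (k : ℝ) (hk : 1 ≤ k) :
    ‖((k + 1 : ℝ) : ℂ) ^ (-s) - (((k + 1 : ℝ) : ℂ) ^ (1 - s) / (1 - s) - (k : ℂ) ^ (1 - s) / (1 - s))‖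
      ≤ ‖s‖ / k ^ 2 := by
  have hs1 : -s ≠ -1 := by
    intro h
    have := congrArg Complex.re h
    simp at this; linarith
  have hd : ∀ u ∈ Set.Icc k (k + 1), HasDerivWithinAt
      (fun u : ℝ => (u : ℂ) ^ (-s + 1) / (-s + 1) - (u : ℂ) * ((k + 1 : ℝ) : ℂ) ^ (-s))
      ((u : ℂ) ^ (-s) - 1 * ((k + 1 : ℝ) : ℂ) ^ (-s)) (Set.Icc k (k + 1)) u := by
    intro u hu
    have h1 := hasDerivAt_ofReal_cpow_const' (x := u) (by linarith [hu.1]) hs1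
    have h2 : HasDerivAt (fun u : ℝ => (u : ℂ)) 1 u := Complex.ofRealCLM.hasDerivAt
    exact (h1.sub (h2.mul_const _)).hasDerivWithinAt
  have hb : ∀ u ∈ Set.Icc k (k + 1), ‖(u : ℂ) ^ (-s) - 1 * ((k + 1 : ℝ) : ℂ) ^ (-s)‖
      ≤ ‖s‖ / k ^ 2 := by
    intro u hu
    rw [one_mul, norm_sub_rev]
    refine (cpow_neg_diff s hs k u (k + 1) hk hu.1 hu.2).trans ?_
    have : 0 ≤ ‖s‖ / k ^ 2 := by positivity
    nlinarith [hu.1]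
  have := (convex_Icc k (k + 1)).norm_image_sub_le_of_norm_hasDerivWithin_le hd hb
    (Set.left_mem_Icc.2 (by linarith)) (Set.right_mem_Icc.2 (by linarith))
  rw [norm_sub_rev] at this
  refine le_trans (le_of_eq ?_) (this.trans (le_of_eq ?_))
  · congr 1
    rw [show -s + 1 = 1 - s by ring]
    push_cast
    ring
  · simp

theorem zeta_partial (s : ℂ) (hs : 1 < s.re) (N : ℕ) (hN : 1 ≤ N) (m : ℕ) :
    ‖(∑ n ∈ Icc 1 (N + m), (n : ℂ) ^ (-s)) - ((N + m : ℕ) : ℂ) ^ (1 - s) / (1 - s)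
      - ((∑ n ∈ Icc 1 N, (n : ℂ) ^ (-s)) - (N : ℂ) ^ (1 - s) / (1 - s))‖
      ≤ 2 * ‖s‖ * (1 / N - 1 / (N + m : ℕ)) := by
  induction m with
  | zero => simp
  | succ m ih =>
    have hNm : (1 : ℝ) ≤ (N + m : ℕ) := by exact_mod_cast (by omega : 1 ≤ N + m)
    have h := zeta_term s hs (N + m : ℕ) hNm
    rw [← add_assoc, Finset.sum_Icc_succ_top (by omega)]
    generalize (∑ n ∈ Icc 1 N, (n : ℂ) ^ (-s)) - (N : ℂ) ^ (1 - s) / (1 - s) = A at *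
    generalize (∑ n ∈ Icc 1 (N + m), (n : ℂ) ^ (-s)) = B at *
    have e : ((N + m + 1 : ℕ) : ℂ) = ((((N + m : ℕ) : ℝ) + 1 : ℝ) : ℂ) := by push_cast; ring
    have e' : ((N + m + 1 : ℕ) : ℝ) = ((N + m : ℕ) : ℝ) + 1 := by push_cast; ring
    rw [e, e']
    rw [Complex.ofReal_natCast] at h
    generalize ((N + m : ℕ) : ℝ) = k at *
    have hk : ‖s‖ / k ^ 2 ≤ 2 * ‖s‖ * (1 / k - 1 / (k + 1)) := by
      have : (1 : ℝ) / k ^ 2 ≤ 2 * (1 / k - 1 / (k + 1)) := by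
        rw [show 2 * (1 / k - 1 / (k + 1)) = 2 / (k * (k + 1)) by
          have : k ≠ 0 := by linarith
          have : k + 1 ≠ 0 := by linarith
          field_simp; ring]
        rw [div_le_div_iff₀ (by positivity) (by positivity)]
        nlinarith
      calc ‖s‖ / k ^ 2 = ‖s‖ * (1 / k ^ 2) := by ring
        _ ≤ ‖s‖ * (2 * (1 / k - 1 / (k + 1))) := by gcongr
        _ = _ := by ring
    refine le_trans (le_of_eq ?_) ((norm_add_le _ _).trans (add_le_add ih (h.trans hk)) |>.trans
      (le_of_eq (by ring)))
    congr 1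
    ring

/-- Euler–Maclaurin summation to first order. -/
theorem zeta_EM (s : ℂ) (hs : 1 < s.re) (N : ℕ) (hN : 1 ≤ N) :
    ‖riemannZeta s - ((∑ n ∈ Icc 1 N, (n : ℂ) ^ (-s)) + (N : ℂ) ^ (1 - s) / (s - 1))‖
      ≤ 2 * ‖s‖ / N := by
  have hs1 : s - 1 ≠ 0 := by
    intro h
    have := congrArg Complex.re h
    simp at this; linarith
  have hsum : HasSum (fun n : ℕ => (n : ℂ) ^ (-s)) (riemannZeta s) := by
    have h := (Complex.summable_one_div_nat_cpow.2 hs).hasSum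
    rw [← zeta_eq_tsum_one_div_nat_cpow hs] at h
    simpa [Complex.cpow_neg] using h
  have t1 : Filter.Tendsto (fun M : ℕ => ∑ n ∈ Icc 1 M, (n : ℂ) ^ (-s)) Filter.atTop
      (nhds (riemannZeta s)) := by
    have h := (Filter.tendsto_add_atTop_iff_nat 1).2 hsum.tendsto_sum_nat
    refine h.congr fun M => ?_
    rw [Finset.range_eq_Ico, Finset.sum_eq_sum_Ico_succ_bot (by omega)]
    have : ((0 : ℕ) : ℂ) ^ (-s) = 0 := by
      rw [Nat.cast_zero, Complex.zero_cpow]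
      intro h
      have := congrArg Complex.re h
      simp at this; linarith
    rw [this, zero_add]
    rfl
  have t2 : Filter.Tendsto (fun M : ℕ => (M : ℂ) ^ (1 - s) / (1 - s)) Filter.atTop
      (nhds 0) := by
    rw [show (0 : ℂ) = 0 / (1 - s) by simp]
    apply Filter.Tendsto.div_const
    rw [tendsto_zero_iff_norm_tendsto_zero]
    have := (tendsto_rpow_neg_atTop (show 0 < s.re - 1 by linarith)).comp
      (tendsto_natCast_atTop_atTop (R := ℝ))
    refine this.congr' ?_
    filter_upwards [Filter.eventually_ge_atTop 1] with M hM
    rw [Function.comp, Complex.norm_natCast_cpow_of_pos (by omega)]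
    congr 1
    simp
  have t3 := (((t1.sub t2).sub_const ((∑ n ∈ Icc 1 N, (n : ℂ) ^ (-s))
    - (N : ℂ) ^ (1 - s) / (1 - s))).norm)
  have t4 := (Filter.tendsto_add_atTop_iff_nat N).2 t3
  have := le_of_tendsto t4 (b := 2 * ‖s‖ / N) (Filter.Eventually.of_forall fun m => by
    have := zeta_partial s hs N hN m
    rw [add_comm N m] at this
    refine this.trans ?_
    rw [div_eq_mul_one_div (2 * ‖s‖)]
    gcongr
    linarith [show (0 : ℝ) ≤ 1 / ((m + N : ℕ) : ℝ) by positivity])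
  refine le_trans (le_of_eq ?_) this
  congr 1
  rw [show (N : ℂ) ^ (1 - s) / (s - 1) = - ((N : ℂ) ^ (1 - s) / (1 - s)) by
    rw [← div_neg]; ring_nf]
  ring

open Complex in
theorem sline_re (σ τ : ℝ) : (1 + σ + I * τ : ℂ).re = 1 + σ := by simp
open Complex in
theorem sline_norm (σ τ : ℝ) (h0 : 0 < σ) (h1 : σ ≤ 1) : ‖(1 + σ + I * τ : ℂ)‖ ≤ 2 + |τ| := by
  refine (norm_add_le _ _).trans ?_
  have : ‖(1 + σ : ℂ)‖ = 1 + σ := by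
    rw [show (1 + σ : ℂ) = ((1 + σ : ℝ) : ℂ) by push_cast; ring, norm_real, Real.norm_of_nonneg (by linarith)]
  rw [this]
  simp
  linarith
open Complex in
theorem sline_sub (σ τ : ℝ) : |τ| ≤ ‖(1 + σ + I * τ : ℂ) - 1‖ := by
  have := abs_im_le_norm ((1 + σ + I * τ : ℂ) - 1)
  simpa using this

theorem sum_inv_nat_le (N : ℕ) : ∑ n ∈ Icc 1 N, (1 : ℝ) / n ≤ 1 + Real.log N := by
  have := harmonic_le_one_add_log N
  rw [harmonic_eq_sum_Icc] at this
  push_cast at this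
  simpa using this

open Complex in
theorem nat_cpow_norm (σ τ : ℝ) (n : ℕ) (hn : 1 ≤ n) :
    ‖(n : ℂ) ^ (-(1 + σ + I * τ : ℂ))‖ = (1 : ℝ) / n * (n : ℝ) ^ (-σ) := by
  rw [norm_natCast_cpow_of_pos (by omega), neg_re, sline_re, neg_add,
    Real.rpow_add (by exact_mod_cast hn), Real.rpow_neg_one, one_div]

open Complex in
/-- The bound `ζ(1+σ+iτ) ≪ log |τ|`, uniformly in `σ`. -/
theorem zeta_upper (σ τ : ℝ) (h0 : 0 < σ) (h1 : σ ≤ 1) (hτ : 2 ≤ |τ|) :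
    ‖riemannZeta (1 + σ + I * τ)‖ ≤ Real.log |τ| + 7 := by
  set s : ℂ := 1 + σ + I * τ with hs
  set N := ⌈|τ|⌉₊ with hN
  have hN1 : |τ| ≤ N := Nat.le_ceil _
  have hN2 : (N : ℝ) ≤ 2 * |τ| := by
    have := Nat.ceil_lt_add_one (abs_nonneg τ); linarith
  have hNp : 1 ≤ N := by
    have : (1 : ℝ) ≤ N := by linarith
    exact_mod_cast this
  have hNr : (1 : ℝ) ≤ N := by exact_mod_cast hNp
  have hsre : 1 < s.re := by rw [hs, sline_re]; linarith
  have hE := zeta_EM s hsre N hNp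
  have a1 : ‖∑ n ∈ Icc 1 N, (n : ℂ) ^ (-s)‖ ≤ 2 + Real.log |τ| := by
    refine (norm_sum_le _ _).trans ?_
    calc ∑ n ∈ Icc 1 N, ‖(n : ℂ) ^ (-s)‖ ≤ ∑ n ∈ Icc 1 N, (1 : ℝ) / n := by
          apply sum_le_sum; intro n hn
          have hn1 := (mem_Icc.1 hn).1
          rw [hs, nat_cpow_norm σ τ n hn1]
          refine mul_le_of_le_one_right (by positivity) ?_
          exact Real.rpow_le_one_of_one_le_of_nonpos (by exact_mod_cast hn1) (by linarith)
      _ ≤ 1 + Real.log N := sum_inv_nat_le N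
      _ ≤ 1 + Real.log (2 * |τ|) := by gcongr
      _ ≤ 2 + Real.log |τ| := by
          rw [Real.log_mul (by norm_num) (by linarith)]
          linarith [Real.log_two_lt_d9]
  have a2 : ‖(N : ℂ) ^ (1 - s) / (s - 1)‖ ≤ 1 := by
    rw [norm_div, norm_natCast_cpow_of_pos (by omega)]
    have h2 : (2 : ℝ) ≤ ‖s - 1‖ := hτ.trans (sline_sub σ τ)
    rw [div_le_one (by linarith)]
    have : (N : ℝ) ^ (1 - s).re ≤ 1 := Real.rpow_le_one_of_one_le_of_nonpos hNr (by
      rw [sub_re, hs, sline_re]; simp; linarith)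
    linarith
  have a3 : 2 * ‖s‖ / N ≤ 4 := by
    rw [div_le_iff₀ (by linarith)]
    have := sline_norm σ τ h0 h1
    linarith
  have e : riemannZeta s = (riemannZeta s - ((∑ n ∈ Icc 1 N, (n : ℂ) ^ (-s))
      + (N : ℂ) ^ (1 - s) / (s - 1))) + ((∑ n ∈ Icc 1 N, (n : ℂ) ^ (-s))
      + (N : ℂ) ^ (1 - s) / (s - 1)) := by ring
  rw [e]
  refine (norm_add_le _ _).trans ?_
  have := norm_add_le (∑ n ∈ Icc 1 N, (n : ℂ) ^ (-s)) ((N : ℂ) ^ (1 - s) / (s - 1))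
  linarith

theorem one_sub_rpow_le (x δ : ℝ) (hx : 1 ≤ x) : 1 - x ^ (-δ) ≤ δ * Real.log x := by
  have h0 : 0 < x := by linarith
  rw [Real.rpow_def_of_pos h0]
  have := Real.add_one_le_exp (Real.log x * -δ)
  linarith

open Complex in
theorem nat_cpow_diff (σ σ' τ : ℝ) (h0 : 0 ≤ σ) (h : σ ≤ σ') (n : ℕ) (hn : 1 ≤ n) :
    ‖(n : ℂ) ^ (-(σ + I * τ : ℂ)) - (n : ℂ) ^ (-(σ' + I * τ : ℂ))‖
      ≤ (σ' - σ) * Real.log n := by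
  have hn0 : (n : ℂ) ≠ 0 := by exact_mod_cast (by omega : n ≠ 0)
  have hn1 : (1 : ℝ) ≤ n := by exact_mod_cast hn
  have e : (n : ℂ) ^ (-(σ + I * τ : ℂ)) - (n : ℂ) ^ (-(σ' + I * τ : ℂ))
      = (n : ℂ) ^ (-(σ + I * τ : ℂ)) * ((1 - (n : ℝ) ^ (-(σ' - σ)) : ℝ) : ℂ) := by
    push_cast
    rw [Complex.ofReal_cpow (by positivity), mul_sub, mul_one, ofReal_natCast, ← cpow_add _ _ hn0]
    congr 2
    push_cast; ring
  rw [e, norm_mul, norm_natCast_cpow_of_pos (by omega), norm_real, Real.norm_of_nonneg]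
  · have : (n : ℝ) ^ (-(σ + I * τ : ℂ)).re ≤ 1 :=
      Real.rpow_le_one_of_one_le_of_nonpos hn1 (by simp; linarith)
    have h2 := one_sub_rpow_le n (σ' - σ) hn1
    have h3 : (n : ℝ) ^ (-(σ' - σ)) ≤ 1 :=
      Real.rpow_le_one_of_one_le_of_nonpos hn1 (by linarith)
    nlinarith
  · have h3 : (n : ℝ) ^ (-(σ' - σ)) ≤ 1 :=
      Real.rpow_le_one_of_one_le_of_nonpos hn1 (by linarith)
    linarith

open Complex in
/-- Slow variation of `ζ` in the real direction; the truncation point `N ≈ |τ| / σ'` makes the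
Euler–Maclaurin error negligible. -/
theorem zeta_diff (σ σ' τ : ℝ) (h0 : 0 < σ) (h : σ ≤ σ') (h1 : σ' ≤ 1) (hτ : 2 ≤ |τ|) :
    ‖riemannZeta (1 + σ + I * τ) - riemannZeta (1 + σ' + I * τ)‖
      ≤ 20 * σ' * (1 + Real.log (2 * |τ| / σ')) ^ 2 := by
  set s : ℂ := 1 + σ + I * τ with hs
  set s' : ℂ := 1 + σ' + I * τ with hs'
  have hσ' : 0 < σ' := by linarith
  set N := ⌈|τ| / σ'⌉₊ with hN
  have hq : 2 ≤ |τ| / σ' := by rw [le_div_iff₀ hσ']; linarith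
  have hN1 : |τ| / σ' ≤ N := Nat.le_ceil _
  have hN2 : (N : ℝ) ≤ 2 * |τ| / σ' := by
    have := Nat.ceil_lt_add_one (by positivity : 0 ≤ |τ| / σ')
    rw [mul_div_assoc]; linarith
  have hNr : (1 : ℝ) ≤ N := by linarith
  have hNp : 1 ≤ N := by exact_mod_cast hNr
  have hE := zeta_EM s (by rw [hs, sline_re]; linarith) N hNp
  have hE' := zeta_EM s' (by rw [hs', sline_re]; linarith) N hNp
  set Λ := 1 + Real.log (2 * |τ| / σ') with hΛ
  have hlogN : Real.log N ≤ Λ - 1 := by rw [hΛ]; simpa using Real.log_le_log (by linarith) hN2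
  have hlogN0 : 0 ≤ Real.log N := Real.log_nonneg hNr
  have a1 : ‖∑ n ∈ Icc 1 N, (n : ℂ) ^ (-s) - ∑ n ∈ Icc 1 N, (n : ℂ) ^ (-s')‖ ≤ σ' * Λ ^ 2 := by
    rw [← sum_sub_distrib]
    refine (norm_sum_le _ _).trans ?_
    calc ∑ n ∈ Icc 1 N, ‖(n : ℂ) ^ (-s) - (n : ℂ) ^ (-s')‖
        ≤ ∑ n ∈ Icc 1 N, (1 : ℝ) / n * (σ' * Real.log N) := by
          apply sum_le_sum; intro n hn
          have hn1 := (mem_Icc.1 hn).1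
          have hn0 : (n : ℂ) ≠ 0 := by exact_mod_cast (by omega : n ≠ 0)
          rw [show -s = -1 + -(σ + I * τ) by rw [hs]; ring,
            show -s' = -1 + -(σ' + I * τ) by rw [hs']; ring, cpow_add _ _ hn0, cpow_add _ _ hn0,
            ← mul_sub, norm_mul]
          have hd := nat_cpow_diff σ σ' τ h0.le h n hn1
          have hl : Real.log n ≤ Real.log N := Real.log_le_log (by exact_mod_cast hn1)
            (by exact_mod_cast (mem_Icc.1 hn).2)
          have hl0 : 0 ≤ Real.log n := Real.log_nonneg (by exact_mod_cast hn1)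
          rw [cpow_neg_one, norm_inv, norm_natCast, one_div]
          gcongr
          refine hd.trans ?_
          nlinarith
      _ = (∑ n ∈ Icc 1 N, (1 : ℝ) / n) * (σ' * Real.log N) := by rw [sum_mul]
      _ ≤ Λ * (σ' * Λ) := by
          have := sum_inv_nat_le N
          gcongr <;> linarith
      _ = _ := by ring
  have hden : ∀ u : ℝ, |τ| ≤ ‖(u + I * τ : ℂ)‖ := by
    intro u
    have := abs_im_le_norm (u + I * τ : ℂ)
    simpa using this
  have hne : ∀ u : ℝ, (u + I * τ : ℂ) ≠ 0 := by
    intro u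
    have := hden u
    rw [← norm_pos_iff]; linarith
  have a2 : ‖(N : ℂ) ^ (1 - s) / (s - 1) - (N : ℂ) ^ (1 - s') / (s' - 1)‖ ≤ σ' * Λ := by
    rw [show 1 - s = -(σ + I * τ) by rw [hs]; ring, show s - 1 = σ + I * τ by rw [hs]; ring,
      show 1 - s' = -(σ' + I * τ) by rw [hs']; ring, show s' - 1 = σ' + I * τ by rw [hs']; ring]
    have hd := nat_cpow_diff σ σ' τ h0.le h N hNp
    have hX : ‖(N : ℂ) ^ (-(σ + I * τ : ℂ))‖ ≤ 1 := by
      rw [norm_natCast_cpow_of_pos (by omega)]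
      exact Real.rpow_le_one_of_one_le_of_nonpos hNr (by simp; linarith)
    generalize (N : ℂ) ^ (-(σ + I * τ : ℂ)) = X at *
    generalize (N : ℂ) ^ (-(σ' + I * τ : ℂ)) = Y at *
    have e : X / (σ + I * τ) - Y / (σ' + I * τ) = (X - Y) / (σ' + I * τ)
        + X * (((σ' - σ : ℝ) : ℂ) / ((σ + I * τ) * (σ' + I * τ))) := by
      have := hne σ
      have := hne σ'
      field_simp
      push_cast
      ring
    rw [e]
    refine (norm_add_le _ _).trans ?_
    rw [norm_div, norm_mul, norm_div, norm_mul, norm_real, Real.norm_of_nonneg (by linarith)]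
    have b1 : ‖X - Y‖ / ‖(σ' + I * τ : ℂ)‖ ≤ σ' * (Λ - 1) := by
      rw [div_le_iff₀ (by linarith [hden σ'])]
      have : (σ' - σ) * Real.log N ≤ σ' * (Λ - 1) := by
        apply mul_le_mul <;> linarith
      have h0 : 0 ≤ σ' * (Λ - 1) := mul_nonneg hσ'.le (by linarith)
      nlinarith [hden σ']
    have b2 : ‖X‖ * ((σ' - σ) / (‖(σ + I * τ : ℂ)‖ * ‖(σ' + I * τ : ℂ)‖)) ≤ 1 * σ' := by
      have p1 : 1 ≤ ‖(σ + I * τ : ℂ)‖ := by linarith [hden σ]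
      have p2 : 1 ≤ ‖(σ' + I * τ : ℂ)‖ := by linarith [hden σ']
      have : (σ' - σ) / (‖(σ + I * τ : ℂ)‖ * ‖(σ' + I * τ : ℂ)‖) ≤ σ' := by
        rw [div_le_iff₀ (by positivity)]
        nlinarith [mul_le_mul p1 p2 (by norm_num) (by linarith)]
      have h3 : 0 ≤ (σ' - σ) / (‖(σ + I * τ : ℂ)‖ * ‖(σ' + I * τ : ℂ)‖) := by
        apply div_nonneg <;> [linarith; positivity]
      exact mul_le_mul hX this h3 (by norm_num)
    linarith
  have a3 : ∀ u : ℝ, 0 < u → u ≤ 1 → 2 * ‖(1 + u + I * τ : ℂ)‖ / N ≤ 4 * σ' := by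
    intro u hu hu1
    rw [div_le_iff₀ (by linarith)]
    have := sline_norm u τ hu hu1
    rw [div_le_iff₀ hσ'] at hN1
    linarith
  have a4 := hE.trans (a3 σ h0 (by linarith))
  have a5 := hE'.trans (a3 σ' hσ' h1)
  have hΛ1 : 1 ≤ Λ := by linarith
  have e : riemannZeta s - riemannZeta s' = (riemannZeta s - ((∑ n ∈ Icc 1 N, (n : ℂ) ^ (-s))
      + (N : ℂ) ^ (1 - s) / (s - 1))) - (riemannZeta s' - ((∑ n ∈ Icc 1 N, (n : ℂ) ^ (-s'))
      + (N : ℂ) ^ (1 - s') / (s' - 1))) + ((∑ n ∈ Icc 1 N, (n : ℂ) ^ (-s)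
      - ∑ n ∈ Icc 1 N, (n : ℂ) ^ (-s'))
      + ((N : ℂ) ^ (1 - s) / (s - 1) - (N : ℂ) ^ (1 - s') / (s' - 1))) := by ring
  rw [e]
  refine (norm_add_le _ _).trans ((add_le_add (norm_sub_le _ _) (norm_add_le _ _)).trans ?_)
  have hf : 8 * σ' + σ' * Λ ^ 2 + σ' * Λ ≤ 20 * σ' * Λ ^ 2 := by
    nlinarith [mul_nonneg hσ'.le (sub_nonneg.2 hΛ1), mul_nonneg hσ'.le (mul_nonneg (sub_nonneg.2 hΛ1) (sub_nonneg.2 hΛ1))]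
  linarith

open Complex in
/-- The inequality behind the classical zero-free region, `3 + 4 cos θ + cos 2θ ≥ 0`. -/
theorem zeta_341 (σ τ : ℝ) (h0 : 0 < σ) :
    1 ≤ ‖riemannZeta (1 + σ)‖ ^ 3 * ‖riemannZeta (1 + σ + I * τ)‖ ^ 4
      * ‖riemannZeta (1 + σ + I * (2 * τ : ℝ))‖ := by
  have := DirichletCharacter.norm_LFunction_product_ge_one (N := 1) (1 : DirichletCharacter ℂ 1)
    h0 τ
  rw [DirichletCharacter.LFunctionTrivChar, one_pow,
    DirichletCharacter.LFunction_modOne_eq, norm_mul, norm_mul, norm_pow, norm_pow] at this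
  refine this.le.trans (le_of_eq ?_)
  congr 4
  push_cast; ring

open Complex in
theorem zeta_real_upper (σ : ℝ) (h0 : 0 < σ) (h1 : σ ≤ 1) : ‖riemannZeta (1 + σ)‖ ≤ 6 / σ := by
  have h := zeta_EM (1 + σ : ℂ) (by simpa using h0) 1 le_rfl
  have e : ‖(1 + σ : ℂ)‖ = 1 + σ := by
    rw [show (1 + σ : ℂ) = ((1 + σ : ℝ) : ℂ) by push_cast; ring, norm_real,
      Real.norm_of_nonneg (by linarith)]
  simp only [Icc_self, sum_singleton, Nat.cast_one, one_cpow, add_sub_cancel_left, div_one, e] at h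
  have h2 : ‖(1 + 1 / σ : ℂ)‖ = 1 + 1 / σ := by
    rw [show (1 + 1 / σ : ℂ) = ((1 + 1 / σ : ℝ) : ℂ) by push_cast; ring, norm_real,
      Real.norm_of_nonneg (by positivity)]
  have h3 := norm_add_le (riemannZeta (1 + σ) - (1 + 1 / σ)) (1 + 1 / σ : ℂ)
  rw [sub_add_cancel, h2] at h3
  have : 6 / σ = 5 * (1 / σ) + 1 / σ := by ring
  have h4 : 1 ≤ 1 / σ := by rw [le_div_iff₀ h0]; linarith
  linarith

open Complex in
theorem zeta_lower_pow (σ τ : ℝ) (h0 : 0 < σ) (h1 : σ ≤ 1) (hτ : 2 ≤ |τ|) :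
    σ ^ 3 ≤ 216 * (Real.log |τ| + 8) * ‖riemannZeta (1 + σ + I * τ)‖ ^ 4 := by
  have h := zeta_341 σ τ h0
  have h2 := zeta_upper σ (2 * τ) h0 h1 (by rw [abs_mul]; norm_num; linarith)
  have h3 := zeta_real_upper σ h0 h1
  rw [abs_mul, abs_two, Real.log_mul (by norm_num) (by linarith)] at h2
  have h4 : Real.log 2 ≤ 1 := by linarith [Real.log_two_lt_d9]
  have hl : 0 ≤ Real.log |τ| := Real.log_nonneg (by linarith)
  generalize ‖riemannZeta (1 + σ + I * τ)‖ = Z at *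
  have : 1 ≤ (6 / σ) ^ 3 * Z ^ 4 * (Real.log |τ| + 8) := by
    refine h.trans ?_
    have : 0 ≤ Z ^ 4 := by positivity
    gcongr
    linarith
  have e : σ ^ 3 * ((6 / σ) ^ 3 * Z ^ 4 * (Real.log |τ| + 8))
    = 216 * (Real.log |τ| + 8) * Z ^ 4 := by field_simp; norm_num; ring
  rw [← e]
  exact le_mul_of_one_le_right (by positivity) this

open Complex in
/-- A lower bound `|ζ(1+σ+iτ)| ≥ |τ|^{-1/10}` for large `|τ|`. The substitution `|τ| = y ^ 320` keeps
the exponents integral. For `σ ≥ y ^ (-32)` the bound follows from `zeta_lower_pow`, and for smaller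
`σ` by moving to `σ = y ^ (-32)` with `zeta_diff`. -/
theorem zeta_lower (σ τ y : ℝ) (h0 : 0 < σ) (h1 : σ ≤ 1) (hy : 10000 ≤ y)
    (hτ : |τ| = y ^ 320) : (y ^ 32)⁻¹ ≤ ‖riemannZeta (1 + σ + I * τ)‖ := by
  have hy1 : 1 ≤ y := by linarith
  have hτ2 : 2 ≤ |τ| := by
    rw [hτ]
    have : y ^ 1 ≤ y ^ 320 := pow_le_pow_right₀ hy1 (by norm_num)
    linarith
  have hlog : Real.log |τ| ≤ 320 * y := by
    rw [hτ, Real.log_pow]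
    have := Real.log_le_self (show 0 ≤ y by linarith)
    push_cast; linarith
  have hl0 : 0 ≤ Real.log |τ| := Real.log_nonneg (by linarith)
  have key : ∀ u : ℝ, u ≤ 1 → (y ^ 32)⁻¹ ≤ u →
      (y ^ 28)⁻¹ ≤ ‖riemannZeta (1 + u + I * τ)‖ := by
    intro u hu hu2
    have hu0 : 0 < u := lt_of_lt_of_le (by positivity) hu2
    have h := zeta_lower_pow u τ hu0 hu hτ2
    have h3 : ((y ^ 32)⁻¹) ^ 3 ≤ u ^ 3 := pow_le_pow_left₀ (by positivity) hu2 3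
    have h4 : 216 * (Real.log |τ| + 8) ≤ y ^ 16 := by
      have : y ^ 3 ≤ y ^ 16 := pow_le_pow_right₀ hy1 (by norm_num)
      nlinarith [sq_nonneg y]
    have hZ := norm_nonneg (riemannZeta (1 + u + I * τ))
    generalize ‖riemannZeta (1 + u + I * τ)‖ = Z at *
    by_contra hcon
    push Not at hcon
    have h5 : Z ^ 4 < ((y ^ 28)⁻¹) ^ 4 := pow_lt_pow_left₀ hcon hZ (by norm_num)
    have h6 : ((y ^ 32)⁻¹) ^ 3 < y ^ 16 * ((y ^ 28)⁻¹) ^ 4 := by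
      refine (h3.trans h).trans_lt ?_
      refine lt_of_le_of_lt (mul_le_mul_of_nonneg_right h4 (by positivity)) ?_
      gcongr
    have e : y ^ 16 * ((y ^ 28)⁻¹) ^ 4 = ((y ^ 32)⁻¹) ^ 3 := by
      have : y ≠ 0 := by linarith
      field_simp
    linarith
  have hc : 2 * (y ^ 32)⁻¹ ≤ (y ^ 28)⁻¹ := by
    have e : (y ^ 28)⁻¹ = y ^ 4 * (y ^ 32)⁻¹ := by
      have : y ≠ 0 := by linarith
      field_simp
    rw [e]
    gcongr
    have : y ^ 1 ≤ y ^ 4 := pow_le_pow_right₀ hy1 (by norm_num)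
    linarith
  have hp : 0 < (y ^ 32)⁻¹ := by positivity
  rcases le_total (y ^ 32)⁻¹ σ with hσ | hσ
  · have := key σ h1 hσ
    linarith
  · have hle1 : (y ^ 32)⁻¹ ≤ 1 := inv_le_one_of_one_le₀ (one_le_pow₀ hy1)
    have h2 := key (y ^ 32)⁻¹ hle1 le_rfl
    have hd := zeta_diff σ (y ^ 32)⁻¹ τ h0 hσ hle1 hτ2
    have h5 : 1 + Real.log (2 * |τ| / (y ^ 32)⁻¹) ≤ 354 * y := by
      rw [hτ, div_inv_eq_mul, mul_assoc, ← pow_add, Real.log_mul (by norm_num) (by positivity),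
        Real.log_pow]
      have := Real.log_le_self (show 0 ≤ y by linarith)
      push_cast
      linarith [Real.log_two_lt_d9]
    have h6 : 0 ≤ 1 + Real.log (2 * |τ| / (y ^ 32)⁻¹) := by
      rw [hτ, div_inv_eq_mul, mul_assoc, ← pow_add]
      have : 0 ≤ Real.log (2 * y ^ (320 + 32)) := by
        apply Real.log_nonneg
        have := one_le_pow₀ hy1 (n := 320 + 32)
        linarith
      linarith
    have h7 : 20 * (y ^ 32)⁻¹ * (1 + Real.log (2 * |τ| / (y ^ 32)⁻¹)) ^ 2 ≤ (y ^ 28)⁻¹ / 2 := by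
      calc _ ≤ 20 * (y ^ 32)⁻¹ * (354 * y) ^ 2 := by gcongr
        _ = (y ^ 32)⁻¹ * (2506320 * y ^ 2) := by ring
        _ ≤ (y ^ 32)⁻¹ * (y ^ 4 / 2) := by
            gcongr
            nlinarith [mul_le_mul hy hy (by norm_num) (by linarith), sq_nonneg y]
        _ = _ := by
            have : y ≠ 0 := by linarith
            field_simp
    have h8 := norm_sub_norm_le (riemannZeta (1 + (((y ^ 32)⁻¹ : ℝ) : ℂ) + I * τ))
      (riemannZeta (1 + σ + I * τ))
    rw [norm_sub_rev] at h8
    linarith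

open Complex in
/-- For bounded `τ` the claim is compactness: `(s - 1) ζ(s)` has no zero on `1 ≤ Re s`. -/
theorem zeta_log_compact (T : ℝ) (hT : 0 < T) : ∃ C > 0, ∀ σ τ : ℝ, 0 < σ → σ ≤ 1 → τ ≠ 0 → |τ| ≤ T →
    |Real.log ‖riemannZeta (1 + σ + I * τ)‖| ≤ C + Real.posLog |τ|⁻¹ := by
  set K : Set ℂ := Set.Icc 1 2 ×ℂ Set.Icc (-T) T with hK
  have hKc : IsCompact K := isCompact_Icc.reProdIm isCompact_Icc
  have hne : ∀ s ∈ K, riemannZeta₁ s ≠ 0 := by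
    intro s hs
    rcases eq_or_ne s 1 with rfl | h1
    · simp
    · have := riemannZeta_ne_zero_of_one_le_re (s := s) hs.1.1
      rw [riemannZeta_eq_inv_sub_mul h1] at this
      exact right_ne_zero_of_mul this
  have hcont : ContinuousOn (fun s => Real.log ‖riemannZeta₁ s‖) K := by
    apply ContinuousOn.log
    · exact (differentiable_riemannZeta₁.continuous.norm).continuousOn
    · intro s hs; simpa using hne s hs
  obtain ⟨B, hB⟩ := hKc.exists_bound_of_continuousOn hcont
  refine ⟨|B| + Real.log (1 + T) + 1, ?_, ?_⟩
  · have := Real.log_nonneg (show 1 ≤ 1 + T by linarith)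
    positivity
  · intro σ τ h0 h1 hτ0 hτ
    set s : ℂ := 1 + σ + I * τ with hs
    have hsK : s ∈ K := by
      refine ⟨?_, ?_⟩
      · simp [hs]; constructor <;> linarith
      · simp [hs]; exact abs_le.1 hτ
    have hpos : 0 < |τ| := abs_pos.2 hτ0
    have hlow : |τ| ≤ ‖s - 1‖ := sline_sub σ τ
    have hup : ‖s - 1‖ ≤ 1 + T := by
      rw [show s - 1 = σ + I * τ by rw [hs]; ring]
      refine (norm_add_le _ _).trans ?_
      simp [abs_of_pos h0]; linarith
    have hs1 : s ≠ 1 := by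
      intro h; rw [h] at hlow; simp at hlow; exact hτ0 hlow
    have hb := hB s hsK
    rw [riemannZeta_eq_inv_sub_mul hs1, norm_mul, norm_inv, Real.log_mul
      (inv_ne_zero (norm_ne_zero_iff.2 (sub_ne_zero.2 hs1)))
      (by simpa using hne s hsK), Real.log_inv]
    have l1 : Real.log ‖s - 1‖ ≤ Real.log (1 + T) := Real.log_le_log (by linarith) hup
    have l2 : - Real.posLog |τ|⁻¹ ≤ Real.log ‖s - 1‖ := by
      have := Real.log_le_log hpos hlow
      have h3 : Real.log |τ|⁻¹ ≤ Real.posLog |τ|⁻¹ := le_max_right _ _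
      rw [Real.log_inv] at h3
      linarith
    have l3 : 0 ≤ Real.posLog |τ|⁻¹ := Real.posLog_nonneg
    have l4 : 0 ≤ Real.log (1 + T) := Real.log_nonneg (by linarith)
    rw [Real.norm_eq_abs, abs_le] at hb
    rw [abs_le]
    constructor <;> linarith [le_abs_self B]

open Complex in
/-- To the right of the line `Re s = 1` the size of `log |ζ|` is controlled by the pole at `1` and,
at large height, by a small multiple of `log |τ|`. -/
theorem zeta_log_bound : ∃ C > 0, ∀ σ τ : ℝ, 0 < σ → σ ≤ 1 → τ ≠ 0 →
    |Real.log ‖riemannZeta (1 + σ + I * τ)‖| ≤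
      C + Real.posLog |τ|⁻¹ + (1 / 10) * Real.posLog |τ| := by
  obtain ⟨C, hC, h⟩ := zeta_log_compact ((10000 : ℝ) ^ (320 : ℝ)) (by positivity)
  refine ⟨C, hC, ?_⟩
  intro σ τ h0 h1 hτ0
  have p1 : 0 ≤ Real.posLog |τ| := Real.posLog_nonneg
  have p2 : 0 ≤ Real.posLog |τ|⁻¹ := Real.posLog_nonneg
  rcases le_total |τ| ((10000 : ℝ) ^ (320 : ℝ)) with hτ | hτ
  · have := h σ τ h0 h1 hτ0 hτ
    linarith
  · set y : ℝ := |τ| ^ ((320 : ℝ)⁻¹) with hy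
    have hyτ : |τ| = y ^ 320 := by
      rw [hy, ← Real.rpow_natCast, ← Real.rpow_mul (abs_nonneg _)]
      norm_num
    have hy1 : 10000 ≤ y := by
      have := Real.rpow_le_rpow (by positivity) hτ (show (0 : ℝ) ≤ 320⁻¹ by norm_num)
      rwa [← Real.rpow_mul (by norm_num), mul_inv_cancel₀ (by norm_num), Real.rpow_one] at this
    clear hτ h
    have hτ1 : 2 ≤ |τ| := by
      rw [hyτ]
      have : y ^ 1 ≤ y ^ 320 := pow_le_pow_right₀ (by linarith) (by norm_num)
      linarith
    have hl : Real.log |τ| = 320 * Real.log y := by rw [hyτ, Real.log_pow]; norm_num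
    have hlow := zeta_lower σ τ y h0 h1 hy1 hyτ
    have hup := zeta_upper σ τ h0 h1 hτ1
    have hup2 : ‖riemannZeta (1 + σ + I * τ)‖ ≤ y ^ 32 := by
      have e2 : y ^ 2 ≤ y ^ 32 := pow_le_pow_right₀ (by linarith) (by norm_num)
      have e3 := Real.log_le_self (show 0 ≤ y by linarith)
      nlinarith
    have e : Real.posLog |τ| = Real.log |τ| := Real.posLog_eq_log (by simp; linarith)
    have hp : 0 < (y ^ 32)⁻¹ := by positivity
    have k1 := Real.log_le_log hp hlow
    have k2 := Real.log_le_log (lt_of_lt_of_le hp hlow) hup2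
    rw [Real.log_inv, Real.log_pow] at k1
    rw [Real.log_pow] at k2
    push_cast at k1 k2
    rw [e, hl, abs_le]
    constructor <;> linarith

/-! ### The Fourier expansion of `|cos|` -/

/-- The Fourier coefficients of `u ↦ |cos u|` with respect to the frequencies `2n`. -/
noncomputable def acos (n : ℤ) : ℝ := 2 / Real.pi * ((-1) ^ n.natAbs / (1 - 4 * (n : ℝ) ^ 2))

theorem integral_cexp_cos (n : ℤ) :
    ∫ x in (-(Real.pi / 2))..(Real.pi / 2), Complex.exp (-(2 * n * Complex.I) * x) * (Real.cos x : ℂ)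
      = 2 * (-1) ^ n.natAbs / (1 - 4 * (n : ℂ) ^ 2) := by
  set l : ℂ := -(2 * n * Complex.I) with hl
  have hl2 : 1 + l ^ 2 = 1 - 4 * (n : ℂ) ^ 2 := by
    rw [hl]; ring_nf; rw [Complex.I_sq]; ring
  have hne : (1 : ℂ) - 4 * (n : ℂ) ^ 2 ≠ 0 := by
    have : (1 : ℤ) - 4 * n ^ 2 ≠ 0 := by omega
    exact_mod_cast this
  have hd : ∀ x : ℝ, HasDerivAt (fun x : ℝ => Complex.exp (l * x) * (l * Complex.cos x + Complex.sin x)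
      / (1 - 4 * (n : ℂ) ^ 2)) (Complex.exp (l * x) * (Real.cos x : ℂ)) x := by
    intro x
    have h1 : HasDerivAt (fun z : ℂ => Complex.exp (l * z) * (l * Complex.cos z + Complex.sin z)
      / (1 - 4 * (n : ℂ) ^ 2)) (Complex.exp (l * x) * Complex.cos x) (x : ℂ) := by
      have a1 : HasDerivAt (fun z : ℂ => Complex.exp (l * z)) (Complex.exp (l * x) * l) (x : ℂ) := by
        simpa using ((hasDerivAt_id (x : ℂ)).const_mul l).cexp
      have a2 := ((Complex.hasDerivAt_cos (x : ℂ)).const_mul l).add (Complex.hasDerivAt_sin (x : ℂ))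
      refine ((a1.mul a2).div_const _).congr_deriv ?_
      rw [div_eq_iff hne, ← hl2]
      simp only [Pi.add_apply]
      ring
    have := h1.comp_ofReal
    simpa using this
  rw [intervalIntegral.integral_eq_sub_of_hasDerivAt (fun x _ => hd x)]
  · have e1 : Complex.exp (l * ((Real.pi / 2 : ℝ) : ℂ)) = (-1) ^ n.natAbs := by
      rw [show l * ((Real.pi / 2 : ℝ) : ℂ) = ((-n : ℤ) : ℂ) * (Real.pi * Complex.I) by
        rw [hl]; push_cast; ring, Complex.exp_int_mul, Complex.exp_pi_mul_I]
      rw [zpow_neg, ← inv_zpow]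
      norm_num
      rcases Int.even_or_odd n with h | h
      · rw [h.neg_one_zpow, (Int.natAbs_even.2 h).neg_one_pow]
      · rw [h.neg_one_zpow, (Int.natAbs_odd.2 h).neg_one_pow]
    have e2 : Complex.exp (l * ((-(Real.pi / 2) : ℝ) : ℂ)) = (-1) ^ n.natAbs := by
      rw [Complex.ofReal_neg, mul_neg, Complex.exp_neg, e1, ← inv_pow]
      norm_num
    rw [e1, e2, ← Complex.ofReal_cos, ← Complex.ofReal_sin, ← Complex.ofReal_cos,
      ← Complex.ofReal_sin, Real.cos_neg, Real.sin_neg, Real.cos_pi_div_two, Real.sin_pi_div_two]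
    push_cast
    ring
  · apply Continuous.intervalIntegrable
    fun_prop

theorem acos_abs_le (n : ℤ) (hn : n ≠ 0) : |acos n| ≤ 1 / (n : ℝ) ^ 2 := by
  have h1 : (1 : ℝ) ≤ (n : ℝ) ^ 2 := by
    have : (1 : ℤ) ≤ n ^ 2 := by have := sq_pos_of_ne_zero hn; omega
    exact_mod_cast this
  rw [acos, abs_mul, abs_div, abs_div, abs_pow, abs_neg, abs_one, one_pow, abs_two,
    abs_of_pos Real.pi_pos, abs_of_neg (show 1 - 4 * (n : ℝ) ^ 2 < 0 by linarith)]
  have hp : 2 / Real.pi ≤ 1 := by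
    rw [div_le_one Real.pi_pos]; linarith [Real.pi_gt_three]
  calc 2 / Real.pi * (1 / -(1 - 4 * (n : ℝ) ^ 2)) ≤ 1 * (1 / (n : ℝ) ^ 2) := by
        apply mul_le_mul hp _ (one_div_nonneg.2 (by linarith)) (by norm_num)
        apply one_div_le_one_div_of_le <;> linarith
    _ = _ := one_mul _

theorem summable_acos : Summable (fun n : ℤ => |acos n|) := by
  have h : Summable (fun n : ℤ => 1 / (n : ℝ) ^ 2) := Real.summable_one_div_int_pow.2 (by norm_num)
  have h2 : Summable (fun n : ℤ => Function.update (fun n : ℤ => 1 / (n : ℝ) ^ 2) 0 |acos 0| n) :=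
    h.update 0 _
  refine Summable.of_nonneg_of_le (fun n => abs_nonneg _) (fun n => ?_) h2
  rcases eq_or_ne n 0 with rfl | hn
  · simp
  · rw [Function.update_of_ne hn]; exact acos_abs_le n hn

/-- `|cos|` as a continuous function on the circle `ℝ / πℤ`. -/
noncomputable def cosCircle : C(AddCircle Real.pi, ℂ) where
  toFun := Function.Periodic.lift (f := fun u : ℝ => ((|Real.cos u| : ℝ) : ℂ)) (c := Real.pi) (by
    intro u; simp [Real.cos_add_pi])
  continuous_toFun := by
    apply continuous_coinduced_dom.2
    change Continuous fun u : ℝ => ((|Real.cos u| : ℝ) : ℂ)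
    fun_prop

theorem cosCircle_coeff (n : ℤ) :
    haveI : Fact (0 < Real.pi) := ⟨Real.pi_pos⟩
    fourierCoeff cosCircle n = acos n := by
  have : Fact (0 < Real.pi) := ⟨Real.pi_pos⟩
  change fourierCoeff cosCircle n = acos n
  rw [fourierCoeff_eq_intervalIntegral _ n (-(Real.pi / 2)),
    show -(Real.pi / 2) + Real.pi = Real.pi / 2 by ring]
  have : ∫ x in (-(Real.pi / 2))..(Real.pi / 2), fourier (T := Real.pi) (-n) x • cosCircle x =
      ∫ x in (-(Real.pi / 2))..(Real.pi / 2), Complex.exp (-(2 * n * Complex.I) * x) * (Real.cos x : ℂ) := by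
    apply intervalIntegral.integral_congr
    intro x hx
    rw [Set.uIcc_of_le (by linarith [Real.pi_pos])] at hx
    have hc : cosCircle (x : AddCircle Real.pi) = ((Real.cos x : ℝ) : ℂ) := by
      change ((|Real.cos x| : ℝ) : ℂ) = _
      rw [abs_of_nonneg (Real.cos_nonneg_of_mem_Icc hx)]
    simp only [hc, fourier_coe_apply, smul_eq_mul]
    congr 2
    have : (Real.pi : ℂ) ≠ 0 := by exact_mod_cast Real.pi_ne_zero
    field_simp
    push_cast
    ring
  rw [this, integral_cexp_cos, acos]
  simp only [Complex.real_smul]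
  push_cast
  ring

theorem hasSum_abs_cos (u : ℝ) :
    HasSum (fun n : ℤ => acos n * Real.cos (2 * n * u)) |Real.cos u| := by
  have : Fact (0 < Real.pi) := ⟨Real.pi_pos⟩
  have hs : Summable (fourierCoeff (T := Real.pi) cosCircle) := by
    have : fourierCoeff (T := Real.pi) cosCircle = fun n => ((acos n : ℝ) : ℂ) := by
      funext n; exact cosCircle_coeff n
    rw [this]
    apply Summable.of_norm
    simpa using summable_acos
  have h := has_pointwise_sum_fourier_series_of_summable hs (u : AddCircle Real.pi)
  have h2 := Complex.hasSum_re h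
  have hc : (cosCircle (u : AddCircle Real.pi)).re = |Real.cos u| := by
    change (((|Real.cos u| : ℝ) : ℂ)).re = _
    exact Complex.ofReal_re _
  rw [hc] at h2
  convert h2 using 1
  funext n
  rw [cosCircle_coeff n, fourier_coe_apply, smul_eq_mul, Complex.re_ofReal_mul]
  have hp : (Real.pi : ℂ) ≠ 0 := by exact_mod_cast Real.pi_ne_zero
  rw [show 2 * (Real.pi : ℂ) * Complex.I * n * u / Real.pi = ((2 * n * u : ℝ) : ℂ) * Complex.I by
    push_cast; field_simp, Complex.exp_ofReal_mul_I_re]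

/-- The nonconstant coefficients have total mass equal to the constant one, which is seen by
evaluating the expansion of `|cos|` at `π/2`. -/
theorem hasSum_acos_abs : HasSum (fun n : ℤ => if n = 0 then 0 else |acos n|) (2 / Real.pi) := by
  have h := (hasSum_abs_cos (Real.pi / 2)).neg
  rw [Real.cos_pi_div_two, abs_zero, neg_zero] at h
  have h2 := h.update 0 0
  have h0 : acos 0 = 2 / Real.pi := by simp [acos]
  have e1 : (fun n : ℤ => if n = 0 then 0 else |acos n|) = Function.update
      (fun b : ℤ => -(acos b * Real.cos (2 * b * (Real.pi / 2)))) 0 0 := by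
    funext n
    rcases eq_or_ne n 0 with rfl | hn
    · simp
    · rw [if_neg hn, Function.update_of_ne hn, show 2 * (n : ℝ) * (Real.pi / 2) = n * Real.pi by ring,
        Real.cos_int_mul_pi]
      have h1 : (1 : ℝ) ≤ (n : ℝ) ^ 2 := by
        have : (1 : ℤ) ≤ n ^ 2 := by have := sq_pos_of_ne_zero hn; omega
        exact_mod_cast this
      rw [acos, abs_mul, abs_div, abs_div, abs_pow, abs_neg, abs_one, one_pow, abs_two,
        abs_of_pos Real.pi_pos, abs_of_neg (show 1 - 4 * (n : ℝ) ^ 2 < 0 by linarith)]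
      have e : (-1 : ℝ) ^ n.natAbs * (-1) ^ n = 1 := by
        rcases Int.even_or_odd n with h | h
        · rw [h.neg_one_zpow, (Int.natAbs_even.2 h).neg_one_pow]; norm_num
        · rw [h.neg_one_zpow, (Int.natAbs_odd.2 h).neg_one_pow]; norm_num
      have hne : 1 - 4 * (n : ℝ) ^ 2 ≠ 0 := by linarith
      rw [div_neg, mul_neg, mul_assoc, div_mul_eq_mul_div ((-1 : ℝ) ^ n.natAbs), e]
  have e2 : 0 - -(acos 0 * Real.cos (2 * (0 : ℤ) * (Real.pi / 2))) + 0 = 2 / Real.pi := by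
    simp [h0]
  rw [e1, ← e2]
  exact h2

/-! ### Sums of `cos (t log p)` over primes, and the size of the Dirichlet series of `f` -/

/-- `∑_p cos(τ log p) / p^{1+σ}`. -/
noncomputable def cosSum (σ τ : ℝ) : ℝ :=
  ∑' p : Nat.Primes, Real.cos (τ * Real.log p) * (p : ℝ) ^ (-(1 + σ))

theorem summable_primes_rpow (σ : ℝ) (h0 : 0 < σ) :
    Summable (fun p : Nat.Primes => (p : ℝ) ^ (-(1 + σ))) :=
  Nat.Primes.summable_rpow.2 (by linarith)

theorem summable_cos_primes (σ τ : ℝ) (h0 : 0 < σ) :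
    Summable (fun p : Nat.Primes => Real.cos (τ * Real.log p) * (p : ℝ) ^ (-(1 + σ))) := by
  refine Summable.of_norm_bounded (summable_primes_rpow σ h0) fun p => ?_
  rw [norm_mul, Real.norm_eq_abs, Real.norm_eq_abs, abs_of_nonneg (by positivity : (0 : ℝ) ≤ (p : ℝ) ^ (-(1 + σ)))]
  exact mul_le_of_le_one_left (by positivity) (Real.abs_cos_le_one _)

open Complex in
theorem prime_cpow_re (σ τ : ℝ) (p : ℕ) (hp : 0 < p) :
    ((p : ℂ) ^ (-(1 + σ + I * τ : ℂ))).re = Real.cos (τ * Real.log p) * (p : ℝ) ^ (-(1 + σ)) := by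
  have hp0 : (p : ℂ) ≠ 0 := by exact_mod_cast hp.ne'
  have hpr : (0 : ℝ) < p := by exact_mod_cast hp
  rw [show -(1 + σ + I * τ : ℂ) = ((-(1 + σ) : ℝ) : ℂ) + ((-τ : ℝ) : ℂ) * I by push_cast; ring,
    cpow_add _ _ hp0, ← ofReal_natCast, ← ofReal_cpow hpr.le, re_ofReal_mul,
    cpow_def_of_ne_zero (by exact_mod_cast hp.ne'), ← ofReal_log hpr.le,
    show ((Real.log p : ℝ) : ℂ) * (((-τ : ℝ) : ℂ) * I) = ((-(τ * Real.log p) : ℝ) : ℂ) * I by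
      push_cast; ring, exp_ofReal_mul_I_re, Real.cos_neg, mul_comm]

open Complex in
theorem prime_cpow_norm (σ τ : ℝ) (p : ℕ) (hp : 0 < p) :
    ‖(p : ℂ) ^ (-(1 + σ + I * τ : ℂ))‖ = (p : ℝ) ^ (-(1 + σ)) := by
  rw [norm_natCast_cpow_of_pos hp, neg_re, sline_re]

theorem prime_rpow_le (σ : ℝ) (h0 : 0 < σ) (p : ℕ) (hp : 1 ≤ p) :
    (p : ℝ) ^ (-(1 + σ)) ≤ (p : ℝ)⁻¹ := by
  rw [← Real.rpow_neg_one]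
  exact Real.rpow_le_rpow_of_exponent_le (by exact_mod_cast hp) (by linarith)

open Complex in
/-- Up to a bounded error, `log |ζ|` is a cosine sum over primes. -/
theorem cosSum_zeta : ∃ C > 0, ∀ σ τ : ℝ, 0 < σ → 
    |cosSum σ τ - Real.log ‖riemannZeta (1 + σ + I * τ)‖| ≤ C := by
  have hs2 : Summable (fun p : Nat.Primes => ((p : ℝ)⁻¹) ^ 2) := by
    have := Nat.Primes.summable_rpow.2 (show (-2 : ℝ) < -1 by norm_num)
    refine this.congr fun p => ?_
    rw [Real.rpow_neg (by positivity)]; simp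
  refine ⟨∑' p : Nat.Primes, ((p : ℝ)⁻¹) ^ 2 + 1, ?_, ?_⟩
  · have : 0 ≤ ∑' p : Nat.Primes, ((p : ℝ)⁻¹) ^ 2 := tsum_nonneg fun p => by positivity
    linarith
  intro σ τ h0
  set s : ℂ := 1 + σ + I * τ with hs
  have hsre : 1 < s.re := by rw [hs, sline_re]; linarith
  have hsum : Summable (fun p : Nat.Primes => (p : ℂ) ^ (-s)) := by
    apply Summable.of_norm
    refine (summable_primes_rpow σ h0).congr fun p => ?_
    rw [prime_cpow_norm σ τ p p.2.pos]
  have hlogsum : Summable (fun p : Nat.Primes => -Complex.log (1 - (p : ℂ) ^ (-s))) :=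
    (Summable.clog_one_sub hsum).neg
  have e1 : Real.log ‖riemannZeta s‖ = ∑' p : Nat.Primes, (-Complex.log (1 - (p : ℂ) ^ (-s))).re := by
    rw [← riemannZeta_eulerProduct_exp_log hsre, norm_exp, Real.log_exp, re_tsum hlogsum]
  have e2 : cosSum σ τ = ∑' p : Nat.Primes, ((p : ℂ) ^ (-s)).re := by
    rw [cosSum]
    refine tsum_congr fun p => ?_
    rw [hs, prime_cpow_re σ τ p p.2.pos]
  rw [e1, e2, ← (hasSum_re hsum.hasSum).summable.tsum_sub (hasSum_re hlogsum.hasSum).summable]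
  have hb : ∀ p : Nat.Primes, ‖((p : ℂ) ^ (-s)).re - (-Complex.log (1 - (p : ℂ) ^ (-s))).re‖
      ≤ ((p : ℝ)⁻¹) ^ 2 := by
    intro p
    have hz := (prime_cpow_norm σ τ p p.2.pos).le.trans (prime_rpow_le σ h0 p p.2.one_le)
    rw [← hs] at hz
    have hp2 : (p : ℝ)⁻¹ ≤ 2⁻¹ := by
      apply inv_anti₀ (by norm_num)
      exact_mod_cast p.2.two_le
    generalize (p : ℂ) ^ (-s) = z at *
    have h := norm_log_one_add_sub_self_le (z := -z) (by rw [norm_neg]; linarith)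
    rw [norm_neg] at h
    rw [← sub_re, Real.norm_eq_abs]
    refine (abs_re_le_norm _).trans ?_
    rw [show z - -log (1 - z) = log (1 + -z) - -z by ring_nf]
    refine h.trans ?_
    have hi : (1 - ‖z‖)⁻¹ ≤ 2 := by
      rw [inv_le_comm₀ (by linarith) (by norm_num)]; linarith
    calc ‖z‖ ^ 2 * (1 - ‖z‖)⁻¹ / 2 ≤ ‖z‖ ^ 2 * 2 / 2 := by gcongr
      _ = ‖z‖ ^ 2 := by ring
      _ ≤ _ := by gcongr
  have := tsum_of_norm_bounded hs2.hasSum hb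
  rw [Real.norm_eq_abs] at this
  linarith

open Complex in
theorem cosSum_zero : ∃ C > 0, ∀ σ : ℝ, 0 < σ → σ ≤ 1 → cosSum σ 0 ≤ Real.log (1 / σ) + C := by
  obtain ⟨C, hC, h⟩ := cosSum_zeta
  refine ⟨C + Real.log 6, by positivity, fun σ h0 h1 => ?_⟩
  have h2 := h σ 0 h0
  simp only [ofReal_zero, mul_zero, add_zero] at h2
  have h3 := zeta_real_upper σ h0 h1
  have hne : riemannZeta (1 + σ) ≠ 0 := riemannZeta_ne_zero_of_one_lt_re (by simpa using h0)
  have h4 := Real.log_le_log (norm_pos_iff.2 hne) h3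
  rw [div_eq_mul_one_div, Real.log_mul (by norm_num) (by positivity)] at h4
  linarith [(abs_le.1 h2).2]

theorem cosSum_le : ∃ C > 0, ∀ σ τ : ℝ, 0 < σ → σ ≤ 1 → τ ≠ 0 →
    |cosSum σ τ| ≤ C + Real.posLog |τ|⁻¹ + (1 / 10) * Real.posLog |τ| := by
  obtain ⟨C, hC, h⟩ := cosSum_zeta
  obtain ⟨C', hC', h'⟩ := zeta_log_bound
  refine ⟨C + C', by positivity, fun σ τ h0 h1 hτ => ?_⟩
  have a := h σ τ h0
  have b := h' σ τ h0 h1 hτ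
  have := abs_add_le (cosSum σ τ - Real.log ‖riemannZeta (1 + σ + Complex.I * τ)‖)
    (Real.log ‖riemannZeta (1 + σ + Complex.I * τ)‖)
  rw [sub_add_cancel] at this
  linarith

/-- `∑_p |cos(t log p)| / p^{1+σ}`. -/
noncomputable def absCosSum (σ t : ℝ) : ℝ :=
  ∑' p : Nat.Primes, |Real.cos (t * Real.log p)| * (p : ℝ) ^ (-(1 + σ))

theorem summable_abs_cos_primes (σ τ : ℝ) (h0 : 0 < σ) :
    Summable (fun p : Nat.Primes => |Real.cos (τ * Real.log p)| * (p : ℝ) ^ (-(1 + σ))) := by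
  have := (summable_cos_primes σ τ h0).abs
  refine this.congr fun p => ?_
  rw [abs_mul, abs_of_nonneg (by positivity : (0 : ℝ) ≤ (p : ℝ) ^ (-(1 + σ)))]

theorem absCosSum_eq (σ t : ℝ) (h0 : 0 < σ) :
    HasSum (fun n : ℤ => acos n * cosSum σ (2 * n * t)) (absCosSum σ t) := by
  set F : ℤ × Nat.Primes → ℝ := fun q =>
    acos q.1 * (Real.cos (2 * q.1 * t * Real.log q.2) * (q.2 : ℝ) ^ (-(1 + σ))) with hF
  have hsum : Summable F := by
    have h := summable_acos.mul_of_nonneg (summable_primes_rpow σ h0) (fun n => abs_nonneg _)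
      (fun p => by positivity)
    refine Summable.of_norm_bounded h fun q => ?_
    simp only [hF]
    rw [norm_mul, norm_mul, Real.norm_eq_abs, Real.norm_eq_abs, Real.norm_of_nonneg (by positivity : (0 : ℝ) ≤ (q.2 : ℝ) ^ (-(1 + σ)))]
    gcongr
    exact mul_le_of_le_one_left (by positivity) (Real.abs_cos_le_one _)
  have h1 : HasSum (fun n : ℤ => acos n * cosSum σ (2 * n * t)) (∑' q, F q) := by
    refine hsum.hasSum.prod_fiberwise fun n => ?_
    simp only [hF]
    exact (summable_cos_primes σ (2 * n * t) h0).hasSum.mul_left _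
  have h2 : ∑' q, F q = absCosSum σ t := by
    rw [absCosSum]
    have hsw : HasSum (fun q : Nat.Primes × ℤ => F q.swap) (∑' q, F q) :=
      (Equiv.prodComm _ _).hasSum_iff.2 hsum.hasSum
    have := hsw.prod_fiberwise (g := fun p : Nat.Primes =>
      |Real.cos (t * Real.log p)| * (p : ℝ) ^ (-(1 + σ))) fun p => by
        have := (hasSum_abs_cos (t * Real.log p)).mul_right ((p : ℝ) ^ (-(1 + σ)))
        have e : (fun n : ℤ => F (Prod.swap (p, n))) = fun i : ℤ =>
            acos i * Real.cos (2 * i * (t * Real.log p)) * (p : ℝ) ^ (-(1 + σ)) := by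
          funext n
          simp only [hF, Prod.swap]
          ring_nf
        rw [e]
        exact this
    exact this.tsum_eq.symm
  rw [← h2]; exact h1

theorem summable_acos_log :
    Summable (fun n : ℤ => if n = 0 then 0 else |acos n| * Real.log (2 * |(n : ℝ)|)) := by
  have h : Summable (fun n : ℤ => |(n : ℝ)| ^ (-(3 / 2) : ℝ)) :=
    Real.summable_abs_int_rpow (by norm_num)
  refine Summable.of_nonneg_of_le (fun n => ?_) (fun n => ?_) (h.mul_left 4)
  · split_ifs with hn
    · exact le_rfl
    · have : (1 : ℝ) ≤ |(n : ℝ)| := by exact_mod_cast Int.one_le_abs hn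
      exact mul_nonneg (abs_nonneg _) (Real.log_nonneg (by linarith))
  · split_ifs with hn
    · positivity
    · have h1 : (1 : ℝ) ≤ |(n : ℝ)| := by exact_mod_cast Int.one_le_abs hn
      have h2 := acos_abs_le n hn
      rw [← sq_abs (n : ℝ)] at h2
      set x := |(n : ℝ)| with hx
      have hx0 : 0 < x := by linarith
      have h3 : Real.log (2 * x) ≤ 4 * x ^ (1 / 2 : ℝ) := by
        have := Real.log_le_rpow_div (show 0 ≤ 2 * x by linarith) (show (0 : ℝ) < 1 / 2 by norm_num)
        rw [Real.mul_rpow (by norm_num) hx0.le] at this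
        have h4 : (2 : ℝ) ^ (1 / 2 : ℝ) ≤ 2 := by
          calc (2 : ℝ) ^ (1 / 2 : ℝ) ≤ 2 ^ (1 : ℝ) :=
              Real.rpow_le_rpow_of_exponent_le (by norm_num) (by norm_num)
            _ = 2 := by simp
        have h5 : 0 ≤ x ^ (1 / 2 : ℝ) := by positivity
        have h6 : (2 : ℝ) ^ (1 / 2 : ℝ) * x ^ (1 / 2 : ℝ) ≤ 2 * x ^ (1 / 2 : ℝ) := by gcongr
        linarith
      calc |acos n| * Real.log (2 * x) ≤ 1 / x ^ 2 * (4 * x ^ (1 / 2 : ℝ)) := by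
            gcongr
            exact Real.log_nonneg (by linarith)
        _ = 4 * x ^ (-(3 / 2) : ℝ) := by
            rw [show (-(3 / 2) : ℝ) = -2 + 1 / 2 by norm_num, Real.rpow_add hx0,
              Real.rpow_neg hx0.le]
            norm_num
            ring

/-- The constant Fourier coefficient contributes `(2/π) log(1/σ)`, and the others are bounded through
`cosSum_le`. -/
theorem absCosSum_le : ∃ C > 0, ∀ σ t : ℝ, 0 < σ → σ ≤ 1 → t ≠ 0 →
    absCosSum σ t ≤ 2 / Real.pi * Real.log (1 / σ) + C + Real.posLog |t|⁻¹
      + (1 / 10) * Real.posLog |t| := by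
  obtain ⟨C₀, hC₀, h₀⟩ := cosSum_zero
  obtain ⟨C, hC, h⟩ := cosSum_le
  set D := ∑' n : ℤ, (if n = 0 then 0 else |acos n| * Real.log (2 * |(n : ℝ)|)) with hD
  have hD0 : 0 ≤ D := tsum_nonneg fun n => by
    split_ifs with hn
    · exact le_rfl
    · have : (1 : ℝ) ≤ |(n : ℝ)| := by exact_mod_cast Int.one_le_abs hn
      exact mul_nonneg (abs_nonneg _) (Real.log_nonneg (by linarith))
  have hp : 2 / Real.pi ≤ 1 := by
    rw [div_le_one Real.pi_pos]; linarith [Real.pi_gt_three]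
  have hp0 : 0 < 2 / Real.pi := by positivity
  refine ⟨C₀ + C + D, by positivity, fun σ t h0 h1 ht => ?_⟩
  have hP : 0 ≤ Real.posLog |t|⁻¹ := Real.posLog_nonneg
  have hQ : 0 ≤ Real.posLog |t| := Real.posLog_nonneg
  set K := C + Real.posLog |t|⁻¹ + (1 / 10) * Real.posLog |t| with hK
  have hB := ((hasSum_ite_eq (0 : ℤ) (2 / Real.pi * (Real.log (1 / σ) + C₀))).add
    (hasSum_acos_abs.mul_right K)).add summable_acos_log.hasSum
  have hle := hasSum_le (fun n => ?_) (absCosSum_eq σ t h0) hB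
  · rw [← hD] at hle
    have : 2 / Real.pi * K ≤ K := mul_le_of_le_one_left (by positivity) hp
    have : 2 / Real.pi * C₀ ≤ C₀ := mul_le_of_le_one_left hC₀.le hp
    linarith
  · rcases eq_or_ne n 0 with rfl | hn
    · have h00 : acos 0 = 2 / Real.pi := by simp [acos]
      simp only [h00, Int.cast_zero, mul_zero, zero_mul, if_true, add_zero]
      gcongr
      exact h₀ σ h0 h1
    · simp only [if_neg hn, zero_add]
      have hn1 : (1 : ℝ) ≤ |(n : ℝ)| := by exact_mod_cast Int.one_le_abs hn
      have ht0 : 0 < |t| := abs_pos.2 ht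
      have hnt : 2 * (n : ℝ) * t ≠ 0 := by
        have : (n : ℝ) ≠ 0 := by exact_mod_cast hn
        positivity
      have hb := h σ (2 * n * t) h0 h1 hnt
      have ea : |2 * (n : ℝ) * t| = 2 * |(n : ℝ)| * |t| := by
        rw [abs_mul, abs_mul, abs_two]
      have p1 : Real.posLog |2 * (n : ℝ) * t|⁻¹ ≤ Real.posLog |t|⁻¹ := by
        apply Real.posLog_le_posLog (by positivity)
        rw [ea]
        apply inv_anti₀ ht0
        nlinarith
      have p2 : Real.posLog |2 * (n : ℝ) * t| ≤ Real.log (2 * |(n : ℝ)|) + Real.posLog |t| := by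
        rw [ea]
        refine Real.posLog_mul.trans ?_
        rw [Real.posLog_eq_log (x := 2 * |(n : ℝ)|) (by rw [abs_of_nonneg (by positivity)]; linarith)]
      have hl : 0 ≤ Real.log (2 * |(n : ℝ)|) := Real.log_nonneg (by linarith)
      calc acos n * cosSum σ (2 * n * t) ≤ |acos n| * |cosSum σ (2 * n * t)| := by
            rw [← abs_mul]; exact le_abs_self _
        _ ≤ |acos n| * (K + Real.log (2 * |(n : ℝ)|)) := by
            gcongr
            linarith
        _ = _ := by ring

/-- The Dirichlet series `∑ h(n) n^{-s}` of a real arithmetic function. -/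
noncomputable def dser (h : ℕ → ℝ) (s : ℂ) : ℂ := LSeries (fun n => (h n : ℂ)) s

open Complex in
theorem term_norm_le (f : ℕ → ℝ) (hf : ∀ n, f n ∈ Set.Icc (-1 : ℝ) 1) (σ t : ℝ) (n : ℕ) :
    ‖LSeries.term (fun n => (f n : ℂ)) (1 + σ + I * t) n‖ ≤ (n : ℝ) ^ (-(1 + σ)) := by
  rcases Nat.eq_zero_or_pos n with rfl | hn
  · simp; positivity
  · rw [LSeries.term_of_ne_zero hn.ne', norm_div, norm_natCast_cpow_of_pos hn, sline_re, norm_real,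
      Real.rpow_neg (by positivity), ← one_div]
    gcongr
    exact abs_le.2 ⟨(hf n).1, (hf n).2⟩

open Complex in
theorem term_summable (f : ℕ → ℝ) (hf : ∀ n, f n ∈ Set.Icc (-1 : ℝ) 1) (σ t : ℝ) (h0 : 0 < σ) :
    Summable (fun n => ‖LSeries.term (fun n => (f n : ℂ)) (1 + σ + I * t) n‖) :=
  Summable.of_nonneg_of_le (fun n => norm_nonneg _) (fun n => term_norm_le f hf σ t n)
    (Real.summable_nat_rpow.2 (by linarith))

open Complex in
theorem norm_one_add_le (z : ℂ) : ‖1 + z‖ ≤ Real.exp (z.re + ‖z‖ ^ 2 / 2) := by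
  have h1 : ‖1 + z‖ ^ 2 = 1 + 2 * z.re + ‖z‖ ^ 2 := by
    rw [Complex.sq_norm, Complex.sq_norm, normSq_apply, normSq_apply]; simp; ring
  have h2 : ‖1 + z‖ ^ 2 ≤ Real.exp (z.re + ‖z‖ ^ 2 / 2) ^ 2 := by
    rw [h1, ← Real.exp_nat_mul]
    have := Real.add_one_le_exp (((2 : ℕ) : ℝ) * (z.re + ‖z‖ ^ 2 / 2))
    push_cast at this ⊢
    linarith
  exact le_of_sq_le_sq h2 (Real.exp_pos _).le

open Complex in
/-- As `f` is real, only the real part of `f(p) p^{-s}` enters, and it is at most `|cos(t log p)|`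
times `p^{-1-σ}`. -/
theorem euler_factor (f : ℕ → ℝ) (hf : ∀ n, f n ∈ Set.Icc (-1 : ℝ) 1) (hm : IsMult f) (σ t : ℝ)
    (h0 : 0 < σ) (p : Nat.Primes) :
    ‖∑' e : ℕ, LSeries.term (fun n => (f n : ℂ)) (1 + σ + I * t) ((p : ℕ) ^ e)‖ ≤
      Real.exp (|Real.cos (t * Real.log p)| * (p : ℝ) ^ (-(1 + σ)) + 5 * ((p : ℝ)⁻¹) ^ 2) := by
  set T := LSeries.term (fun n => (f n : ℂ)) (1 + σ + I * t) with hT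
  have hp2 : (2 : ℝ) ≤ (p : ℕ) := by exact_mod_cast p.2.two_le
  set q : ℝ := ((p : ℕ) : ℝ)⁻¹ with hq
  have hq0 : 0 < q := by positivity
  have hq2 : q ≤ 2⁻¹ := inv_anti₀ (by norm_num) hp2
  have hb : ∀ e : ℕ, ‖T ((p : ℕ) ^ e)‖ ≤ q ^ e := by
    intro e
    refine (term_norm_le f hf σ t _).trans ?_
    refine (prime_rpow_le σ h0 _ (Nat.one_le_pow _ _ p.2.pos)).trans (le_of_eq ?_)
    push_cast; rw [hq, inv_pow]
  have hgeo : Summable (fun e : ℕ => q ^ e) := summable_geometric_of_lt_one hq0.le (by linarith)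
  have hs : Summable (fun e : ℕ => T ((p : ℕ) ^ e)) := Summable.of_norm_bounded hgeo hb
  rw [← hs.sum_add_tsum_nat_add 2]
  have htail : ‖∑' e : ℕ, T ((p : ℕ) ^ (e + 2))‖ ≤ 2 * q ^ 2 := by
    have h1 : HasSum (fun e : ℕ => q ^ (e + 2)) (q ^ 2 * (1 - q)⁻¹) := by
      have := (hasSum_geometric_of_lt_one hq0.le (by linarith : q < 1)).mul_left (q ^ 2)
      simpa [pow_add, mul_comm] using this
    refine (tsum_of_norm_bounded h1 fun e => hb (e + 2)).trans ?_
    have : (1 - q)⁻¹ ≤ 2 := by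
      rw [inv_le_comm₀ (by linarith) (by norm_num)]; linarith
    nlinarith [sq_nonneg q]
  have hfirst : ‖∑ e ∈ range 2, T ((p : ℕ) ^ e)‖ ≤
      Real.exp (|Real.cos (t * Real.log p)| * (p : ℝ) ^ (-(1 + σ)) + q ^ 2 / 2) := by
    have e1 : T ((p : ℕ) ^ 0) = 1 := by
      rw [hT, pow_zero, LSeries.term_of_ne_zero one_ne_zero, hm.1]; simp
    have hz := hb 1
    rw [pow_one, pow_one] at hz
    have e2 : T p = (f p : ℂ) * ((p : ℕ) : ℂ) ^ (-(1 + σ + I * t : ℂ)) := by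
      rw [hT, LSeries.term_of_ne_zero p.2.ne_zero, cpow_neg, div_eq_mul_inv]
    rw [sum_range_succ, sum_range_one, e1, pow_one]
    refine (norm_one_add_le _).trans (Real.exp_le_exp.2 ?_)
    gcongr
    rw [e2, re_ofReal_mul, prime_cpow_re σ t p p.2.pos]
    have hA : |f p| ≤ 1 := abs_le.2 ⟨(hf p).1, (hf p).2⟩
    have hr : (0 : ℝ) ≤ ((p : ℕ) : ℝ) ^ (-(1 + σ)) := by positivity
    calc _ ≤ |f p * (Real.cos (t * Real.log p) * ((p : ℕ) : ℝ) ^ (-(1 + σ)))| := le_abs_self _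
      _ = |f p| * (|Real.cos (t * Real.log p)| * ((p : ℕ) : ℝ) ^ (-(1 + σ))) := by
          rw [abs_mul, abs_mul, abs_of_nonneg hr]
      _ ≤ _ := mul_le_of_le_one_left (by positivity) hA
  refine (norm_add_le _ _).trans ((add_le_add hfirst htail).trans ?_)
  set A := |Real.cos (t * Real.log p)| * (p : ℝ) ^ (-(1 + σ)) with hA
  have hA0 : 0 ≤ A := by positivity
  have hE : 1 ≤ Real.exp (A + q ^ 2 / 2) := Real.one_le_exp (by positivity)
  calc Real.exp (A + q ^ 2 / 2) + 2 * q ^ 2 ≤ Real.exp (A + q ^ 2 / 2) * (2 * q ^ 2 + 1) := by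
        nlinarith [sq_nonneg q]
    _ ≤ Real.exp (A + q ^ 2 / 2) * Real.exp (2 * q ^ 2) := by
        gcongr
        exact Real.add_one_le_exp _
    _ = Real.exp (A + q ^ 2 / 2 + 2 * q ^ 2) := by rw [← Real.exp_add]
    _ ≤ _ := by
        apply Real.exp_le_exp.2
        nlinarith [sq_nonneg q]

open Complex in
theorem dser_le_exp : ∃ C > 0, ∀ f : ℕ → ℝ, (∀ n, f n ∈ Set.Icc (-1 : ℝ) 1) → IsMult f →
    ∀ σ t : ℝ, 0 < σ → ‖dser f (1 + σ + I * t)‖ ≤ C * Real.exp (absCosSum σ t) := by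
  have hs2 : Summable (fun p : Nat.Primes => 5 * ((p : ℝ)⁻¹) ^ 2) := by
    have := Nat.Primes.summable_rpow.2 (show (-2 : ℝ) < -1 by norm_num)
    refine (this.congr fun p => ?_).mul_left 5
    rw [Real.rpow_neg (by positivity)]; simp
  refine ⟨Real.exp (∑' p : Nat.Primes, 5 * ((p : ℝ)⁻¹) ^ 2), Real.exp_pos _, ?_⟩
  intro f hf hm σ t h0
  set T := LSeries.term (fun n => (f n : ℂ)) (1 + σ + I * t) with hT
  have hprod := EulerProduct.eulerProduct_hasProd (f := T) (by
      rw [hT, LSeries.term_of_ne_zero one_ne_zero, hm.1]; simp)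
    (by
      intro m n hmn
      rcases eq_or_ne m 0 with rfl | hm0
      · simp [hT]
      rcases eq_or_ne n 0 with rfl | hn0
      · simp [hT]
      rw [hT, LSeries.term_of_ne_zero hm0, LSeries.term_of_ne_zero hn0,
        LSeries.term_of_ne_zero (mul_ne_zero hm0 hn0), hm.2 m n hmn]
      push_cast
      rw [natCast_mul_natCast_cpow]
      ring)
    (term_summable f hf σ t h0) (by simp [hT])
  have e : dser f (1 + σ + I * t) = ∑' n, T n := rfl
  rw [e, ← Real.exp_add]
  have hsum := (summable_abs_cos_primes σ t h0).add hs2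
  refine le_of_tendsto hprod.norm (Filter.Eventually.of_forall fun S => ?_)
  calc ∏ p ∈ S, ‖∑' e, T ((p : ℕ) ^ e)‖
      ≤ ∏ p ∈ S, Real.exp (|Real.cos (t * Real.log p)| * (p : ℝ) ^ (-(1 + σ)) + 5 * ((p : ℝ)⁻¹) ^ 2) :=
        prod_le_prod (fun p _ => norm_nonneg _) fun p _ => euler_factor f hf hm σ t h0 p
    _ = Real.exp (∑ p ∈ S, (|Real.cos (t * Real.log p)| * (p : ℝ) ^ (-(1 + σ)) + 5 * ((p : ℝ)⁻¹) ^ 2)) := by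
        rw [Real.exp_sum]
    _ ≤ _ := by
        apply Real.exp_le_exp.2
        have h1 := hsum.sum_le_tsum S (fun p _ => by positivity)
        rw [(summable_abs_cos_primes σ t h0).tsum_add hs2] at h1
        rw [absCosSum]
        linarith

open Complex in
/-- Halász-type bound for real multiplicative functions, with the exponent `2/π` coming from the mean
value of `|cos|`. -/
theorem dser_bound : ∃ C > 0, ∀ f : ℕ → ℝ, (∀ n, f n ∈ Set.Icc (-1 : ℝ) 1) → IsMult f →
    ∀ σ t : ℝ, 0 < σ → σ ≤ 1 → t ≠ 0 → ‖dser f (1 + σ + I * t)‖ ≤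
      C * σ ^ (-(2 / Real.pi)) * Real.exp (Real.posLog |t|⁻¹ + (1 / 10) * Real.posLog |t|) := by
  obtain ⟨C, hC, h⟩ := dser_le_exp
  obtain ⟨C', hC', h'⟩ := absCosSum_le
  refine ⟨C * Real.exp C', by positivity, ?_⟩
  intro f hf hm σ t h0 h1 ht
  refine (h f hf hm σ t h0).trans ?_
  have e : Real.exp (2 / Real.pi * Real.log (1 / σ)) = σ ^ (-(2 / Real.pi)) := by
    rw [Real.rpow_def_of_pos h0, one_div, Real.log_inv]; congr 1; ring
  rw [← e, mul_assoc, mul_assoc, ← Real.exp_add, ← Real.exp_add]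
  gcongr
  linarith [h' σ t h0 h1 ht]

open Complex in
/-- Comparison with `ζ`, used where `t` is so small that `dser_bound` is weaker. -/
theorem dser_trivial : ∃ C > 0, ∀ f : ℕ → ℝ, (∀ n, f n ∈ Set.Icc (-1 : ℝ) 1) → IsMult f →
    ∀ σ t : ℝ, 0 < σ → σ ≤ 1 → ‖dser f (1 + σ + I * t)‖ ≤ C / σ := by
  obtain ⟨C, hC, h⟩ := dser_le_exp
  obtain ⟨C', hC', h'⟩ := cosSum_zero
  refine ⟨C * Real.exp C', by positivity, ?_⟩
  intro f hf hm σ t h0 h1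
  refine (h f hf hm σ t h0).trans ?_
  have h2 : absCosSum σ t ≤ cosSum σ 0 := by
    rw [absCosSum, cosSum]
    refine (summable_abs_cos_primes σ t h0).tsum_le_tsum (fun p => ?_) (summable_cos_primes σ 0 h0)
    gcongr
    simpa using Real.abs_cos_le_one _
  calc C * Real.exp (absCosSum σ t) ≤ C * Real.exp (Real.log (1 / σ) + C') := by
        gcongr
        exact h2.trans (h' σ h0 h1)
    _ = _ := by rw [Real.exp_add, Real.exp_log (by positivity)]; ring

/-! ### The Mellin transform of the kernel -/

/-- The Mellin transform of `Kf`, namely `∫ Kf(u) u^{-s-1} du`, in closed form. -/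
noncomputable def Hf (s : ℂ) : ℂ := 1 / s - (w0 : ℂ) ^ s * riemannZeta (1 + s) / (1 + s)

/-- The numerator of `Hf`, once the factor `s * (1 + s)` has been cleared. -/
noncomputable def Nn (s : ℂ) : ℂ := (1 + s) - (w0 : ℂ) ^ s * riemannZeta₁ (1 + s)

theorem differentiable_Nn : Differentiable ℂ Nn := by
  have hw : (w0 : ℂ) ≠ 0 := by exact_mod_cast w0_pos.ne'
  have h2 := differentiable_riemannZeta₁
  intro s
  unfold Nn
  have h3 : DifferentiableAt ℂ (fun s : ℂ => riemannZeta₁ (1 + s)) s :=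
    (h2 (1 + s)).comp s (by fun_prop)
  have h4 : DifferentiableAt ℂ (fun s : ℂ => (w0 : ℂ) ^ s) s :=
    DifferentiableAt.const_cpow differentiableAt_id (Or.inl hw)
  exact (by fun_prop : DifferentiableAt ℂ (fun s : ℂ => 1 + s) s).sub (h4.mul h3)

theorem Nn_zero : Nn 0 = 0 := by simp [Nn]

/-- The choice `w₀ = e^{1-γ}` is exactly what makes `Nn` vanish to second order at `0`. -/
theorem deriv_Nn_zero : deriv Nn 0 = 0 := by
  have hw : (w0 : ℂ) ≠ 0 := by exact_mod_cast w0_pos.ne'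
  have h3 : HasDerivAt (fun s : ℂ => riemannZeta₁ (1 + s))
      (Real.eulerMascheroniConstant : ℂ) 0 := by
    have h2 := (differentiable_riemannZeta₁ 1).hasDerivAt
    rw [deriv_riemannZeta₁_one] at h2
    have := HasDerivAt.comp_const_add (1 : ℂ) 0 (by simpa using h2)
    simpa using this
  have h4 : HasDerivAt (fun s : ℂ => (w0 : ℂ) ^ s) (Complex.log w0) 0 := by
    have := (hasDerivAt_id (0 : ℂ)).const_cpow (c := (w0 : ℂ)) (Or.inl hw)
    simpa using this
  have h5 : HasDerivAt (fun s : ℂ => 1 + s) 1 0 := by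
    simpa using (hasDerivAt_id (0 : ℂ)).const_add 1
  have h6 := (h5.sub (h4.mul h3)).deriv
  have h7 : Complex.log w0 = 1 - Real.eulerMascheroniConstant := by
    rw [← Complex.ofReal_log w0_pos.le, w0, Real.log_exp]; push_cast; ring
  have h8 : Nn = ((fun s : ℂ => 1 + s) -
    (fun s : ℂ => (w0 : ℂ) ^ s) * fun s : ℂ => riemannZeta₁ (1 + s)) := rfl
  rw [h8, h6, h7]
  simp

theorem Nn_bound : ∃ C : ℝ, 0 < C ∧ ∀ s : ℂ, ‖s‖ ≤ 3 → ‖Nn s‖ ≤ C * ‖s‖ ^ 2 := by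
  have d1 : Differentiable ℂ (dslope Nn 0) := by
    rw [← differentiableOn_univ, Complex.differentiableOn_dslope (by simp)]
    exact differentiable_Nn.differentiableOn
  have d2 : Differentiable ℂ (dslope (dslope Nn 0) 0) := by
    rw [← differentiableOn_univ, Complex.differentiableOn_dslope (by simp)]
    exact d1.differentiableOn
  obtain ⟨C, hC⟩ := (isCompact_closedBall (0 : ℂ) 3).exists_bound_of_continuousOn
    d2.continuous.continuousOn
  refine ⟨|C| + 1, by positivity, fun s hs => ?_⟩
  have e1 := sub_smul_dslope Nn 0 s
  have e2 := sub_smul_dslope (dslope Nn 0) 0 s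
  rw [dslope_same, deriv_Nn_zero] at e2
  rw [Nn_zero] at e1
  simp only [sub_zero, smul_eq_mul] at e1 e2
  rw [← e1, ← e2, norm_mul, norm_mul]
  have := hC s (by simpa using hs)
  have h3 : ‖dslope (dslope Nn 0) 0 s‖ ≤ |C| + 1 := by linarith [le_abs_self C]
  calc _ = ‖dslope (dslope Nn 0) 0 s‖ * ‖s‖ ^ 2 := by ring
    _ ≤ _ := by gcongr

theorem Hf_eq (s : ℂ) (hs : 0 < s.re) : Hf s = Nn s / (s * (1 + s)) := by
  have h0 : s ≠ 0 := by rintro rfl; simp at hs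
  have h1 : 1 + s ≠ 0 := by
    intro h; have := congrArg Complex.re h; simp at this; linarith
  have h2 : riemannZeta (1 + s) = s⁻¹ * riemannZeta₁ (1 + s) := by
    have := riemannZeta_eq_inv_sub_mul (s := 1 + s) (by simpa using h0)
    simpa using this
  rw [Hf, Nn, h2]
  field_simp

theorem Hf_near : ∃ C : ℝ, 0 < C ∧ ∀ σ t : ℝ, 0 < σ → σ ≤ 1 → |t| ≤ 1 →
    ‖Hf (σ + Complex.I * t)‖ ≤ C * (σ + |t|) := by
  obtain ⟨C, hC0, hC⟩ := Nn_bound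
  refine ⟨C, hC0, fun σ t h0 h1 ht => ?_⟩
  set s : ℂ := σ + Complex.I * t with hs
  have hre : s.re = σ := by simp [hs]
  have hn : ‖s‖ ≤ σ + |t| := by
    calc _ ≤ ‖(σ : ℂ)‖ + ‖Complex.I * t‖ := norm_add_le _ _
      _ = _ := by simp [abs_of_pos h0]
  have hs0 : 0 < ‖s‖ := by
    rw [norm_pos_iff]; intro h; rw [h] at hre; simp at hre; linarith
  have h2 : 1 ≤ ‖1 + s‖ := by
    have := Complex.re_le_norm (1 + s)
    simp only [Complex.add_re, Complex.one_re, hre] at this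
    linarith
  rw [Hf_eq s (by rw [hre]; exact h0), norm_div, norm_mul]
  have := hC s (by linarith)
  rw [div_le_iff₀ (by positivity)]
  calc _ ≤ C * ‖s‖ ^ 2 := this
    _ = C * ‖s‖ * (‖s‖ * 1) := by ring
    _ ≤ _ := by gcongr

theorem Hf_far : ∃ C : ℝ, 0 < C ∧ ∀ σ t : ℝ, 0 < σ → σ ≤ 1 → 1 ≤ |t| →
    ‖Hf (σ + Complex.I * t)‖ ≤ C * |t| ^ (-(9 / 10) : ℝ) := by
  obtain ⟨C, hC0, hC⟩ := zeta_log_bound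
  refine ⟨1 + 2 * Real.exp C, by positivity, fun σ t h0 h1 ht => ?_⟩
  have ht0 : 0 < |t| := by linarith
  set s : ℂ := σ + Complex.I * t with hs
  have hre : s.re = σ := by simp [hs]
  have him : s.im = t := by simp [hs]
  have hsn : |t| ≤ ‖s‖ := by rw [← him]; exact Complex.abs_im_le_norm s
  have hsn2 : |t| ≤ ‖1 + s‖ := by
    have := Complex.abs_im_le_norm (1 + s)
    simpa [him] using this
  have hz : ‖riemannZeta (1 + s)‖ ≤ Real.exp C * |t| ^ (1 / 10 : ℝ) := by
    have h3 := hC σ t h0 h1 (by rintro rfl; simp at ht0)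
    have e : (1 : ℂ) + s = 1 + σ + Complex.I * t := by rw [hs]; ring
    rw [← e] at h3
    have p1 : Real.posLog |t|⁻¹ = 0 := by
      rw [Real.posLog_eq_zero_iff, abs_inv, abs_abs]
      exact inv_le_one_of_one_le₀ ht
    have p2 : Real.posLog |t| = Real.log |t| := Real.posLog_eq_log (by simpa using ht)
    rw [p1, p2] at h3
    have hz0 : 0 < ‖riemannZeta (1 + s)‖ := by
      rw [norm_pos_iff]
      exact riemannZeta_ne_zero_of_one_le_re (by simp [hre]; linarith)
    rw [← Real.exp_log hz0, Real.rpow_def_of_pos ht0, ← Real.exp_add, Real.exp_le_exp]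
    have := (le_abs_self _).trans h3
    linarith
  have hw : ‖(w0 : ℂ) ^ s‖ ≤ 2 := by
    rw [Complex.norm_cpow_eq_rpow_re_of_pos w0_pos, hre]
    calc _ ≤ w0 ^ (1 : ℝ) := Real.rpow_le_rpow_of_exponent_le (by linarith [w0_gt]) h1
      _ ≤ 2 := by rw [Real.rpow_one]; exact w0_lt.le
  have e1 : |t| ^ (1 / 10 : ℝ) / |t| = |t| ^ (-(9 / 10) : ℝ) := by
    rw [← Real.rpow_sub_one ht0.ne']; norm_num
  have e2 : 1 / |t| ≤ |t| ^ (-(9 / 10) : ℝ) := by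
    rw [← e1]; gcongr; exact Real.one_le_rpow ht (by norm_num)
  calc ‖Hf s‖ ≤ ‖1 / s‖ + ‖(w0 : ℂ) ^ s * riemannZeta (1 + s) / (1 + s)‖ := norm_sub_le _ _
    _ = 1 / ‖s‖ + ‖(w0 : ℂ) ^ s‖ * ‖riemannZeta (1 + s)‖ / ‖1 + s‖ := by
        rw [norm_div, norm_div, norm_mul]; simp
    _ ≤ 1 / |t| + 2 * (Real.exp C * |t| ^ (1 / 10 : ℝ)) / |t| := by gcongr
    _ = 1 / |t| + 2 * Real.exp C * (|t| ^ (1 / 10 : ℝ) / |t|) := by ring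
    _ ≤ |t| ^ (-(9 / 10) : ℝ) + 2 * Real.exp C * |t| ^ (-(9 / 10) : ℝ) := by
        rw [e1]; gcongr
    _ = _ := by ring

/-- The zero of `Hf` at `s = 0` absorbs the factor `|t|⁻¹` in the bound for the Dirichlet series,
so that the product is as small as a `2/π`-th power of `1/σ` uniformly in `t`. -/
theorem dser_Hf : ∃ C : ℝ, 0 < C ∧ ∀ f : ℕ → ℝ, (∀ n, f n ∈ Set.Icc (-1 : ℝ) 1) → IsMult f →
    ∀ σ t : ℝ, 0 < σ → σ ≤ 1 →
    ‖dser f (1 + σ + Complex.I * t) * Hf (σ + Complex.I * t)‖ ≤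
      C * σ ^ (-(2 / Real.pi)) * (1 + |t|) ^ (-(4 / 5) : ℝ) := by
  obtain ⟨A, hA0, hA⟩ := dser_bound
  obtain ⟨B, hB0, hB⟩ := dser_trivial
  obtain ⟨C1, hC10, hC1⟩ := Hf_near
  obtain ⟨C2, hC20, hC2⟩ := Hf_far
  refine ⟨8 * (B * C1 + A * C1 + A * C2), by positivity, fun f hf hm σ t h0 h1 => ?_⟩
  have hσ1 : 1 ≤ σ ^ (-(2 / Real.pi)) :=
    Real.one_le_rpow_of_pos_of_le_one_of_nonpos h0 h1 (by
      have := Real.pi_pos; simp only [Left.neg_nonpos_iff]; positivity)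
  rw [norm_mul]
  have key : ∀ X : ℝ, 0 ≤ X → |t| ≤ 1 → X ≤ 4 * X * (1 + |t|) ^ (-(4 / 5) : ℝ) := by
    intro X hX ht
    have : (1 / 2 : ℝ) ≤ (1 + |t|) ^ (-(4 / 5) : ℝ) := by
      calc (1 / 2 : ℝ) = 2 ^ (-1 : ℝ) := by rw [Real.rpow_neg_one]; norm_num
        _ ≤ 2 ^ (-(4 / 5) : ℝ) := Real.rpow_le_rpow_of_exponent_le (by norm_num) (by norm_num)
        _ ≤ _ := Real.rpow_le_rpow_of_nonpos (by positivity) (by linarith) (by norm_num)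
    nlinarith
  have hQ : 0 < (1 + |t|) ^ (-(4 / 5) : ℝ) := by positivity
  have hS : 0 < σ ^ (-(2 / Real.pi)) := by positivity
  rcases le_or_gt |t| σ with hts | hts
  · have ht1 : |t| ≤ 1 := hts.trans h1
    have a1 := hB f hf hm σ t h0 h1
    have a2 := hC1 σ t h0 h1 ht1
    calc _ ≤ B / σ * (C1 * (σ + |t|)) := by gcongr
      _ ≤ B / σ * (C1 * (σ + σ)) := by gcongr
      _ = 2 * (B * C1) * 1 := by field_simp; ring
      _ ≤ 2 * (B * C1) * σ ^ (-(2 / Real.pi)) := by gcongr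
      _ ≤ 4 * (2 * (B * C1) * σ ^ (-(2 / Real.pi))) * (1 + |t|) ^ (-(4 / 5) : ℝ) :=
          key _ (by positivity) ht1
      _ = 8 * (B * C1) * σ ^ (-(2 / Real.pi)) * (1 + |t|) ^ (-(4 / 5) : ℝ) := by ring
      _ ≤ _ := by
          gcongr
          nlinarith [mul_pos hA0 hC10, mul_pos hA0 hC20]
  · have htp : 0 < |t| := h0.trans hts
    have ht0 : t ≠ 0 := by rintro rfl; simp at htp
    have a1 := hA f hf hm σ t h0 h1 ht0
    rcases le_or_gt |t| 1 with ht1 | ht1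
    · have a2 := hC1 σ t h0 h1 ht1
      have p1 : Real.posLog |t| = 0 := by
        rw [Real.posLog_eq_zero_iff, abs_abs]; exact ht1
      have p2 : Real.posLog |t|⁻¹ = Real.log |t|⁻¹ :=
        Real.posLog_eq_log (by rw [abs_inv, abs_abs]; exact (one_le_inv₀ htp).2 ht1)
      rw [p1, p2, mul_zero, add_zero, Real.exp_log (by positivity)] at a1
      calc _ ≤ A * σ ^ (-(2 / Real.pi)) * |t|⁻¹ * (C1 * (σ + |t|)) := by gcongr
        _ ≤ A * σ ^ (-(2 / Real.pi)) * |t|⁻¹ * (C1 * (|t| + |t|)) := by gcongr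
        _ = 2 * (A * C1) * σ ^ (-(2 / Real.pi)) := by field_simp; ring
        _ ≤ 4 * (2 * (A * C1) * σ ^ (-(2 / Real.pi))) * (1 + |t|) ^ (-(4 / 5) : ℝ) :=
            key _ (by positivity) ht1
        _ = 8 * (A * C1) * σ ^ (-(2 / Real.pi)) * (1 + |t|) ^ (-(4 / 5) : ℝ) := by ring
        _ ≤ _ := by
            gcongr
            nlinarith [mul_pos hB0 hC10, mul_pos hA0 hC20]
    · have a2 := hC2 σ t h0 h1 ht1.le
      have p1 : Real.posLog |t|⁻¹ = 0 := by
        rw [Real.posLog_eq_zero_iff, abs_inv, abs_abs]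
        exact inv_le_one_of_one_le₀ ht1.le
      have p2 : Real.posLog |t| = Real.log |t| := Real.posLog_eq_log (by simpa using ht1.le)
      rw [p1, p2, zero_add] at a1
      have e1 : Real.exp (1 / 10 * Real.log |t|) = |t| ^ (1 / 10 : ℝ) := by
        rw [Real.rpow_def_of_pos htp, mul_comm]
      rw [e1] at a1
      have e2 : |t| ^ (1 / 10 : ℝ) * |t| ^ (-(9 / 10) : ℝ) = |t| ^ (-(4 / 5) : ℝ) := by
        rw [← Real.rpow_add htp]; norm_num
      have e3 : |t| ^ (-(4 / 5) : ℝ) ≤ 8 * (1 + |t|) ^ (-(4 / 5) : ℝ) := by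
        calc |t| ^ (-(4 / 5) : ℝ) ≤ ((1 / 2) * (1 + |t|)) ^ (-(4 / 5) : ℝ) :=
              Real.rpow_le_rpow_of_nonpos (by positivity) (by linarith) (by norm_num)
          _ = (1 / 2) ^ (-(4 / 5) : ℝ) * (1 + |t|) ^ (-(4 / 5) : ℝ) :=
              Real.mul_rpow (by norm_num) (by positivity)
          _ ≤ (1 / 2) ^ (-1 : ℝ) * (1 + |t|) ^ (-(4 / 5) : ℝ) := by
              gcongr ?_ * _
              exact Real.rpow_le_rpow_of_exponent_ge (by norm_num) (by norm_num) (by norm_num)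
          _ ≤ _ := by
              rw [Real.rpow_neg_one]
              gcongr; norm_num
      calc _ ≤ A * σ ^ (-(2 / Real.pi)) * |t| ^ (1 / 10 : ℝ) *
              (C2 * |t| ^ (-(9 / 10) : ℝ)) := by gcongr
        _ = A * C2 * σ ^ (-(2 / Real.pi)) * (|t| ^ (1 / 10 : ℝ) * |t| ^ (-(9 / 10) : ℝ)) := by ring
        _ ≤ A * C2 * σ ^ (-(2 / Real.pi)) * (8 * (1 + |t|) ^ (-(4 / 5) : ℝ)) := by
            rw [e2]; gcongr
        _ = 8 * (A * C2) * σ ^ (-(2 / Real.pi)) * (1 + |t|) ^ (-(4 / 5) : ℝ) := by ring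
        _ ≤ _ := by
            gcongr
            nlinarith [mul_pos hB0 hC10, mul_pos hA0 hC10]

open MeasureTheory in
theorem mellin_floor (s : ℂ) (hs : 0 < s.re) :
    MellinConvergent (fun u : ℝ => ((⌊u⌋₊ / u : ℝ) : ℂ)) (-s) ∧
    mellin (fun u : ℝ => ((⌊u⌋₊ / u : ℝ) : ℂ)) (-s) = riemannZeta (1 + s) / (1 + s) := by
  have hsub : Set.Ioi (1 : ℝ) ⊆ Set.Ioi 0 := Set.Ioi_subset_Ioi zero_le_one
  have hz : ∀ u ∈ Set.Ioi (0 : ℝ) \ Set.Ici 1,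
      (u : ℂ) ^ (-s - 1) • ((⌊u⌋₊ / u : ℝ) : ℂ) = 0 := by
    intro u hu
    have : ⌊u⌋₊ = 0 := Nat.floor_eq_zero.2 (by simpa using hu.2)
    simp [this]
  have hmeas : Measurable (fun u : ℝ => (u : ℂ) ^ (-s - 1) • ((⌊u⌋₊ / u : ℝ) : ℂ)) := by
    have : Measurable (fun u : ℝ => (⌊u⌋₊ : ℝ)) :=
      measurable_from_nat.comp Nat.measurable_floor
    fun_prop
  have hintg : IntegrableOn (fun u : ℝ => (u : ℂ) ^ (-s - 1) • ((⌊u⌋₊ / u : ℝ) : ℂ))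
      (Set.Ici 1) := by
    rw [integrableOn_Ici_iff_integrableOn_Ioi]
    refine Integrable.mono' (integrableOn_Ioi_rpow_of_lt (a := -s.re - 1) (by linarith)
      zero_lt_one) hmeas.aestronglyMeasurable ?_
    refine (ae_restrict_iff' measurableSet_Ioi).2 (ae_of_all _ fun u hu => ?_)
    have hu0 : (0 : ℝ) < u := hsub hu
    rw [norm_smul, Complex.norm_cpow_eq_rpow_re_of_pos hu0, Complex.norm_real, Real.norm_eq_abs,
      abs_of_nonneg (by positivity)]
    have : (⌊u⌋₊ : ℝ) / u ≤ 1 := (div_le_one hu0).2 (Nat.floor_le hu0.le)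
    simp only [Complex.sub_re, Complex.neg_re, Complex.one_re]
    calc _ ≤ u ^ (-s.re - 1) * 1 := by gcongr
      _ = _ := mul_one _
  have hsub' : Set.Ici (1 : ℝ) ⊆ Set.Ioi 0 := Set.Ici_subset_Ioi.2 zero_lt_one
  refine ⟨?_, ?_⟩
  · exact IntegrableOn.of_forall_sdiff_eq_zero hintg measurableSet_Ioi hz
  · rw [mellin, setIntegral_eq_of_subset_of_forall_sdiff_eq_zero measurableSet_Ioi hsub' hz,
      integral_Ici_eq_integral_Ioi]
    have h1 := LSeries_eq_mul_integral' (fun _ => 1) (r := 1) zero_le_one (s := 1 + s)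
      (by simp [hs]) (by simpa using Asymptotics.isBigO_refl _ _)
    have h2 := LSeries_one_eq_riemannZeta (s := 1 + s) (by simp [hs])
    have hne : 1 + s ≠ 0 := by
      intro h; have := congrArg Complex.re h; simp at this; linarith
    rw [← h2, eq_div_iff hne]
    change _ = LSeries (fun _ => 1) (1 + s)
    rw [h1, mul_comm]
    congr 1
    refine setIntegral_congr_fun measurableSet_Ioi fun u hu => ?_
    have hu0 : (0 : ℝ) < u := hsub hu
    have hc : (u : ℂ) ≠ 0 := by exact_mod_cast hu0.ne'
    have e : (u : ℂ) ^ (-(1 + s + 1)) = (u : ℂ) ^ (-s - 1) / u := by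
      have : -(1 + s + 1) = -s - 1 - 1 := by ring
      rw [this, Complex.cpow_sub _ _ hc, Complex.cpow_one]
    simp only [smul_eq_mul, sum_const, Nat.card_Icc, add_tsub_cancel_right, nsmul_eq_mul, mul_one]
    rw [e]; push_cast; ring

open MeasureTheory in
theorem mellin_Kf (s : ℂ) (hs : 0 < s.re) :
    HasMellin (fun u : ℝ => (Kf u : ℂ)) (-s) (Hf s) := by
  obtain ⟨c1, m1⟩ := mellin_floor s hs
  obtain ⟨c2, m2⟩ := hasMellin_one_Ioc hs
  have c1' := (MellinConvergent.comp_mul_left w0_pos).2 c1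
  have m1' := mellin_comp_mul_left (fun u : ℝ => ((⌊u⌋₊ / u : ℝ) : ℂ)) (-s) w0_pos
  have c2' : MellinConvergent (fun t : ℝ => Set.indicator (Set.Ioc 0 1) (fun _ => (1 : ℂ)) t⁻¹)
      (-s) := by
    have := (MellinConvergent.comp_rpow (f := Set.indicator (Set.Ioc 0 1) (fun _ : ℝ => (1 : ℂ)))
      (s := -s) (a := -1) (by norm_num)).2 (by simpa using c2)
    simpa only [Real.rpow_neg_one] using this
  have m2' := mellin_comp_inv (Set.indicator (Set.Ioc 0 1) (fun _ : ℝ => (1 : ℂ))) (-s)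
  have h := hasMellin_sub c2' c1'
  rw [m1', m1, m2', neg_neg, m2] at h
  have e : ∀ u ∈ Set.Ioi (0 : ℝ), Set.indicator (Set.Ioc 0 1) (fun _ => (1 : ℂ)) u⁻¹ -
      ((⌊w0 * u⌋₊ / (w0 * u) : ℝ) : ℂ) = (Kf u : ℂ) := by
    intro u hu
    have hu : 0 < u := hu
    rw [Kf]
    push_cast
    congr 1
    have : u⁻¹ ∈ Set.Ioc (0 : ℝ) 1 ↔ 1 ≤ u := by
      simp only [Set.mem_Ioc, inv_pos, hu, true_and]
      exact inv_le_one₀ hu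
    by_cases h1 : 1 ≤ u
    · rw [Set.indicator_of_mem (this.2 h1), if_pos h1, Complex.ofReal_one]
    · rw [Set.indicator_of_notMem (mt this.1 h1), if_neg h1, Complex.ofReal_zero]
  have e' : ∀ u ∈ Set.Ioi (0 : ℝ), (u : ℂ) ^ (-s - 1) • (Set.indicator (Set.Ioc 0 1)
      (fun _ => (1 : ℂ)) u⁻¹ - ((⌊w0 * u⌋₊ / (w0 * u) : ℝ) : ℂ)) =
      (u : ℂ) ^ (-s - 1) • (Kf u : ℂ) := fun u hu => by rw [e u hu]
  refine ⟨?_, ?_⟩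
  · exact (integrableOn_congr_fun e' measurableSet_Ioi).1 h.1
  · have h2 := h.2
    rw [mellin, setIntegral_congr_fun measurableSet_Ioi e'] at h2
    rw [mellin, h2, Hf, smul_eq_mul]
    ring

open MeasureTheory in
/-- The discrepancy is a multiplicative convolution of the coefficients `h(n)/n` with `Kf`, so its
Mellin transform is a product. -/
theorem mellin_Dop (h : ℕ → ℝ) (s : ℂ) (hs : 0 < s.re)
    (hsum : LSeriesSummable (fun n => (h n : ℂ)) (1 + s)) :
    mellin (fun u : ℝ => (Dop h u : ℂ)) (-s) = dser h (1 + s) * Hf s := by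
  obtain ⟨cK, mK⟩ := mellin_Kf s hs
  set k : ℝ → ℂ := fun u : ℝ => (Kf u : ℂ) with hk
  set K1 : ℝ := ∫ u in Set.Ioi (0 : ℝ), ‖(u : ℂ) ^ (-s - 1) • k u‖ with hK1
  set F : ℕ → ℝ → ℂ := fun n u => ((h n / n : ℝ) : ℂ) • ((u : ℂ) ^ (-s - 1) • k ((n : ℝ)⁻¹ * u))
    with hF
  have hterm : ∀ n : ℕ, n ≠ 0 → LSeries.term (fun n => (h n : ℂ)) (1 + s) n =
      ((h n / n : ℝ) : ℂ) * (((n : ℝ)⁻¹ : ℝ) : ℂ) ^ s := by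
    intro n hn
    have hc : (n : ℂ) ≠ 0 := by exact_mod_cast hn
    have harg : Complex.arg (n : ℂ) ≠ Real.pi := by
      rw [Complex.natCast_arg]; exact Real.pi_pos.ne
    rw [LSeries.term_of_ne_zero hn, Complex.cpow_add _ _ hc, Complex.cpow_one]
    push_cast
    rw [Complex.inv_cpow _ _ harg]
    field_simp
  have hInt : ∀ n, Integrable (F n) (volume.restrict (Set.Ioi 0)) := by
    intro n
    rcases eq_or_ne n 0 with rfl | hn
    · simp [hF]
    · have hn0 : (0 : ℝ) < (n : ℝ)⁻¹ := by positivity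
      have := (MellinConvergent.comp_mul_left hn0).2 cK
      exact Integrable.smul ((h n / n : ℝ) : ℂ) this
  have hval : ∀ n, ∫ u in Set.Ioi (0 : ℝ), F n u =
      LSeries.term (fun n => (h n : ℂ)) (1 + s) n * Hf s := by
    intro n
    rcases eq_or_ne n 0 with rfl | hn
    · simp [hF]
    · have hn0 : (0 : ℝ) < (n : ℝ)⁻¹ := by positivity
      have := mellin_comp_mul_left k (-s) hn0
      rw [mK, mellin] at this
      simp only [hF]
      rw [integral_smul, this, hterm n hn, neg_neg, smul_eq_mul, smul_eq_mul, mul_assoc]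
  have hnorm : ∀ n, ∫ u in Set.Ioi (0 : ℝ), ‖F n u‖ =
      ‖LSeries.term (fun n => (h n : ℂ)) (1 + s) n‖ * K1 := by
    intro n
    rcases eq_or_ne n 0 with rfl | hn
    · simp [hF]
    · have hn0 : (0 : ℝ) < (n : ℝ)⁻¹ := by positivity
      have h1 := integral_comp_mul_left_Ioi (fun u : ℝ => ‖(u : ℂ) ^ (-s - 1) • k u‖) 0 hn0
      rw [mul_zero] at h1
      have h2 : ∀ u ∈ Set.Ioi (0 : ℝ), ‖F n u‖ = (|h n / n| * ((n : ℝ)⁻¹) ^ (s.re + 1)) *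
          ‖(((n : ℝ)⁻¹ * u : ℝ) : ℂ) ^ (-s - 1) • k ((n : ℝ)⁻¹ * u)‖ := by
        intro u hu
        have hu : 0 < u := hu
        simp only [hF]
        rw [norm_smul, norm_smul, norm_smul, Complex.norm_real,
          Complex.norm_cpow_eq_rpow_re_of_pos hu,
          Complex.norm_cpow_eq_rpow_re_of_pos (by positivity), Real.mul_rpow hn0.le hu.le,
          Real.norm_eq_abs]
        have e : (-s - 1).re = -(s.re + 1) := by simp; ring
        have e2 : ((n : ℝ)⁻¹) ^ (s.re + 1) * ((n : ℝ)⁻¹) ^ (-(s.re + 1)) = 1 := by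
          rw [← Real.rpow_add hn0]; simp
        rw [e]
        linear_combination (-(|h n / n| * u ^ (-(s.re + 1)) * ‖k ((n : ℝ)⁻¹ * u)‖)) * e2
      rw [setIntegral_congr_fun measurableSet_Ioi h2, integral_const_mul, h1, ← hK1, hterm n hn,
        norm_mul, Complex.norm_real, Complex.norm_cpow_eq_rpow_re_of_pos hn0, Real.norm_eq_abs,
        Real.rpow_add_one hn0.ne', smul_eq_mul]
      field_simp
  have hS := hasSum_integral_of_summable_integral_norm hInt (by
    simp only [hnorm]
    exact (hsum.norm).mul_right K1)
  simp only [hval] at hS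
  have hS2 : HasSum (fun n => LSeries.term (fun n => (h n : ℂ)) (1 + s) n * Hf s)
      (dser h (1 + s) * Hf s) := hsum.hasSum.mul_right _
  rw [← hS.unique hS2, mellin]
  refine setIntegral_congr_fun measurableSet_Ioi fun u hu => ?_
  have hu : 0 < u := hu
  have hw := w0_pos
  rw [tsum_eq_sum (s := Icc 1 ⌊w0 * u⌋₊), Dop_eq h u hu, Complex.ofReal_sum, smul_eq_mul,
    Finset.mul_sum]
  · refine Finset.sum_congr rfl fun n _ => ?_
    simp only [hF, hk, smul_eq_mul]
    rw [div_eq_inv_mul u]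
    push_cast; ring
  · intro n hn
    rcases eq_or_ne n 0 with rfl | hn0
    · simp [hF]
    have hp : (0 : ℝ) < n := by positivity
    have : Kf ((n : ℝ)⁻¹ * u) = 0 := by
      apply Kf_eq_zero _ (by positivity)
      rw [mem_Icc, not_and, Nat.le_floor_iff (by positivity)] at hn
      have := hn (by lia)
      rw [mul_left_comm, inv_mul_lt_iff₀ hp]; linarith
    simp [hF, hk, this]

/-! ### Mean values of the prime series -/

open MeasureTheory in
/-- A function on `(-1, ∞)` with exponential decay satisfies the hypotheses of Plancherel's theorem. -/
theorem exp_decay (h : ℝ → ℂ) (hm : Measurable h) (B δ : ℝ) (hδ : 0 < δ)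
    (h0 : ∀ w, w ≤ -1 → h w = 0) (hb : ∀ w, -1 < w → ‖h w‖ ≤ B * Real.exp (-δ * w)) :
    Integrable h ∧ MemLp h 2 ∧ ∫ w, ‖h w‖ ^ 2 ≤ B ^ 2 * (Real.exp (2 * δ) / (2 * δ)) := by
  have i1 : IntegrableOn (fun w => B * Real.exp (-δ * w)) (Set.Ioi (-1)) :=
    (integrableOn_exp_mul_Ioi (by linarith) _).const_mul B
  have i2 : IntegrableOn (fun w => B ^ 2 * Real.exp (-(2 * δ) * w)) (Set.Ioi (-1)) :=
    (integrableOn_exp_mul_Ioi (by linarith) _).const_mul _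
  have hz : ∀ w ∈ Set.univ \ Set.Ioi (-1 : ℝ), h w = 0 := fun w hw => h0 w (by simpa using hw)
  have j1 : IntegrableOn h (Set.Ioi (-1)) := by
    refine Integrable.mono' i1 hm.aestronglyMeasurable ?_
    exact (ae_restrict_iff' measurableSet_Ioi).2 (ae_of_all _ hb)
  have hb2 : ∀ w, -1 < w → ‖h w‖ ^ 2 ≤ B ^ 2 * Real.exp (-(2 * δ) * w) := by
    intro w hw
    calc _ ≤ (B * Real.exp (-δ * w)) ^ 2 := by gcongr; exact hb w hw
      _ = _ := by rw [mul_pow, ← Real.exp_nat_mul]; congr 2; push_cast; ring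
  have j2 : IntegrableOn (fun w => ‖h w‖ ^ 2) (Set.Ioi (-1)) := by
    refine Integrable.mono' i2 (hm.norm.pow_const 2).aestronglyMeasurable ?_
    refine (ae_restrict_iff' measurableSet_Ioi).2 (ae_of_all _ fun w hw => ?_)
    rw [Real.norm_eq_abs, abs_of_nonneg (by positivity)]
    exact hb2 w hw
  have hz2 : ∀ w ∈ Set.univ \ Set.Ioi (-1 : ℝ), ‖h w‖ ^ 2 = 0 := fun w hw => by
    rw [hz w hw]; simp
  have k1 : Integrable h :=
    integrableOn_univ.1 (j1.of_forall_sdiff_eq_zero MeasurableSet.univ hz)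
  have k2 : Integrable (fun w => ‖h w‖ ^ 2) :=
    integrableOn_univ.1 (j2.of_forall_sdiff_eq_zero MeasurableSet.univ hz2)
  refine ⟨k1, (memLp_two_iff_integrable_sq_norm hm.aestronglyMeasurable).2 k2, ?_⟩
  rw [← setIntegral_univ, setIntegral_eq_of_subset_of_forall_sdiff_eq_zero MeasurableSet.univ
    (Set.subset_univ _) hz2]
  calc _ ≤ ∫ w in Set.Ioi (-1 : ℝ), B ^ 2 * Real.exp (-(2 * δ) * w) :=
        setIntegral_mono_on j2 i2 measurableSet_Ioi hb2
    _ = _ := by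
        rw [integral_const_mul, integral_exp_mul_Ioi (by linarith)]
        congr 1
        have : -(2 * δ) * -1 = 2 * δ := by ring
        rw [this, neg_div_neg_eq]

open ArithmeticFunction in
theorem summable_cpr (f : ℕ → ℝ) (hf : ∀ n, f n ∈ Set.Icc (-1 : ℝ) 1) (s : ℂ) (hs : 1 < s.re) :
    LSeriesSummable (fun n => (cpr f n : ℂ)) s := by
  refine Summable.of_norm_bounded (LSeriesSummable_vonMangoldt hs).norm fun n => ?_
  refine LSeries.norm_term_le s ?_
  rw [Complex.norm_real, Complex.norm_real, Real.norm_of_nonneg vonMangoldt_nonneg]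
  exact abs_cpr_le f hf n

theorem summable_f (f : ℕ → ℝ) (hf : ∀ n, f n ∈ Set.Icc (-1 : ℝ) 1) (s : ℂ) (hs : 1 < s.re) :
    LSeriesSummable (fun n => (f n : ℂ)) s := by
  refine LSeriesSummable_of_bounded_of_one_lt_re (m := 1) (fun n _ => ?_) hs
  rw [Complex.norm_real]; exact abs_le.2 (hf n)

theorem afun_conv (f : ℕ → ℝ) : (fun n => (afun f n : ℂ)) =
    LSeries.convolution (fun n => (cpr f n : ℂ)) (fun n => (f n : ℂ)) := by
  rw [LSeries.convolution_def]
  funext n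
  rw [Nat.sum_divisorsAntidiagonal (fun a b => (cpr f a : ℂ) * (f b : ℂ)), afun]
  push_cast; rfl

theorem dser_afun (f : ℕ → ℝ) (hf : ∀ n, f n ∈ Set.Icc (-1 : ℝ) 1) (s : ℂ) (hs : 1 < s.re) :
    LSeriesSummable (fun n => (afun f n : ℂ)) s ∧
    dser (afun f) s = dser (cpr f) s * dser f s := by
  have h1 := summable_cpr f hf s hs
  have h2 := summable_f f hf s hs
  rw [dser, afun_conv]
  exact ⟨h1.convolution h2, LSeries_convolution' h1 h2⟩

open MeasureTheory FourierTransform in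
/-- Partial summation for the prime series around height `T`: the function `h` is
`e^{-(1+σ)w} ∑_{n ≤ e^w} cpr f n · n^{-2πiT}`, which Chebyshev's bound makes `O(e^{-σw})`. -/
theorem cpr_fourier (f : ℕ → ℝ) (hf : ∀ n, f n ∈ Set.Icc (-1 : ℝ) 1) (σ T : ℝ) (h0 : 0 < σ) :
    ∃ h : ℝ → ℂ, Integrable h ∧ MemLp h 2 ∧
      ∫ w, ‖h w‖ ^ 2 ≤ 6 ^ 2 * (Real.exp (2 * σ) / (2 * σ)) ∧
      ∀ η : ℝ, dser (cpr f) (1 + σ + Complex.I * ((2 * Real.pi * (T + η) : ℝ) : ℂ)) =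
        (1 + σ + Complex.I * ((2 * Real.pi * η : ℝ) : ℂ)) * 𝓕 h η := by
  set c : ℕ → ℂ := fun n => (cpr f n : ℂ) * (n : ℂ) ^ (-(Complex.I * ((2 * Real.pi * T : ℝ) : ℂ)))
    with hc
  have hcn : ∀ n, ‖c n‖ ≤ ArithmeticFunction.vonMangoldt n := by
    intro n
    rcases eq_or_ne n 0 with rfl | hn
    · simp [hc, cpr]
    have : ‖(n : ℂ) ^ (-(Complex.I * ((2 * Real.pi * T : ℝ) : ℂ)))‖ = 1 := by
      rw [Complex.norm_natCast_cpow_of_pos (by lia)]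
      simp
    rw [hc]; simp only
    rw [norm_mul, this, mul_one, Complex.norm_real]
    exact abs_cpr_le f hf n
  set A : ℝ → ℂ := fun u => ∑ k ∈ Icc 1 ⌊u⌋₊, c k with hA
  have hAb : ∀ u, 0 ≤ u → ‖A u‖ ≤ 6 * u := by
    intro u hu
    refine le_trans ?_ (psi_le_six u hu)
    rw [psi_eq_Icc]
    exact (norm_sum_le _ _).trans (Finset.sum_le_sum fun n _ => hcn n)
  have hAz : ∀ u, u < 1 → A u = 0 := by
    intro u hu
    rw [hA]; simp [Nat.floor_eq_zero.2 hu]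
  have hAm : Measurable A :=
    (measurable_from_nat (f := fun N : ℕ => ∑ k ∈ Icc 1 N, c k)).comp Nat.measurable_floor
  set h : ℝ → ℂ := fun w => Real.exp (-(1 + σ) * w) • A (Real.exp w) with hh
  have hhm : Measurable h := by
    have := hAm.comp Real.measurable_exp
    rw [hh]
    exact Measurable.smul (f := fun w : ℝ => Real.exp (-(1 + σ) * w)) (by fun_prop) this
  obtain ⟨e1, e2, e3⟩ := exp_decay h hhm 6 σ h0 (fun w hw => by
    rw [hh]; simp only
    rw [hAz, smul_zero]
    rw [Real.exp_lt_one_iff]; linarith) (fun w hw => by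
    rw [hh]; simp only
    rw [norm_smul, Real.norm_eq_abs, Real.abs_exp]
    calc _ ≤ Real.exp (-(1 + σ) * w) * (6 * Real.exp w) := by
          gcongr; exact hAb _ (Real.exp_pos w).le
      _ = 6 * (Real.exp (-(1 + σ) * w) * Real.exp w) := by ring
      _ = _ := by rw [← Real.exp_add]; congr 2; ring)
  refine ⟨h, e1, e2, e3, fun η => ?_⟩
  set s : ℂ := 1 + σ + Complex.I * ((2 * Real.pi * η : ℝ) : ℂ) with hs
  have hre : s.re = 1 + σ := by simp [hs]
  have him : s.im = 2 * Real.pi * η := by simp [hs]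
  have l1 : dser (cpr f) (1 + σ + Complex.I * ((2 * Real.pi * (T + η) : ℝ) : ℂ)) = LSeries c s := by
    rw [dser, LSeries, LSeries]
    congr 1
    funext n
    rcases eq_or_ne n 0 with rfl | hn
    · simp
    have hnc : (n : ℂ) ≠ 0 := by exact_mod_cast hn
    rw [LSeries.term_of_ne_zero hn, LSeries.term_of_ne_zero hn, hc]
    simp only
    rw [mul_div_assoc, ← Complex.cpow_sub _ _ hnc, div_eq_mul_inv, ← Complex.cpow_neg]
    congr 2
    rw [hs]; push_cast; ring
  have l2 := LSeries_eq_mul_integral' c (r := 1) zero_le_one (s := s) (by rw [hre]; linarith) (by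
    refine Asymptotics.IsBigO.of_bound 6 (Filter.Eventually.of_forall fun n => ?_)
    have := psi_le_six n (Nat.cast_nonneg n)
    rw [psi_eq_Icc, Nat.floor_natCast] at this
    rw [Real.norm_eq_abs, abs_of_nonneg (Finset.sum_nonneg fun _ _ => norm_nonneg _),
      Real.rpow_one, Real.norm_natCast]
    exact (Finset.sum_le_sum fun k _ => hcn k).trans this)
  rw [l1, l2]
  congr 1
  have l3 := mellin_eq_fourier (fun u => A u⁻¹) (s := s)
  have l4 : mellin (fun u => A u⁻¹) s = mellin A (-s) := mellin_comp_inv A s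
  have l5 : s.im / (2 * Real.pi) = η := by rw [him]; field_simp
  have l6 : (fun u : ℝ => Real.exp (-s.re * u) • A (Real.exp (-u))⁻¹) = h := by
    funext u; rw [hre, ← Real.exp_neg, neg_neg]
  rw [l5, l6, l4] at l3
  rw [← l3, mellin]
  have hz : ∀ u ∈ Set.Ioi (0 : ℝ) \ Set.Ici 1, (u : ℂ) ^ (-s - 1) • A u = 0 := by
    intro u hu
    rw [hAz u (by simpa using hu.2), smul_zero]
  rw [setIntegral_eq_of_subset_of_forall_sdiff_eq_zero measurableSet_Ioi
    (Set.Ici_subset_Ioi.2 zero_lt_one) hz, integral_Ici_eq_integral_Ioi]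
  refine integral_congr_ae (ae_of_all _ fun u => ?_)
  simp only [smul_eq_mul, hA]
  rw [mul_comm]; congr 2; ring

open MeasureTheory FourierTransform in
/-- On any interval of length `1` the prime series has mean square `O(1/σ)`, whereas the pointwise
bound `O(1/σ)` would only give `O(1/σ²)`. -/
theorem cpr_meansq : ∃ C : ℝ, 0 < C ∧ ∀ f : ℕ → ℝ, (∀ n, f n ∈ Set.Icc (-1 : ℝ) 1) →
    ∀ σ T : ℝ, 0 < σ → σ ≤ 1 →
    ∫⁻ ξ in Set.Ioc T (T + 1), ENNReal.ofReal
      (‖dser (cpr f) (1 + σ + Complex.I * ((2 * Real.pi * ξ : ℝ) : ℂ))‖ ^ 2) ≤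
      ENNReal.ofReal (C / σ) := by
  refine ⟨10 ^ 2 * (6 ^ 2 * Real.exp 2 / 2), by positivity, fun f hf σ T h0 h1 => ?_⟩
  obtain ⟨h, i1, i2, i3, i4⟩ := cpr_fourier f hf σ T h0
  obtain ⟨p1, p2⟩ := plancherel_integral h i1 i2
  calc _ ≤ ∫⁻ ξ in Set.Ioc T (T + 1), ENNReal.ofReal (10 ^ 2 * ‖𝓕 h (ξ - T)‖ ^ 2) := by
        refine setLIntegral_mono' measurableSet_Ioc fun ξ hξ => ?_
        apply ENNReal.ofReal_le_ofReal
        have := i4 (ξ - T)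
        rw [add_sub_cancel] at this
        rw [this, norm_mul, mul_pow]
        gcongr
        calc _ ≤ ‖(1 + σ : ℂ)‖ + ‖Complex.I * ((2 * Real.pi * (ξ - T) : ℝ) : ℂ)‖ := norm_add_le _ _
          _ = |1 + σ| + |2 * Real.pi * (ξ - T)| := by
              rw [norm_mul, Complex.norm_I, one_mul, Complex.norm_real, ← Complex.ofReal_one,
                ← Complex.ofReal_add, Complex.norm_real]; rfl
          _ ≤ 2 + 2 * 4 * 1 := by
              have hp := Real.pi_le_four
              have hp0 := Real.pi_pos
              rw [abs_of_pos (by linarith), abs_of_nonneg (by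
                have := hξ.1; apply mul_nonneg (by positivity); linarith)]
              have := hξ.2; have := hξ.1
              gcongr <;> linarith
          _ = 10 := by norm_num
    _ ≤ ∫⁻ ξ, ENNReal.ofReal (10 ^ 2 * ‖𝓕 h (ξ - T)‖ ^ 2) := setLIntegral_le_lintegral _ _
    _ = ∫⁻ ξ, ENNReal.ofReal (10 ^ 2 * ‖𝓕 h ξ‖ ^ 2) :=
        lintegral_sub_right_eq_self (fun ξ => ENNReal.ofReal (10 ^ 2 * ‖𝓕 h ξ‖ ^ 2)) T
    _ = ENNReal.ofReal (∫ ξ, 10 ^ 2 * ‖𝓕 h ξ‖ ^ 2) :=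
        (ofReal_integral_eq_lintegral_ofReal (p1.const_mul _)
          (ae_of_all _ fun ξ => by positivity)).symm
    _ ≤ _ := by
        apply ENNReal.ofReal_le_ofReal
        rw [integral_const_mul, p2]
        calc _ ≤ 10 ^ 2 * (6 ^ 2 * (Real.exp (2 * σ) / (2 * σ))) := by gcongr
          _ ≤ 10 ^ 2 * (6 ^ 2 * (Real.exp 2 / (2 * σ))) := by
              gcongr; linarith
          _ = _ := by field_simp

/-! ### The mean square of the discrepancy -/

/-- A summable majorant of `(1 + |ξ|)^{-8/5}` on `(T, T+1]`. -/
noncomputable def bT (T : ℤ) : ℝ := if T = 0 then 1 else |(T : ℝ)| ^ (-(8 / 5) : ℝ)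

theorem bT_nonneg (T : ℤ) : 0 ≤ bT T := by
  rw [bT]; split_ifs <;> positivity

theorem summable_bT : Summable bT := by
  have h := Real.summable_abs_int_rpow (b := 8 / 5) (by norm_num)
  have h2 : Summable (fun T : ℤ => if T = 0 then (1 : ℝ) else 0) :=
    summable_of_ne_finset_zero (s := {0}) (by intro b hb; simp at hb; simp [hb])
  refine Summable.of_nonneg_of_le bT_nonneg (fun T => ?_) (h2.add h)
  rw [bT]; split_ifs with hT
  · have : 0 ≤ |(T : ℝ)| ^ (-(8 / 5) : ℝ) := by positivity
    linarith
  · simp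

theorem weight_le_bT (T : ℤ) (ξ : ℝ) (h : ξ ∈ Set.Ioc (T : ℝ) (T + 1)) :
    ((1 + |2 * Real.pi * ξ|) ^ (-(4 / 5) : ℝ)) ^ 2 ≤ bT T := by
  have hp := Real.pi_gt_three
  rw [← Real.rpow_mul_natCast (by positivity)]
  have e : (-(4 / 5) : ℝ) * (2 : ℕ) = -(8 / 5) := by norm_num
  rw [e, abs_mul, abs_of_pos (by positivity : 0 < 2 * Real.pi), bT]
  have h1 : |ξ| ≤ 2 * Real.pi * |ξ| := by nlinarith [abs_nonneg ξ]
  split_ifs with hT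
  · exact Real.rpow_le_one_of_one_le_of_nonpos (by nlinarith [abs_nonneg ξ]) (by norm_num)
  · apply Real.rpow_le_rpow_of_nonpos (by positivity) _ (by norm_num)
    have : |(T : ℝ)| ≤ |ξ| + 1 := by
      calc |(T : ℝ)| = |ξ - (ξ - T)| := by rw [sub_sub_cancel]
        _ ≤ |ξ| + |ξ - T| := abs_sub _ _
        _ ≤ _ := by
          gcongr; rw [abs_le]; constructor <;> linarith [h.1, h.2]
    linarith

theorem abs_Dop_afun_le (f : ℕ → ℝ) (hf : ∀ n, f n ∈ Set.Icc (-1 : ℝ) 1) (w : ℝ) (hw : -1 < w) :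
    |Dop (afun f) (Real.exp w)| ≤ 1 + w := by
  have hw0 := w0_pos
  set x := Real.exp w with hx
  have hx0 : 0 < x := Real.exp_pos w
  refine (abs_Dop_le _ x hx0).trans ?_
  rcases lt_or_ge (w0 * x) 1 with h | h
  · rw [Nat.floor_eq_zero.2 h]; simp; linarith
  · have hl : Real.log (w0 * x) ≤ 1 + w := by
      rw [Real.log_mul hw0.ne' hx0.ne', hx, Real.log_exp, w0, Real.log_exp]
      linarith [Real.one_half_lt_eulerMascheroniConstant]
    refine le_trans ?_ hl
    have hl0 : 0 ≤ Real.log (w0 * x) := Real.log_nonneg h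
    rw [div_le_iff₀ (by positivity)]
    calc _ ≤ ∑ n ∈ Icc 1 ⌊w0 * x⌋₊, Real.log (w0 * x) := by
          refine Finset.sum_le_sum fun n hn => (abs_afun_le f hf n).trans ?_
          rw [mem_Icc, Nat.le_floor_iff (by positivity)] at hn
          exact Real.log_le_log (by exact_mod_cast hn.1) hn.2
      _ = ⌊w0 * x⌋₊ * Real.log (w0 * x) := by simp
      _ ≤ (w0 * x) * Real.log (w0 * x) := by gcongr; exact Nat.floor_le (by positivity)
      _ = _ := mul_comm _ _

theorem Dop_eq_zero (h : ℕ → ℝ) (w : ℝ) (hw : w ≤ -1) : Dop h (Real.exp w) = 0 := by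
  rw [Dop_eq h _ (Real.exp_pos w), Nat.floor_eq_zero.2]
  · simp
  · have h1 := w0_lt
    have h2 := w0_pos
    have h3 : Real.exp w ≤ Real.exp (-1) := Real.exp_le_exp.2 hw
    have h4 : Real.exp (-1) < 1 / 2 := by
      rw [Real.exp_neg, ← one_div]
      exact one_div_lt_one_div_of_lt (by norm_num) (by linarith [Real.exp_one_gt_d9])
    nlinarith

open MeasureTheory FourierTransform in
/-- Plancherel's theorem for `e^{-σw} D_a(e^w)`: the factor `F H` is bounded pointwise by `dser_Hf`,
and the prime series in mean square by `cpr_meansq`. -/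
theorem Dop_afun_meansq : ∃ C : ℝ, 0 < C ∧ ∀ f : ℕ → ℝ, (∀ n, f n ∈ Set.Icc (-1 : ℝ) 1) →
    IsMult f → ∀ σ : ℝ, 0 < σ → σ ≤ 1 →
    Integrable (fun w => (Real.exp (-σ * w) * |Dop (afun f) (Real.exp w)|) ^ 2) ∧
    ∫ w, (Real.exp (-σ * w) * |Dop (afun f) (Real.exp w)|) ^ 2 ≤
      C * (σ ^ (-(2 / Real.pi))) ^ 2 / σ := by
  obtain ⟨A, hA0, hA⟩ := dser_Hf
  obtain ⟨B, hB0, hB⟩ := cpr_meansq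
  have hS0 : 0 < ∑' T, bT T := by
    refine summable_bT.tsum_pos bT_nonneg 0 ?_
    simp [bT]
  refine ⟨A ^ 2 * B * ∑' T, bT T, by positivity, fun f hf hm σ h0 h1 => ?_⟩
  set h : ℝ → ℂ := fun w => Real.exp (-σ * w) • ((Dop (afun f) (Real.exp w) : ℝ) : ℂ) with hh
  have hmeas : Measurable h := by
    have h2 : Measurable fun w => Dop (afun f) (Real.exp w) :=
      (measurable_Dop (afun f)).comp Real.measurable_exp
    rw [hh]
    exact Measurable.smul (f := fun w : ℝ => Real.exp (-σ * w)) (by fun_prop) (by fun_prop)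
  obtain ⟨i1, i2, -⟩ := exp_decay h hmeas (2 / σ * Real.exp (σ / 2)) (σ / 2) (by positivity)
    (fun w hw => by
      rw [hh]; simp only
      rw [Dop_eq_zero _ _ hw]; simp)
    (fun w hw => by
      rw [hh]; simp only
      rw [norm_smul, Real.norm_eq_abs, Real.abs_exp, Complex.norm_real, Real.norm_eq_abs]
      have e1 := abs_Dop_afun_le f hf w hw
      have e2 : 1 + w ≤ 2 / σ * Real.exp (σ / 2 * (1 + w)) := by
        have := Real.add_one_le_exp (σ / 2 * (1 + w))
        calc 1 + w = 2 / σ * (σ / 2 * (1 + w)) := by field_simp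
          _ ≤ _ := by gcongr; linarith
      calc _ ≤ Real.exp (-σ * w) * (2 / σ * Real.exp (σ / 2 * (1 + w))) := by
            gcongr; exact e1.trans e2
        _ = 2 / σ * (Real.exp (-σ * w) * Real.exp (σ / 2 * (1 + w))) := by ring
        _ = 2 / σ * (Real.exp (σ / 2) * Real.exp (-(σ / 2) * w)) := by
            rw [← Real.exp_add, ← Real.exp_add]; congr 2; ring
        _ = _ := by ring)
  obtain ⟨p1, p2⟩ := plancherel_integral h i1 i2
  have hsq : (fun w => ‖h w‖ ^ 2) =
      fun w => (Real.exp (-σ * w) * |Dop (afun f) (Real.exp w)|) ^ 2 := by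
    funext w
    rw [hh]; simp only
    rw [norm_smul, Real.norm_eq_abs, Real.abs_exp, Complex.norm_real, Real.norm_eq_abs]
  rw [← hsq]
  refine ⟨(memLp_two_iff_integrable_sq_norm i1.1).1 i2, ?_⟩
  rw [← p2]
  have hF : ∀ ξ : ℝ, 𝓕 h ξ =
      dser (cpr f) (1 + σ + Complex.I * ((2 * Real.pi * ξ : ℝ) : ℂ)) *
      (dser f (1 + σ + Complex.I * ((2 * Real.pi * ξ : ℝ) : ℂ)) *
        Hf (σ + Complex.I * ((2 * Real.pi * ξ : ℝ) : ℂ))) := by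
    intro ξ
    set s : ℂ := σ + Complex.I * ((2 * Real.pi * ξ : ℝ) : ℂ) with hs
    have hre : s.re = σ := by simp [hs]
    have him : s.im = 2 * Real.pi * ξ := by simp [hs]
    have e : (1 : ℂ) + σ + Complex.I * ((2 * Real.pi * ξ : ℝ) : ℂ) = 1 + s := by rw [hs]; ring
    have hre1 : 1 < (1 + s).re := by simp [hre, h0]
    obtain ⟨a1, a2⟩ := dser_afun f hf (1 + s) hre1
    have l0 := mellin_Dop (afun f) s (by rw [hre]; exact h0) a1
    have l3 := mellin_eq_fourier (fun u => ((Dop (afun f) u⁻¹ : ℝ) : ℂ)) (s := s)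
    have l4 := mellin_comp_inv (fun u => ((Dop (afun f) u : ℝ) : ℂ)) s
    have l5 : s.im / (2 * Real.pi) = ξ := by rw [him]; field_simp
    have l6 : (fun u : ℝ => Real.exp (-s.re * u) •
        ((Dop (afun f) (Real.exp (-u))⁻¹ : ℝ) : ℂ)) = h := by
      funext u; rw [hre, ← Real.exp_neg, neg_neg]
    rw [l5, l6, l4, l0, a2, mul_assoc] at l3
    rw [← l3, e]
  have hK : 0 ≤ A ^ 2 * (σ ^ (-(2 / Real.pi))) ^ 2 := by positivity
  have hpt : ∀ (T : ℤ), ∀ ξ ∈ Set.Ioc (T : ℝ) (T + 1), ENNReal.ofReal (‖𝓕 h ξ‖ ^ 2) ≤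
      ENNReal.ofReal (‖dser (cpr f) (1 + σ + Complex.I * ((2 * Real.pi * ξ : ℝ) : ℂ))‖ ^ 2) *
      ENNReal.ofReal (A ^ 2 * (σ ^ (-(2 / Real.pi))) ^ 2 * bT T) := by
    intro T ξ hξ
    rw [← ENNReal.ofReal_mul (by positivity)]
    apply ENNReal.ofReal_le_ofReal
    rw [hF, norm_mul, mul_pow]
    gcongr
    calc _ ≤ (A * σ ^ (-(2 / Real.pi)) * (1 + |2 * Real.pi * ξ|) ^ (-(4 / 5) : ℝ)) ^ 2 := by
          gcongr; exact hA f hf hm σ (2 * Real.pi * ξ) h0 h1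
      _ = A ^ 2 * (σ ^ (-(2 / Real.pi))) ^ 2 * ((1 + |2 * Real.pi * ξ|) ^ (-(4 / 5) : ℝ)) ^ 2 := by
          ring
      _ ≤ _ := by gcongr; exact weight_le_bT T ξ hξ
  have hlin : ∫⁻ ξ, ENNReal.ofReal (‖𝓕 h ξ‖ ^ 2) ≤
      ENNReal.ofReal (A ^ 2 * B * (∑' T, bT T) * (σ ^ (-(2 / Real.pi))) ^ 2 / σ) := by
    rw [← setLIntegral_univ, ← iUnion_Ioc_intCast ℝ,
      lintegral_iUnion (fun _ => measurableSet_Ioc) (Set.pairwise_disjoint_Ioc_intCast ℝ)]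
    calc _ ≤ ∑' T : ℤ, ENNReal.ofReal (B / σ) *
          ENNReal.ofReal (A ^ 2 * (σ ^ (-(2 / Real.pi))) ^ 2 * bT T) := by
          refine ENNReal.tsum_le_tsum fun T => ?_
          refine (setLIntegral_mono' measurableSet_Ioc (hpt T)).trans ?_
          rw [lintegral_mul_const' _ _ ENNReal.ofReal_ne_top]
          gcongr
          exact hB f hf σ T h0 h1
      _ = ∑' T : ℤ, ENNReal.ofReal (B / σ * (A ^ 2 * (σ ^ (-(2 / Real.pi))) ^ 2 * bT T)) := by
          congr 1; funext T; rw [ENNReal.ofReal_mul (p := B / σ) (by positivity)]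
      _ = ENNReal.ofReal (∑' T : ℤ, B / σ * (A ^ 2 * (σ ^ (-(2 / Real.pi))) ^ 2 * bT T)) := by
          rw [ENNReal.ofReal_tsum_of_nonneg]
          · intro T; have := bT_nonneg T; positivity
          · exact (summable_bT.mul_left _).mul_left _
      _ = _ := by rw [tsum_mul_left, tsum_mul_left]; congr 1; ring
  rw [← ofReal_integral_eq_lintegral_ofReal p1 (ae_of_all _ fun ξ => by positivity)] at hlin
  exact (ENNReal.ofReal_le_ofReal_iff (by positivity)).1 hlin

/-! ### From mean squares to a pointwise bound -/

open MeasureTheory in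
/-- The average of the discrepancy over a dyadic block, from the mean square with `σ = 1/V` and the
recursion `w D(e^w) = D_a(e^w) + O(1)`. -/
theorem dyadic_bound : ∃ C : ℝ, 0 < C ∧ ∀ f : ℕ → ℝ, (∀ n, f n ∈ Set.Icc (-1 : ℝ) 1) →
    IsMult f → ∀ V : ℝ, 1 ≤ V →
    ∫ w in Set.Ioc V (2 * V), |Dop f (Real.exp w)| ≤ C * V ^ (2 / Real.pi) := by
  obtain ⟨A, hA0, hA⟩ := Dop_afun_meansq
  obtain ⟨B, hB0, hB⟩ := Dop_recursion
  refine ⟨Real.exp 4 * A + 1 + B, by positivity, fun f hf hm V hV => ?_⟩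
  have hV0 : 0 < V := by linarith
  set L := V ^ (2 / Real.pi) with hL
  have hL1 : 1 ≤ L := Real.one_le_rpow hV (by have := Real.pi_pos; positivity)
  have hL0 : 0 < L := by linarith
  obtain ⟨i1, i2⟩ := hA f hf hm (1 / V) (by positivity) ((div_le_one hV0).2 hV)
  set E : ℝ → ℝ := fun w => (Real.exp (-(1 / V) * w) * |Dop (afun f) (Real.exp w)|) ^ 2 with hE
  have e0 : (1 / V) ^ (-(2 / Real.pi)) = L := by
    rw [one_div, Real.inv_rpow hV0.le, Real.rpow_neg hV0.le, inv_inv]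
  rw [e0] at i2
  have hpt : ∀ w ∈ Set.Ioc V (2 * V), |Dop f (Real.exp w)| ≤
      1 / V * (Real.exp 4 / L * E w + (L + B)) := by
    intro w hw
    have hw0 : 0 < w := hV0.trans hw.1
    have h1 := hB f hf hm (Real.exp w) (Real.one_le_exp hw0.le)
    rw [Real.log_exp] at h1
    set D := |Dop (afun f) (Real.exp w)| with hD
    have hD0 : 0 ≤ D := abs_nonneg _
    have h2 : w * |Dop f (Real.exp w)| ≤ D + B := by
      calc w * |Dop f (Real.exp w)| = |w * Dop f (Real.exp w)| := by
            rw [abs_mul, abs_of_pos hw0]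
        _ = |Dop (afun f) (Real.exp w) + (w * Dop f (Real.exp w) - Dop (afun f) (Real.exp w))| := by
            congr 1; ring
        _ ≤ _ := (abs_add_le _ _).trans (by gcongr)
    have h3 : D ^ 2 ≤ Real.exp 4 * E w := by
      have : E w = Real.exp (-(2 / V * w)) * D ^ 2 := by
        simp only [hE]
        rw [mul_pow, ← Real.exp_nat_mul]
        congr 2; push_cast; ring
      rw [this, ← mul_assoc, ← Real.exp_add]
      have h4 : 2 / V * w ≤ 4 := by
        rw [div_mul_eq_mul_div, div_le_iff₀ hV0]; linarith [hw.2]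
      have : 1 ≤ Real.exp (4 + -(2 / V * w)) := Real.one_le_exp (by linarith)
      nlinarith [sq_nonneg D]
    -- Young's inequality; the weight `L` is the size of `D` in mean square over the block.
    have h5 : D ≤ Real.exp 4 / L * E w + L := by
      have : D ≤ D ^ 2 / L + L := by
        rw [← sub_le_iff_le_add, le_div_iff₀ hL0]
        nlinarith [sq_nonneg (D - L), sq_nonneg D, sq_nonneg L]
      calc D ≤ D ^ 2 / L + L := this
        _ ≤ Real.exp 4 * E w / L + L := by gcongr
        _ = _ := by ring
    rw [one_div, ← div_eq_inv_mul, le_div_iff₀ hV0]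
    calc |Dop f (Real.exp w)| * V ≤ |Dop f (Real.exp w)| * w := by gcongr; exact hw.1.le
      _ ≤ _ := by linarith
  have hEi : IntegrableOn E (Set.Ioc V (2 * V)) := i1.integrableOn
  have hE0 : ∀ w, 0 ≤ E w := fun w => sq_nonneg _
  have hci : IntegrableOn (fun _ : ℝ => L + B) (Set.Ioc V (2 * V)) := by simp
  calc _ ≤ ∫ w in Set.Ioc V (2 * V), 1 / V * (Real.exp 4 / L * E w + (L + B)) :=
        setIntegral_mono_on (integrableOn_Dop f hf _ _)
          (((hEi.const_mul _).add hci).const_mul _) measurableSet_Ioc hpt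
    _ = 1 / V * (Real.exp 4 / L * (∫ w in Set.Ioc V (2 * V), E w) + V * (L + B)) := by
        rw [integral_const_mul, integral_add (hEi.const_mul _) hci, integral_const_mul,
          setIntegral_const, smul_eq_mul]
        congr 3
        rw [Real.volume_real_Ioc_of_le (by linarith)]; ring
    _ ≤ 1 / V * (Real.exp 4 / L * (A * L ^ 2 / (1 / V)) + V * (L + B)) := by
        gcongr
        exact (setIntegral_le_integral i1 (ae_of_all _ hE0)).trans i2
    _ = Real.exp 4 * A * L + L + B * 1 := by field_simp; ring
    _ ≤ Real.exp 4 * A * L + L + B * L := by gcongr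
    _ = _ := by ring

theorem three_fifths_le_two_div_pi : (3 / 5 : ℝ) ≤ 2 / Real.pi := by
  have := Real.pi_lt_d2
  have := Real.pi_pos
  rw [le_div_iff₀ this]; linarith

theorem two_div_pi_le_one : 2 / Real.pi ≤ 1 := by
  rw [div_le_one Real.pi_pos]; linarith [Real.pi_gt_three]

open MeasureTheory in
/-- Summation of `dyadic_bound` over the blocks `(U/2, U], (U/4, U/2], …`. -/
theorem integral_Dop_bound : ∃ K : ℝ, 0 < K ∧ ∀ f : ℕ → ℝ, (∀ n, f n ∈ Set.Icc (-1 : ℝ) 1) →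
    IsMult f → ∀ U : ℝ, 1 ≤ U →
    ∫ w in Set.Ioc 0 U, |Dop f (Real.exp w)| ≤ K * U ^ (2 / Real.pi) := by
  obtain ⟨C, hC0, hC⟩ := dyadic_bound
  refine ⟨3 * C + 2, by positivity, fun f hf hm => ?_⟩
  set β := 2 / Real.pi with hβ
  have hβ1 : 3 / 5 ≤ β := three_fifths_le_two_div_pi
  -- The block sums grow geometrically, so the halving induction closes with a fixed constant.
  have h2β : (7 / 5 : ℝ) ≤ 2 ^ β := by
    calc (7 / 5 : ℝ) ≤ 2 ^ (1 / 2 : ℝ) := by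
          rw [← Real.sqrt_eq_rpow]; exact Real.le_sqrt_of_sq_le (by norm_num)
      _ ≤ _ := Real.rpow_le_rpow_of_exponent_le (by norm_num) (by linarith)
  have triv : ∀ U : ℝ, 0 ≤ U → ∫ w in Set.Ioc 0 U, |Dop f (Real.exp w)| ≤ U := by
    intro U hU
    calc _ ≤ ∫ w in Set.Ioc 0 U, (1 : ℝ) :=
          setIntegral_mono_on (integrableOn_Dop f hf _ _) (by simp) measurableSet_Ioc
            fun w _ => abs_Dop_le_one f hf _ (Real.exp_pos w)
      _ = U := by
          rw [setIntegral_const, Real.volume_real_Ioc_of_le hU]; simp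
  have small : ∀ U : ℝ, 1 ≤ U → U ≤ 2 →
      ∫ w in Set.Ioc 0 U, |Dop f (Real.exp w)| ≤ (3 * C + 2) * U ^ β := by
    intro U h1 h2
    have : 1 ≤ U ^ β := Real.one_le_rpow h1 (by linarith)
    have := triv U (by linarith)
    nlinarith
  have key : ∀ k : ℕ, ∀ U : ℝ, 1 ≤ U → U ≤ 2 ^ k →
      ∫ w in Set.Ioc 0 U, |Dop f (Real.exp w)| ≤ (3 * C + 2) * U ^ β := by
    intro k
    induction k with
    | zero =>
      intro U h1 h2
      exact small U h1 (by simp at h2; linarith)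
    | succ k ih =>
      intro U h1 h2
      rcases le_or_gt U 2 with h3 | h3
      · exact small U h1 h3
      · have a1 := ih (U / 2) (by linarith) (by rw [pow_succ] at h2; linarith)
        have a2 := hC f hf hm (U / 2) (by linarith)
        rw [mul_div_cancel₀ U (two_ne_zero)] at a2
        rw [← Set.Ioc_union_Ioc_eq_Ioc (by linarith : 0 ≤ U / 2) (by linarith : U / 2 ≤ U),
          setIntegral_union (Set.Ioc_disjoint_Ioc_of_le le_rfl) measurableSet_Ioc
            (integrableOn_Dop f hf _ _) (integrableOn_Dop f hf _ _)]
        have e : U ^ β = 2 ^ β * (U / 2) ^ β := by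
          rw [← Real.mul_rpow (by norm_num) (by linarith), mul_div_cancel₀ U (two_ne_zero)]
        have hp : 0 ≤ (U / 2) ^ β := by positivity
        rw [e]
        calc _ ≤ (3 * C + 2) * (U / 2) ^ β + C * (U / 2) ^ β := by gcongr
          _ = (4 * C + 2) * (U / 2) ^ β := by ring
          _ ≤ ((3 * C + 2) * (7 / 5)) * (U / 2) ^ β := by gcongr; linarith
          _ = (3 * C + 2) * (7 / 5 * (U / 2) ^ β) := by ring
          _ ≤ _ := by gcongr
  intro U hU
  obtain ⟨k, hk⟩ := pow_unbounded_of_one_lt U (by norm_num : (1 : ℝ) < 2)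
  exact key k U hU hk.le

/-- The bound for the discrepancy without the term `|M̃_g(w₀ x)| / log x`. -/
theorem Dop_bound : ∃ C : ℝ, 0 < C ∧ ∀ f : ℕ → ℝ, (∀ n, f n ∈ Set.Icc (-1 : ℝ) 1) →
    IsMult f → ∀ x : ℝ, 3 ≤ x → |Dop f x| ≤ C * (1 / (Real.log x) ^ ((1 : ℝ) - 2 / Real.pi)) := by
  obtain ⟨A, hA0, hA⟩ := Dop_le_average
  obtain ⟨K, hK0, hK⟩ := integral_Dop_bound
  refine ⟨2 * A * K + A + 4, by positivity, fun f hf hm x hx => ?_⟩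
  have hb1 := three_fifths_le_two_div_pi
  have hb2 := two_div_pi_le_one
  set β := 2 / Real.pi with hβ
  have hl1 : 1 ≤ Real.log x := by
    rw [Real.le_log_iff_exp_le (by linarith)]
    linarith [Real.exp_one_lt_d9]
  set l := Real.log x with hl
  have hl0 : 0 < l := by linarith
  have hq0 : 0 < l ^ (1 - β) := by positivity
  rw [mul_one_div, le_div_iff₀ hq0]
  rcases lt_or_ge l 4 with h4 | h4
  · have h1 := abs_Dop_le_one f hf x (by linarith)
    have h2 : l ^ (1 - β) ≤ 4 := by
      calc _ ≤ l ^ (1 : ℝ) := Real.rpow_le_rpow_of_exponent_le hl1 (by linarith)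
        _ ≤ 4 := by rw [Real.rpow_one]; exact h4.le
    calc _ ≤ 1 * (4 : ℝ) := by gcongr
      _ ≤ _ := by nlinarith [mul_pos hA0 hK0]
  · have h1 := hA f hf hm x h4 (by linarith)
    have h2 := hK f hf hm (l + 1) (by linarith)
    have h3 : (l + 1) ^ β ≤ 2 * l ^ β := by
      calc _ ≤ (2 * l) ^ β := by gcongr; linarith
        _ = 2 ^ β * l ^ β := Real.mul_rpow (by norm_num) hl0.le
        _ ≤ 2 ^ (1 : ℝ) * l ^ β := by gcongr; norm_num
        _ = _ := by rw [Real.rpow_one]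
    have h5 : l ^ (3 / 5 : ℝ) ≤ l ^ β := Real.rpow_le_rpow_of_exponent_le hl1 hb1
    have h6 : |Dop f x| * l ≤ (2 * A * K + A) * l ^ β := by
      calc _ ≤ _ := h1
        _ ≤ A * (K * (2 * l ^ β)) + A * l ^ β := by
            gcongr; exact h2.trans (by gcongr)
        _ = _ := by ring
    have h7 : l ^ (1 - β) = l / l ^ β := by rw [Real.rpow_sub hl0, Real.rpow_one]
    have hlb : 0 < l ^ β := by positivity
    rw [h7, ← mul_div_assoc, div_le_iff₀ hlb]
    nlinarith

theorem stmt2 :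
    ∃ C : ℝ, 0 < C ∧
      ∀ f : ℕ → ℝ, (∀ n, f n ∈ Set.Icc (-1 : ℝ) 1) → IsMult f →
        ∀ x : ℝ, 3 ≤ x →
          |Lsum f x - Mt (dconv f) (w0 * x)| ≤
            C * (|Mt (dconv f) (w0 * x)| / Real.log x
              + 1 / (Real.log x) ^ ((1 : ℝ) - 2 / Real.pi)) := by
  obtain ⟨C, hC0, hC⟩ := Dop_bound
  refine ⟨C, hC0, fun f hf hm x hx => (hC f hf hm x hx).trans ?_⟩
  have hl : 0 ≤ Real.log x := Real.log_nonneg (by linarith)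
  have : 0 ≤ |Mt (dconv f) (w0 * x)| / Real.log x := by positivity
  gcongr
  linarith
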